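/- Let (A, φ) be a noncommutative probability space and Φ̃ : H_S(A) → ℂ the character extending φ. Let (κ̃, β̃, ρ̃) be the triple of infinitesimal characters on H_S(A) satisfying Φ̃ = E_≺̃(κ̃) = E_≻̃(β̃) = exp*(ρ̃). Then for every t ∈ ST(n) and a_1,…,a_n ∈ A: κ̃(t⊗a_1⋯a_n) = (−1)^{i(t)−1} φ_{π(t)}(a_1,…,a_n) if t ∈ PST(n) and 0 otherwise; β̃(t⊗a_1⋯a_n) = (−1)^{i(t)−1} φ_{π(t)}(a_1,…,a_n) if t ∈ BST(n) and 0 otherwise; and ρ̃(t⊗a_1⋯a_n) = ω(sk(t)) φ_{π(t)}(a_1,…,a_n). Moreover, with ι(a_1⋯a_n) = Σ_{t∈ST(n)} t⊗a_1⋯a_n, one has (κ̃∘ι)(a_1⋯a_n) = r_n(a_1,…,a_n), (β̃∘ι)(a_1⋯a_n) = b_n(a_1,…,a_n), and (ρ̃∘ι)(a_1⋯a_n) = h_n(a_1,…,a_n), the free, Boolean and monotone cumulants of (A, φ). -/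

import Mathlib

open scoped BigOperators

/-- Planar rooted trees (rose trees). -/
inductive PTree : Type
  | node : List PTree → PTree

namespace PTree

/-- The single-vertex tree (a leaf). -/
abbrev leaf : PTree := .node []

/-- Subtree at a given path from the root (entries select children). -/
def subtreeAt : List ℕ → PTree → Option PTree
  | [], t => some t
  | i :: p, node cs => (cs[i]?).bind (subtreeAt p)

/-- `p` is (the path of) a vertex of `t`. -/
def IsVertex (t : PTree) (p : List ℕ) : Prop := (subtreeAt p t).isSome

/-- `p` is a leaf of `t`. -/
def IsLeafAt (t : PTree) (p : List ℕ) : Prop := subtreeAt p t = some leaf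

/-- `p` is an internal (non-leaf) vertex of `t`. -/
def IsInternalAt (t : PTree) (p : List ℕ) : Prop :=
  ∃ cs, subtreeAt p t = some (node cs) ∧ cs ≠ []

/-- Schröder trees: every internal vertex has at least two children. -/
inductive IsSchroder : PTree → Prop
  | leaf : IsSchroder (node [])
  | node (cs : List PTree) : 2 ≤ cs.length → (∀ c ∈ cs, IsSchroder c) → IsSchroder (node cs)

/-- Number of leaves of a tree. -/
noncomputable def numLeaves (t : PTree) : ℕ := Nat.card {p : List ℕ // IsLeafAt t p}

/-- Number of sectors between consecutive leaves. -/
noncomputable def numSectors (t : PTree) : ℕ := numLeaves t - 1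

/-- Number of internal vertices. -/
noncomputable def numInternal (t : PTree) : ℕ := Nat.card {p : List ℕ // IsInternalAt t p}

/-- The set of Schröder trees with `n+1` leaves. -/
def ST (n : ℕ) : Set PTree := {t | IsSchroder t ∧ numLeaves t = n + 1}

/-- Number of surjective strictly order-preserving maps from the poset of internal
vertices of `t` (i.e. the vertex poset of the skeleton `sk(t)`, with the root minimal,
the order being the ancestor/prefix order) onto `{1, …, k}`. This is `ω_k(sk(t))`. -/
noncomputable def omegaSkK (t : PTree) (k : ℕ) : ℕ :=
  Nat.card {f : {p : List ℕ // IsInternalAt t p} → Fin k //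
    Function.Surjective f ∧ ∀ v w, v.1 <+: w.1 → v ≠ w → f v < f w}

/-- The Murua coefficient `ω(sk(t))` of the skeleton of `t`. -/
noncomputable def omegaSk (t : PTree) : ℂ :=
  ∑ k ∈ Finset.Icc 1 (numInternal t), ((-1 : ℂ) ^ (k + 1) / (k : ℂ)) * (omegaSkK t k : ℂ)

/-- The subtree of `t` at path `p` (junk value: a leaf). -/
noncomputable def subtree! (t : PTree) (p : List ℕ) : PTree := (subtreeAt p t).getD leaf

/-- Number of leaves of `t` strictly to the left of the subtree at `p`. -/
noncomputable def leavesBefore (t : PTree) (p : List ℕ) : ℕ :=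
  Nat.card {q : List ℕ // IsLeafAt t q ∧ List.Lex (· < ·) q p ∧ ¬ p <+: q}

/-- Sector number `i` (0-indexed: the sector between the `(i+1)`-st and `(i+2)`-nd leaves of `t`)
lies strictly inside the subtree of `t` rooted at `p`. -/
def SectorIn (t : PTree) (p : List ℕ) (i : ℕ) : Prop :=
  leavesBefore t p ≤ i ∧ i + 2 ≤ leavesBefore t p + numLeaves (subtree! t p)

/-- The internal vertex `v` of `t` owns sector `i`: the sector lies in the corolla at `v`,
i.e. inside the subtree at `v` but not inside the subtree at any strictly deeper vertex. -/
def OwnsSector (t : PTree) (v : List ℕ) (i : ℕ) : Prop :=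
  IsInternalAt t v ∧ SectorIn t v i ∧
    ∀ w, IsInternalAt t w → v <+: w → w ≠ v → ¬ SectorIn t w i

/-- Sectors `i` and `j` belong to the same block of the noncrossing partition `π(t)`. -/
def SameOwner (t : PTree) (i j : ℕ) : Prop := ∃ v, OwnsSector t v i ∧ OwnsSector t v j

open Classical in
/-- `φ_{π(t)}(a_1,…,a_n)`: the product over the blocks of the noncrossing partition `π(t)`
(one block per internal vertex `v`, consisting of the sectors owned by `v`) of `φ` applied to
the ordered product of the corresponding letters of `w`. -/
noncomputable def phiPi {A : Type*} [Ring A] (φ : A → ℂ) (t : PTree) (w : List A) : ℂ :=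
  ∏ᶠ v ∈ {v : List ℕ | IsInternalAt t v},
    φ ((((List.range w.length).filter fun i => OwnsSector t v i).map fun i => w.getD i 0).prod)

/-- A corolla: a root whose (at least two) children are all leaves. -/
def corolla (m : ℕ) : PTree := node (List.replicate m leaf)

/-- `t` is a corolla. -/
def IsCorolla (t : PTree) : Prop := ∃ m, 2 ≤ m ∧ t = corolla m

/-- Graft a tree `s` onto the leftmost leaf of `t`. -/
def graftLeftmost : PTree → PTree → PTree
  | node [], s => s
  | node (c :: cs), s => node (graftLeftmost c s :: cs)

/-- Trees obtained from the single-vertex tree by repeatedly grafting a corolla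
onto the leftmost leaf. -/
inductive IsBST : PTree → Prop
  | single : IsBST leaf
  | graft (t : PTree) (m : ℕ) : IsBST t → 2 ≤ m → IsBST (graftLeftmost t (corolla m))

/-- Schröder trees whose leftmost child of the root is a leaf. -/
def IsPST (t : PTree) : Prop := ∃ cs, t = node (leaf :: cs)

end PTree
section Partitions

open scoped BigOperators

/-- Set partitions of `[n] = {1,…,n}`, modeled as finpartitions of `Fin n`. -/
abbrev NPart (n : ℕ) := Finpartition (Finset.univ : Finset (Fin n))

/-- Noncrossing partitions: there are no `a < b < c < d` with `a, c` in one block and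
`b, d` in a different block. -/
def IsNoncrossing {n : ℕ} (π : NPart n) : Prop :=
  ∀ a b c d : Fin n, a < b → b < c → c < d →
    ∀ V ∈ π.parts, ∀ W ∈ π.parts, a ∈ V → c ∈ V → b ∈ W → d ∈ W → V = W

/-- Interval partitions: every block is an interval of consecutive elements. -/
def IsIntervalPart {n : ℕ} (π : NPart n) : Prop :=
  ∀ V ∈ π.parts, ∀ x ∈ V, ∀ y ∈ V, ∀ z : Fin n, x ≤ z → z ≤ y → z ∈ V

/-- Irreducible noncrossing partitions: `1` and `n` lie in the same block. -/
def IsIrreducibleNC {n : ℕ} (π : NPart n) : Prop :=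
  ∃ V ∈ π.parts, (∀ i : Fin n, i.val = 0 → i ∈ V) ∧ (∀ i : Fin n, i.val = n - 1 → i ∈ V)

/-- `W` is nested in `V`: every element of `W` lies in the interval `[min V, max V]`. -/
def NestedIn {n : ℕ} (W V : Finset (Fin n)) : Prop :=
  ∀ w ∈ W, (∃ a ∈ V, a ≤ w) ∧ (∃ b ∈ V, w ≤ b)

open Classical in
/-- The forest factorial `t(π)!` of the forest of nestings of `π`: the product, over all
blocks `V`, of the number of blocks nested in `V` (the size of the subtree rooted at `V`). -/
noncomputable def forestFactorial {n : ℕ} (π : NPart n) : ℕ :=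
  ∏ V ∈ π.parts, (π.parts.filter fun W => NestedIn W V).card

/-- `f_π(a_1,…,a_n)`: the product over the blocks `V = {i_1 < … < i_s}` of `π` of
`f(a_{i_1},…,a_{i_s})`, for a family of multilinear functionals encoded as `f : List A → ℂ`. -/
noncomputable def blockApply {A : Type*} {n : ℕ} (f : List A → ℂ) (a : Fin n → A)
    (π : NPart n) : ℂ :=
  ∏ V ∈ π.parts, f ((V.sort (· ≤ ·)).map a)

/-- `φ_π(a_1,…,a_n)` for the moment functionals `φ_m(a_1,…,a_m) = φ(a_1 ⋯ a_m)`. -/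
noncomputable def momApply {A : Type*} [Ring A] {n : ℕ} (φ : A → ℂ) (a : Fin n → A)
    (π : NPart n) : ℂ :=
  blockApply (fun l => φ l.prod) a π

/-- `ω_k(t(π))` for the nesting poset of the blocks of `π` (for irreducible `π`, this is
the vertex poset of the tree of nestings, rooted at the outermost block): the number of
surjective strictly order-preserving maps onto `{1,…,k}`. -/
noncomputable def omegaNestK {n : ℕ} (π : NPart n) (k : ℕ) : ℕ :=
  Nat.card {f : {V // V ∈ π.parts} → Fin k // Function.Surjective f ∧
    ∀ V W : {V // V ∈ π.parts}, NestedIn W.1 V.1 → V ≠ W → f V < f W}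

/-- The Murua coefficient `ω(t(π))` of the tree (forest) of nestings of `π`. -/
noncomputable def omegaNest {n : ℕ} (π : NPart n) : ℂ :=
  ∑ k ∈ Finset.Icc 1 π.parts.card, ((-1 : ℂ) ^ (k + 1) / (k : ℂ)) * (omegaNestK π k : ℂ)

/-- The noncrossing partition `π(t)` associated to a Schröder tree `t ∈ ST(n)` equals `π`:
two sectors lie in the same block of `π(t)` (i.e. have the same owning internal vertex)
iff they lie in the same block of `π`. -/
def TreePartEq {n : ℕ} (t : PTree) (π : NPart n) : Prop :=
  ∀ i j : Fin n, PTree.SameOwner t i.val j.val ↔ ∃ V ∈ π.parts, i ∈ V ∧ j ∈ V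

/-- The moment–cumulant relation defining the monotone cumulants `h`. -/
def MonotoneMC {A : Type*} [Ring A] (φ : A → ℂ) (h : List A → ℂ) : Prop :=
  ∀ (m : ℕ), 1 ≤ m → ∀ a : Fin m → A,
    φ (List.ofFn a).prod =
      ∑ᶠ π ∈ {π : NPart m | IsNoncrossing π}, (forestFactorial π : ℂ)⁻¹ * blockApply h a π

/-- The moment–cumulant relation defining the free cumulants `r`. -/
def FreeMC {A : Type*} [Ring A] (φ : A → ℂ) (r : List A → ℂ) : Prop :=
  ∀ (m : ℕ), 1 ≤ m → ∀ a : Fin m → A,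
    φ (List.ofFn a).prod = ∑ᶠ π ∈ {π : NPart m | IsNoncrossing π}, blockApply r a π

/-- The moment–cumulant relation defining the Boolean cumulants `b`. -/
def BooleanMC {A : Type*} [Ring A] (φ : A → ℂ) (b : List A → ℂ) : Prop :=
  ∀ (m : ℕ), 1 ≤ m → ∀ a : Fin m → A,
    φ (List.ofFn a).prod = ∑ᶠ π ∈ {π : NPart m | IsIntervalPart π}, blockApply b a π

end Partitions
namespace PTree

mutual
  /-- List of all vertex paths of a tree. -/
  def verticesList : PTree → List (List ℕ)
    | .node cs => [] :: verticesListAux 0 cs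
  def verticesListAux : ℕ → List PTree → List (List ℕ)
    | _, [] => []
    | i, c :: cs => (verticesList c).map (i :: ·) ++ verticesListAux (i + 1) cs
end

open Classical in
/-- The `Finset` of internal vertices of `t`. -/
noncomputable def internalFinset (t : PTree) : Finset (List ℕ) :=
  ((verticesList t).filter fun p => decide (IsInternalAt t p)).toFinset

open Classical in
/-- The admissible cuts of a Schröder tree `t`: sets of internal vertices such that every
path from the root to a leaf contains at most one of them (equivalently, antichains for
the ancestor/prefix order). -/
noncomputable def cutsFinset (t : PTree) : Finset (Finset (List ℕ)) :=
  (internalFinset t).powerset.filter fun c => ∀ v ∈ c, ∀ w ∈ c, v ≠ w → ¬ v <+: w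

/-- A vertex path lies on the leftmost branch iff it consists of zeros. -/
def OnLeftBranch (v : List ℕ) : Prop := v = List.replicate v.length 0

open Classical in
/-- `Adm_≺(t)`: admissible cuts whose trunk contains the leftmost leaf of `t`,
i.e. cuts containing no vertex of the leftmost branch. -/
noncomputable def cutsPrecFinset (t : PTree) : Finset (Finset (List ℕ)) :=
  (cutsFinset t).filter fun c => ∀ v ∈ c, ¬ OnLeftBranch v

open Classical in
/-- `Adm(t) \ Adm_≺(t)`: the admissible cuts containing a vertex of the leftmost branch. -/
noncomputable def cutsSuccFinset (t : PTree) : Finset (Finset (List ℕ)) :=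
  (cutsFinset t).filter fun c => ∃ v ∈ c, OnLeftBranch v

/-- Replace the subtree at a given path by a leaf. -/
def replaceLeaf : List ℕ → PTree → PTree
  | [], _ => leaf
  | i :: p, node cs => node (cs.set i (replaceLeaf p (cs.getD i leaf)))

/-- The vertices of a cut, sorted from left to right. -/
noncomputable def sortCut (t : PTree) (c : Finset (List ℕ)) : List (List ℕ) :=
  c.toList.mergeSort fun v w => Nat.ble (leavesBefore t v) (leavesBefore t w)

/-- The trunk `R_c(t)`: replace the subtree at each vertex of the cut by a leaf. -/
noncomputable def trunkTree (t : PTree) (c : Finset (List ℕ)) : PTree :=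
  (sortCut t c).foldl (fun s v => replaceLeaf v s) t

open Classical in
/-- Sector `i` of `t` is removed by the cut `c` (it lies in one of the pruned subtrees). -/
noncomputable def RemovedIdx (t : PTree) (c : Finset (List ℕ)) (i : ℕ) : Prop :=
  ∃ v ∈ c, leavesBefore t v ≤ i ∧ i < leavesBefore t v + numSectors (subtree! t v)

/-- A decorated forest: a list of Schröder trees, each `t` decorated by a word of length
`numSectors t` labelling the sectors between consecutive leaves from left to right. -/
abbrev DForest (A : Type*) := List (PTree × List A)

/-- A genuine decorated tree: a non-unit Schröder tree with matching decoration. -/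
def GoodTree {A : Type*} (d : PTree × List A) : Prop :=
  IsSchroder d.1 ∧ d.1 ≠ leaf ∧ d.2.length = numSectors d.1

/-- A genuine decorated forest. -/
def GoodForest {A : Type*} (F : DForest A) : Prop := ∀ d ∈ F, GoodTree d

open Classical in
/-- The decoration of the trunk `R_c(t ⊗ w)`: the letters of `w` at the sectors
not removed by the cut, in their original order. -/
noncomputable def trunkWord {A : Type*} [Zero A] (t : PTree) (c : Finset (List ℕ))
    (w : List A) : List A :=
  (((List.range w.length).filter fun i => decide (¬ RemovedIdx t c i)).map fun i => w.getD i 0)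

open Classical in
/-- The trunk `R_c(t ⊗ w)` as a decorated forest (empty if the trunk is the unit,
i.e. the single-leaf tree, which is identified with `1`). -/
noncomputable def trunkPart {A : Type*} [Zero A] (d : PTree × List A)
    (c : Finset (List ℕ)) : DForest A :=
  if trunkTree d.1 c = leaf then [] else [(trunkTree d.1 c, trunkWord d.1 c d.2)]

/-- The pruning `P_c(t ⊗ w)`: the ordered forest of decorated subtrees rooted at the
vertices of the cut (left to right), each carrying the contiguous subword of `w`
decorating its sectors. -/
noncomputable def prunePart {A : Type*} (d : PTree × List A)
    (c : Finset (List ℕ)) : DForest A :=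
  (sortCut d.1 c).map fun v =>
    (subtree! d.1 v, (d.2.drop (leavesBefore d.1 v)).take (numSectors (subtree! d.1 v)))

/-- All splittings `R_c(F) ⊗ P_c(F)` of a decorated forest given by tuples of admissible
cuts (one cut per tree): the combinatorial coproduct `δ_A`. -/
noncomputable def forestSplits {A : Type*} [Zero A] :
    DForest A → List (DForest A × DForest A)
  | [] => [([], [])]
  | d :: ds => (cutsFinset d.1).toList.flatMap fun c =>
      (forestSplits ds).map fun pr => (trunkPart d c ++ pr.1, prunePart d c ++ pr.2)

/-- The splittings appearing in `δ_{≺,A}`: the first tree is cut along `Adm_≺`, the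
remaining ones along all admissible cuts. -/
noncomputable def forestSplitsPrec {A : Type*} [Zero A] :
    DForest A → List (DForest A × DForest A)
  | [] => []
  | d :: ds => (cutsPrecFinset d.1).toList.flatMap fun c =>
      (forestSplits ds).map fun pr => (trunkPart d c ++ pr.1, prunePart d c ++ pr.2)

/-- The splittings appearing in `δ_{≻,A} = δ_A − δ_{≺,A}`. -/
noncomputable def forestSplitsSucc {A : Type*} [Zero A] :
    DForest A → List (DForest A × DForest A)
  | [] => []
  | d :: ds => (cutsSuccFinset d.1).toList.flatMap fun c =>
      (forestSplits ds).map fun pr => (trunkPart d c ++ pr.1, prunePart d c ++ pr.2)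

/-- The convolution product `f * g = m_ℂ ∘ (f ⊗ g) ∘ δ_A` of linear functionals on the
Hopf algebra `H_S(A)` of decorated Schröder trees (described on the basis of decorated
forests). -/
noncomputable def convD {A : Type*} [Zero A] (f g : DForest A → ℂ) : DForest A → ℂ :=
  fun F => ((forestSplits F).map fun pr => f pr.1 * g pr.2).sum

/-- The left half-shuffle product `f ≺̃ g = m_ℂ ∘ (f ⊗ g) ∘ δ_{≺,A}`. -/
noncomputable def precD {A : Type*} [Zero A] (f g : DForest A → ℂ) : DForest A → ℂ :=
  fun F => ((forestSplitsPrec F).map fun pr => f pr.1 * g pr.2).sum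

/-- The right half-shuffle product `f ≻̃ g = m_ℂ ∘ (f ⊗ g) ∘ δ_{≻,A}`. -/
noncomputable def succD {A : Type*} [Zero A] (f g : DForest A → ℂ) : DForest A → ℂ :=
  fun F => ((forestSplitsSucc F).map fun pr => f pr.1 * g pr.2).sum

open Classical in
/-- The counit `ε_A` of `H_S(A)` as a functional. -/
noncomputable def epsD {A : Type*} : DForest A → ℂ := fun F => if F = [] then 1 else 0

open Classical in
/-- The character `Φ̃ : H_S(A) → ℂ` extending `φ`: it sends a decorated tree `t ⊗ w` to
`φ(a_1 ⋯ a_n)` if `t` is a corolla and to `0` otherwise, multiplicatively on forests. -/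
noncomputable def charD {A : Type*} [Ring A] (φ : A → ℂ) : DForest A → ℂ :=
  fun F => (F.map fun d => if IsCorolla d.1 then φ d.2.prod else 0).prod

/-- `Φ̂ = Φ̃ − ε_A`. -/
noncomputable def charHatD {A : Type*} [Ring A] (φ : A → ℂ) : DForest A → ℂ :=
  fun F => charD φ F - epsD F

/-- Convolution powers `f^{*k}` (with `f^{*0} = ε_A`). -/
noncomputable def convPowD {A : Type*} [Zero A] (f : DForest A → ℂ) : ℕ → DForest A → ℂ
  | 0 => epsD
  | k + 1 => convD f (convPowD f k)

/-- Left half-shuffle powers `α^{≺̃ k}`, with `α^{≺̃ 0} = ε_A` and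
`α^{≺̃ k} = α ≺̃ α^{≺̃ (k−1)}`. -/
noncomputable def precPowD {A : Type*} [Zero A] (α : DForest A → ℂ) : ℕ → DForest A → ℂ
  | 0 => epsD
  | k + 1 => precD α (precPowD α k)

/-- Right half-shuffle powers `α^{≻̃ k}`, with `α^{≻̃ 0} = ε_A` and
`α^{≻̃ k} = α^{≻̃ (k−1)} ≻̃ α`. -/
noncomputable def succPowD {A : Type*} [Zero A] (α : DForest A → ℂ) : ℕ → DForest A → ℂ
  | 0 => epsD
  | k + 1 => succD (succPowD α k) α

/-- The left half-shuffle exponential `E_≺̃(α) = Σ_{k ≥ 0} α^{≺̃ k}`. -/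
noncomputable def ePrecD {A : Type*} [Zero A] (α : DForest A → ℂ) : DForest A → ℂ :=
  fun F => ∑ᶠ k : ℕ, precPowD α k F

/-- The right half-shuffle exponential `E_≻̃(α) = Σ_{k ≥ 0} α^{≻̃ k}`. -/
noncomputable def eSuccD {A : Type*} [Zero A] (α : DForest A → ℂ) : DForest A → ℂ :=
  fun F => ∑ᶠ k : ℕ, succPowD α k F

/-- The convolution exponential `exp^*(α) = Σ_{k ≥ 0} α^{*k} / k!`. -/
noncomputable def expStarD {A : Type*} [Zero A] (α : DForest A → ℂ) : DForest A → ℂ :=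
  fun F => ∑ᶠ k : ℕ, ((k.factorial : ℂ))⁻¹ * convPowD α k F

/-- The convolution logarithm `log^*(Φ̃) = Σ_{k ≥ 1} ((−1)^{k+1}/k) (Φ̃ − ε_A)^{*k}`. -/
noncomputable def logStarD {A : Type*} [Ring A] (φ : A → ℂ) : DForest A → ℂ :=
  fun F => ∑ᶠ k ∈ Set.Ici (1 : ℕ), ((-1 : ℂ) ^ (k + 1) / (k : ℂ)) * convPowD (charHatD φ) k F

/-- An infinitesimal character of `H_S(A)`: it vanishes on the unit (empty forest) and on
products of two or more nonempty forests. -/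
def IsInfCharD {A : Type*} (α : DForest A → ℂ) : Prop :=
  α [] = 0 ∧ ∀ F G : DForest A, F ≠ [] → G ≠ [] → α (F ++ G) = 0

end PTree

/-!
The idea is to embed the character `Φ̃` in a one-parameter convolution semigroup. For a forest `F`
with skeleton `s` put `P_F(x) = φ_π(F) · Ω_s(x)`, where the strict order polynomial `Ω_s` counts the
strictly increasing maps from `s` to a chain of `x` elements. A strict map to a chain of `m + n`
elements is an admissible cut together with strict maps of the trunk to the lower `m` elements and
of the pruned forest to the upper `n`, whence `P(x) * P(y) = P(x + y)`. As `Ω_s(1)` is `1` on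
forests of corollas and `0` otherwise, `P(1) = Φ̃`; hence `Φ̃ = exp*(P'(0))`, and the derivative of
`Ω_s` at `0` is the Murua coefficient. The convolution inverse of `Φ̃` is `P(-1)`, and
`Ω_t(-1) = (-1)^{i(t)}`. When the leftmost leaf hangs from the root, it lies in every nonempty
trunk, so on `PST` the half-shuffle `≺̃` is the full convolution and `κ̃ = -P(-1)`, while `β̃` obeys
a recursion along the leftmost branch.

Summing `P` over all Schröder trees turns the semigroup law into a convolution identity for
polynomials indexed by words. Sums over noncrossing partitions satisfy the same recursions, by
decomposition along the block of the first letter, and the three families of cumulants follow by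
comparing the equations at `x = 1`, `x = -1` and the derivatives at `x = 0`.
-/

section WordConvolution

variable {A B R V W : Type*} [CommSemiring R] [AddCommMonoid V] [Module R V]
  [AddCommMonoid W] [Module R W]

/-- Convolution on words: the sum over all subwords `u` of `w` of `f u`, times `G` of the part of
`w` preceding `u`, times `g` of each of the remaining gaps. The first gap has its own weight `G`
so that the definition is a recursion on words: passing over a letter appends it to that gap. -/
def wordConv (f : List A → V) (g : List A → R) : (List A → R) → List A → V
  | G, [] => G [] • f []
  | G, a :: w => G [] • wordConv (fun u => f (a :: u)) g g w
      + wordConv f g (fun u => G (a :: u)) w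

/-- The counit on words: the two-sided unit of `f, g ↦ wordConv f g g`. -/
def wordOne (R : Type*) [Zero R] [One R] {A : Type*} : List A → R
  | [] => 1
  | _ :: _ => 0

theorem wordConv_add (f f' : List A → V) (g G : List A → R) (w : List A) :
    wordConv (fun u => f u + f' u) g G w = wordConv f g G w + wordConv f' g G w := by
  induction w generalizing f f' G with
  | nil => simp [wordConv]
  | cons a w ih =>
    simp only [wordConv, ih, smul_add]; abel

theorem wordConv_smul (c : R) (f : List A → V) (g G : List A → R) (w : List A) :
    wordConv (fun u => c • f u) g G w = c • wordConv f g G w := by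
  induction w generalizing f G with
  | nil => simp only [wordConv]; rw [smul_comm]
  | cons a w ih =>
    simp only [wordConv, ih, smul_add]
    rw [smul_comm]

theorem wordConv_add_gap (f : List A → V) (g G G' : List A → R) (w : List A) :
    wordConv f g (fun u => G u + G' u) w = wordConv f g G w + wordConv f g G' w := by
  induction w generalizing f G G' with
  | nil => simp [wordConv, add_smul]
  | cons a w ih =>
    simp only [wordConv, ih, add_smul]; abel

theorem wordConv_smul_gap (c : R) (f : List A → V) (g G : List A → R)
    (w : List A) :
    wordConv f g (fun u => c * G u) w = c • wordConv f g G w := by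
  induction w generalizing f G with
  | nil => simp [wordConv, mul_smul]
  | cons a w ih =>
    simp only [wordConv, ih, mul_smul, smul_add]

theorem wordConv_zero (g G : List A → R) (w : List A) :
    wordConv (fun _ => (0 : V)) g G w = 0 := by
  induction w generalizing G with
  | nil => simp [wordConv]
  | cons a w ih => simp only [wordConv, ih, smul_zero, add_zero]

theorem wordConv_zero_gap (f : List A → V) (g : List A → R) (w : List A) :
    wordConv f g (fun _ => 0) w = 0 := by
  induction w generalizing f with
  | nil => simp only [wordConv, zero_smul]
  | cons a w ih => simp only [wordConv, ih, zero_smul, add_zero]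

theorem wordConv_linearMap (L : V →ₗ[R] W) (f : List A → V) (g G : List A → R)
    (w : List A) : L (wordConv f g G w) = wordConv (fun u => L (f u)) g G w := by
  induction w generalizing f G with
  | nil => simp [wordConv]
  | cons a w ih => simp [wordConv, ih]

theorem wordConv_ringHom {S : Type*} [CommSemiring S] (L : R →+* S) (f g G : List A → R)
    (w : List A) :
    L (wordConv f g G w) = wordConv (fun u => L (f u)) (fun u => L (g u)) (fun u => L (G u)) w := by
  induction w generalizing f G with
  | nil => simp [wordConv]
  | cons a w ih => simp [wordConv, ih]

theorem wordConv_map (e : B → A) (f : List A → V) (g G : List A → R) (w : List B) :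
    wordConv f g G (w.map e) = wordConv (fun u => f (u.map e)) (fun u => g (u.map e))
      (fun u => G (u.map e)) w := by
  induction w generalizing f G with
  | nil => simp [wordConv]
  | cons a w ih => simp [wordConv, ih]

theorem wordConv_congr {f f' : List A → V} {g g' G G' : List A → R} {w : List A}
    (hf : ∀ u, u.Sublist w → f u = f' u)
    (hg : ∀ u, u.Sublist w → u.length < w.length → g u = g' u)
    (hG : ∀ u, u.Sublist w → G u = G' u) : wordConv f g G w = wordConv f' g' G' w := by
  induction w generalizing f f' G G' with
  | nil => simp [wordConv, hf [] (List.Sublist.refl _), hG [] (List.Sublist.refl _)]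
  | cons a w ih =>
    simp only [wordConv]
    rw [hG [] (by simp), ih (f' := fun u => f' (a :: u)) (G' := g'),
      ih (f' := f') (G' := fun u => G' (a :: u))]
    · exact fun u hu => hf u (hu.cons a)
    · exact fun u hu h => hg u (hu.cons a) (by simp; omega)
    · exact fun u hu => hG _ (hu.cons_cons a)
    · exact fun u hu => hf _ (hu.cons_cons a)
    · exact fun u hu h => hg u (hu.cons a) (by simp; omega)
    · exact fun u hu => hg u (hu.cons a) (by have := hu.length_le; simp; omega)

theorem wordConv_assoc (f : List A → V) (g h G H : List A → R) (w : List A) :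
    wordConv (wordConv f g G) h H w = wordConv f (wordConv g h h) (wordConv G h H) w := by
  induction w generalizing f G H with
  | nil => simp [wordConv, smul_smul, mul_comm]
  | cons a w ih =>
    have outer_cons : (fun u => wordConv f g G (a :: u)) = fun u =>
      G [] • wordConv (fun u => f (a :: u)) g g u + wordConv f g (fun u => G (a :: u)) u := rfl
    have gap_cons : (fun u => wordConv G h H (a :: u)) = fun u =>
      H [] * wordConv (fun u => G (a :: u)) h h u + wordConv G h (fun u => H (a :: u)) u := rfl
    rw [wordConv, outer_cons, wordConv_add, wordConv_smul, ih, wordConv, gap_cons, wordConv_add_gap,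
      wordConv_smul_gap, ih, ih]
    simp [wordConv, smul_smul, mul_comm, add_assoc]

theorem wordConv_wordOne_gap (f : List A → V) (w : List A) :
    wordConv f (wordOne R) (wordOne R) w = f w := by
  induction w generalizing f with
  | nil => simp [wordConv, wordOne]
  | cons a w ih =>
    rw [wordConv, ih]
    simp only [wordOne, one_smul, wordConv_zero_gap, add_zero]

theorem wordConv_wordOne (g G : List A → R) (w : List A) :
    wordConv (wordOne R) g G w = G w := by
  induction w generalizing G with
  | nil => simp [wordConv, wordOne]
  | cons a w ih =>
    rw [wordConv, ih]
    simp only [wordOne, wordConv_zero, smul_zero, zero_add]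

theorem wordConv_eq_sum_first_letter (f : List A → V) (g G : List A → R) (w : List A) :
    wordConv f g G w = G w • f [] + ∑ j : Fin w.length, G (w.take j) •
      wordConv (fun u => f (w[j] :: u)) g g (w.drop (j + 1)) := by
  induction w generalizing G with
  | nil => simp [wordConv]
  | cons a w ih =>
    rw [wordConv, ih]
    simp only [List.length_cons, Fin.sum_univ_succ]
    simp
    abel

theorem wordConv_of_forall_length_lt {f : List A → V} {g G : List A → R} {w : List A}
    (hf : ∀ u : List A, u.length < w.length → f u = 0) (hg : g [] = 1) (hG : G [] = 1) :
    wordConv f g G w = f w := by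
  induction w generalizing f G with
  | nil => simp [wordConv, hG]
  | cons a w ih =>
    rw [wordConv, hG, ih _ hg]
    · rw [wordConv_congr (f' := fun _ => 0) (g' := g) (G' := fun u => G (a :: u)), wordConv_zero]
      · simp
      · exact fun u hu => hf u (Nat.lt_succ_of_le hu.length_le)
      · exact fun _ _ _ => rfl
      · exact fun _ _ => rfl
    · exact fun u hu => hf _ (by simp; omega)

theorem wordConv_congr_of_nil {f : List A → V} {g g' G G' : List A → R} {w : List A}
    (hf : f [] = 0)
    (hg : ∀ u : List A, u.length < w.length → g u = g' u)
    (hG : ∀ u : List A, u.length < w.length → G u = G' u) :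
    wordConv f g G w = wordConv f g' G' w := by
  induction w generalizing G G' with
  | nil => simp [wordConv, hf]
  | cons a w ih =>
    rw [wordConv, wordConv, hG [] (by simp), ih (G' := fun u => G' (a :: u)),
      wordConv_congr (g' := g') (G' := g')]
    · exact fun _ _ => rfl
    · exact fun u _ h => hg u (by simp; omega)
    · exact fun u hu => hg u (by have := hu.length_le; simp; omega)
    · exact fun u hu => hg u (by simp; omega)
    · exact fun u hu => hG _ (by simp; omega)

theorem wordConv_sub_wordConv {R V : Type*} [CommSemiring R] [AddCommGroup V] [Module R V]
    {f f' : List A → V} {g g' : List A → R} {w : List A}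
    (hf' : f' [] = 0)
    (hf : ∀ u : List A, u.length < w.length → f u = f' u)
    (hg : ∀ u : List A, u.length < w.length → g u = g' u) (hg_nil : g [] = 1) :
    wordConv f g g w - wordConv f' g' g' w = f w - f' w := by
  have f_eq : f = fun u => f' u + (f u - f' u) := by funext u; abel
  calc wordConv f g g w - wordConv f' g' g' w
      = wordConv (fun u => f u - f' u) g g w := by
        rw [← wordConv_congr_of_nil hf' hg hg]
        nth_rw 1 [f_eq]
        rw [wordConv_add, add_sub_cancel_left]
    _ = f w - f' w :=
        wordConv_of_forall_length_lt (fun u hu => by rw [hf u hu, sub_self]) hg_nil hg_nil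

end WordConvolution

namespace PTree

@[induction_eliminator]
theorem childInduction {P : PTree → Prop}
    (node : ∀ cs : List PTree, (∀ c ∈ cs, P c) → P (node cs)) (t : PTree) : P t :=
  PTree.rec (motive_1 := P) (motive_2 := fun cs => ∀ c ∈ cs, P c) node (by simp)
    (fun c cs hc hcs => by simpa using ⟨hc, hcs⟩) t

theorem subtreeAt_cons (cs : List PTree) (i : ℕ) (q : List ℕ) (s : PTree) :
    subtreeAt (i :: q) (node cs) = some s ↔ ∃ hi : i < cs.length, subtreeAt q cs[i] = some s := by
  rw [subtreeAt]
  by_cases hi : i < cs.length <;> simp [hi]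

theorem isLeafAt_nil (cs : List PTree) : IsLeafAt (node cs) [] ↔ cs = [] := by
  simp [IsLeafAt, subtreeAt]

theorem isLeafAt_cons (cs : List PTree) (i : ℕ) (q : List ℕ) :
    IsLeafAt (node cs) (i :: q) ↔ ∃ hi : i < cs.length, IsLeafAt cs[i] q :=
  subtreeAt_cons cs i q _

theorem isInternalAt_nil (cs : List PTree) : IsInternalAt (node cs) [] ↔ cs ≠ [] := by
  simp [IsInternalAt, subtreeAt]

theorem isInternalAt_cons (cs : List PTree) (i : ℕ) (q : List ℕ) :
    IsInternalAt (node cs) (i :: q) ↔ ∃ hi : i < cs.length, IsInternalAt cs[i] q := by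
  simp only [IsInternalAt, subtreeAt_cons]
  constructor
  · rintro ⟨ds, ⟨hi, h⟩, hd⟩; exact ⟨hi, ds, h, hd⟩
  · rintro ⟨hi, ds, h, hd⟩; exact ⟨ds, ⟨hi, h⟩, hd⟩

theorem isLeafAt_leaf (p : List ℕ) : IsLeafAt leaf p ↔ p = [] := by
  cases p with
  | nil => simp [isLeafAt_nil]
  | cons i q => rw [isLeafAt_cons]; simp

theorem not_isInternalAt_leaf (p : List ℕ) : ¬ IsInternalAt leaf p := by
  cases p with
  | nil => simp [isInternalAt_nil]
  | cons i q => simp [isInternalAt_cons]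

/-- The nonempty paths satisfying `S`, classified by their first entry. -/
def consEquiv {S : List ℕ → Prop} {n : ℕ} {T : Fin n → List ℕ → Prop}
    (hnil : ¬ S []) (hcons : ∀ i q, S (i :: q) ↔ ∃ hi : i < n, T ⟨i, hi⟩ q) :
    {p : List ℕ // S p} ≃ Σ i : Fin n, {q : List ℕ // T i q} where
  toFun p := match p with
    | ⟨[], hp⟩ => absurd hp hnil
    | ⟨i :: q, hp⟩ => ⟨⟨i, ((hcons i q).1 hp).1⟩, ⟨q, ((hcons i q).1 hp).2⟩⟩
  invFun x := ⟨x.1.1 :: x.2.1, (hcons _ _).2 ⟨x.1.2, x.2.2⟩⟩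
  left_inv p := by
    match p with
    | ⟨[], hp⟩ => exact absurd hp hnil
    | ⟨i :: q, hp⟩ => rfl
  right_inv x := rfl

theorem finite_leaves (t : PTree) : Finite {p : List ℕ // IsLeafAt t p} := by
  induction t with
  | node cs ih =>
    by_cases hcs : cs = []
    · subst hcs
      refine Finite.of_injective (β := Unit) (fun _ => ()) ?_
      rintro ⟨p, hp⟩ ⟨q, hq⟩ -
      rw [Subtype.mk.injEq, (isLeafAt_leaf p).1 hp, (isLeafAt_leaf q).1 hq]
    · have : ∀ i : Fin cs.length, Finite {q : List ℕ // IsLeafAt cs[i] q} :=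
        fun i => ih _ (List.getElem_mem _)
      exact Finite.of_equiv _ (consEquiv (T := fun i : Fin cs.length => IsLeafAt cs[i])
        (by simpa [isLeafAt_nil] using hcs) (isLeafAt_cons cs)).symm

theorem setOf_isInternalAt_node {cs : List PTree} (hcs : cs ≠ []) :
    {p | IsInternalAt (node cs) p} = insert []
      (⋃ i : Fin cs.length, (fun q => i.1 :: q) '' {q | IsInternalAt cs[i] q}) := by
  ext p
  cases p with
  | nil => simp [isInternalAt_nil, hcs]
  | cons i q =>
    simp only [Set.mem_ofPred_eq, isInternalAt_cons, Set.mem_insert_iff, reduceCtorEq,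
      Set.mem_iUnion, Set.mem_image, List.cons.injEq, false_or]
    constructor
    · rintro ⟨hi, hq⟩; exact ⟨⟨i, hi⟩, q, hq, rfl, rfl⟩
    · rintro ⟨i, q, hq, rfl, rfl⟩; exact ⟨i.2, hq⟩

theorem pairwise_disjoint_image_cons {n : ℕ} (S : Fin n → Set (List ℕ)) :
    Pairwise (Function.onFun Disjoint fun i => (fun q => i.1 :: q) '' S i) := by
  intro i j hij
  simp only [Function.onFun, Set.disjoint_left, Set.mem_image]
  rintro _ ⟨q, _, rfl⟩ ⟨r, _, h⟩
  exact hij (Fin.ext (List.cons.inj h).1.symm)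

theorem finite_internal (t : PTree) : {p : List ℕ | IsInternalAt t p}.Finite := by
  induction t with
  | node cs ih =>
    rcases eq_or_ne cs [] with rfl | hcs
    · simp [not_isInternalAt_leaf]
    · rw [setOf_isInternalAt_node hcs]
      exact (Set.finite_iUnion fun i => (ih _ (List.getElem_mem _)).image _).insert _

theorem numLeaves_leaf : numLeaves leaf = 1 := by
  rw [numLeaves, Nat.card_eq_one_iff_unique]
  refine ⟨⟨?_⟩, ⟨[], by simp [isLeafAt_nil]⟩⟩
  rintro ⟨p, hp⟩ ⟨q, hq⟩
  rw [Subtype.mk.injEq, (isLeafAt_leaf p).1 hp, (isLeafAt_leaf q).1 hq]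

theorem numLeaves_node {cs : List PTree} (hcs : cs ≠ []) :
    numLeaves (node cs) = ∑ i : Fin cs.length, numLeaves cs[i] := by
  have := fun i : Fin cs.length => finite_leaves cs[i]
  rw [numLeaves, Nat.card_congr (consEquiv (T := fun i : Fin cs.length => IsLeafAt cs[i])
        (by simpa [isLeafAt_nil] using hcs) (isLeafAt_cons cs)), Nat.card_sigma]
  rfl

theorem numLeaves_node_eq_sum_map {cs : List PTree} (hcs : cs ≠ []) :
    numLeaves (node cs) = (cs.map numLeaves).sum := by
  rw [numLeaves_node hcs, ← Fin.sum_univ_fun_getElem]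
  rfl

theorem numLeaves_pos (t : PTree) : 0 < numLeaves t := by
  induction t with
  | node cs ih =>
    cases cs with
    | nil => simp [numLeaves_leaf]
    | cons c cs =>
      have := ih c (by simp)
      rw [numLeaves_node_eq_sum_map (by simp), List.map_cons, List.sum_cons]
      omega

theorem numInternal_leaf : numInternal leaf = 0 := by
  rw [numInternal, Nat.card_eq_zero]
  exact Or.inl ⟨fun p => not_isInternalAt_leaf _ p.2⟩

theorem numInternal_node {cs : List PTree} (hcs : cs ≠ []) :
    numInternal (node cs) = 1 + ∑ i : Fin cs.length, numInternal cs[i] := by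
  have hfin (i : Fin cs.length) := (finite_internal cs[i]).image fun q => i.1 :: q
  change Nat.card {p | IsInternalAt (node cs) p} = _
  rw [setOf_isInternalAt_node hcs, Nat.card_coe_set_eq,
    Set.ncard_insert_of_notMem (by simp) (Set.finite_iUnion hfin),
    Set.ncard_iUnion_of_finite hfin (pairwise_disjoint_image_cons _),
    finsum_eq_sum_of_fintype, add_comm]
  simp_rw [Set.ncard_image_of_injective _ List.cons_injective]
  rfl

theorem numInternal_node_eq_sum_map {cs : List PTree} (hcs : cs ≠ []) :
    numInternal (node cs) = 1 + (cs.map numInternal).sum := by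
  rw [numInternal_node hcs, ← Fin.sum_univ_fun_getElem]
  rfl

theorem numInternal_eq_zero {t : PTree} : numInternal t = 0 ↔ t = leaf := by
  obtain ⟨cs⟩ := t
  by_cases h : cs = []
  · subst h; simp [numInternal_leaf]
  · rw [numInternal_node h]; simp [h]

/-- The number of leaves of the first `i` trees of a list: if the list is that of the children of a
vertex, this is the position of the first leaf of the `i`-th child. -/
noncomputable def leafOffset (cs : List PTree) (i : ℕ) : ℕ :=
  ((cs.take i).map numLeaves).sum

@[simp]
theorem leafOffset_zero (cs : List PTree) : leafOffset cs 0 = 0 := by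
  simp [leafOffset]

@[simp]
theorem leafOffset_cons_succ (c : PTree) (cs : List PTree) (i : ℕ) :
    leafOffset (c :: cs) (i + 1) = numLeaves c + leafOffset cs i := by
  simp [leafOffset]

theorem sum_ite_eq_leafOffset (cs : List PTree) (i x : ℕ) (hi : i < cs.length) :
    ∑ j : Fin cs.length, (if j.1 < i then numLeaves cs[j] else if j.1 = i then x else 0) =
      leafOffset cs i + x := by
  induction cs generalizing i with
  | nil => simp at hi
  | cons c cs ih =>
    simp only [List.length_cons, Fin.sum_univ_succ]
    cases i with
    | zero => simp
    | succ i =>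
      have := ih i (by simpa using hi)
      simp only [Fin.val_succ, Nat.add_lt_add_iff_right, Nat.add_right_cancel_iff]
      simp only [Fin.val_zero, Nat.zero_lt_succ, if_true, leafOffset_cons_succ]
      rw [add_assoc, ← this]
      congr 1

theorem leafOffset_add_le (cs : List PTree) (i : ℕ) (hi : i < cs.length) :
    leafOffset cs i + numLeaves cs[i] ≤ (cs.map numLeaves).sum := by
  induction cs generalizing i with
  | nil => simp at hi
  | cons c cs ih =>
    cases i with
    | zero => simp
    | succ i =>
      have := ih i (by simpa using hi)
      simp; omega

theorem leafOffset_add_le_leafOffset (cs : List PTree) (i j : ℕ) (hij : i < j)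
    (hj : j < cs.length) :
    leafOffset cs i + numLeaves cs[i] ≤ leafOffset cs j := by
  induction cs generalizing i j with
  | nil => simp at hj
  | cons c cs ih =>
    obtain ⟨j, rfl⟩ : ∃ j', j = j' + 1 := ⟨j - 1, by omega⟩
    cases i with
    | zero => simp
    | succ i =>
      have := ih i j (by omega) (by simpa using hj)
      simp; omega

theorem leavesBefore_nil (t : PTree) : leavesBefore t [] = 0 := by
  rw [leavesBefore, Nat.card_eq_zero]
  exact Or.inl ⟨fun p => p.2.2.2 (List.prefix_append [] _)⟩

theorem leavesBefore_cons (cs : List PTree) (i : ℕ) (q : List ℕ) (hi : i < cs.length) :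
    leavesBefore (node cs) (i :: q) = leafOffset cs i + leavesBefore cs[i] q := by
  let IsBefore (j : Fin cs.length) (r : List ℕ) : Prop := IsLeafAt cs[j] r ∧
    (j.1 < i ∨ (j.1 = i ∧ List.Lex (· < ·) r q)) ∧ ¬ (i = j.1 ∧ q <+: r)
  have hfinite (j : Fin cs.length) : Finite {r // IsBefore j r} :=
    have := finite_leaves cs[j]
    Finite.of_injective (β := {r // IsLeafAt cs[j] r}) (fun r => ⟨r.1, r.2.1⟩)
      fun _ _ h => Subtype.ext (Subtype.mk.inj h)
  rw [leavesBefore, Nat.card_congr (consEquiv (T := IsBefore) (by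
      rintro ⟨h, -⟩
      rw [isLeafAt_nil] at h
      simp [h] at hi) ?_), Nat.card_sigma, ← sum_ite_eq_leafOffset _ _ _ hi]
  · refine Finset.sum_congr rfl fun j _ => ?_
    split_ifs with hlt heq
    · rw [numLeaves]
      refine Nat.card_congr (Equiv.subtypeEquivRight fun r => ?_)
      simp only [IsBefore, hlt, true_or, true_and, and_iff_left_iff_imp]
      omega
    · have hj : cs[j] = cs[i] := by simp [heq]
      rw [leavesBefore, ← hj]
      refine Nat.card_congr (Equiv.subtypeEquivRight fun r => ?_)
      simp [IsBefore, heq]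
    · rw [Nat.card_eq_zero]
      refine Or.inl ⟨fun r => ?_⟩
      have := r.2.2.1
      omega
  · intro j r
    simp only [IsBefore, isLeafAt_cons, List.cons_lex_cons_iff, List.cons_prefix_cons]
    constructor
    · rintro ⟨⟨hj, hleaf⟩, hbefore, hprefix⟩
      exact ⟨hj, hleaf, hbefore, hprefix⟩
    · rintro ⟨hj, hleaf, hbefore, hprefix⟩
      exact ⟨⟨hj, hleaf⟩, hbefore, hprefix⟩

theorem subtree!_nil (t : PTree) : subtree! t [] = t := by
  simp [subtree!, subtreeAt]

theorem subtree!_cons (cs : List PTree) (i : ℕ) (q : List ℕ) (hi : i < cs.length) :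
    subtree! (node cs) (i :: q) = subtree! cs[i] q := by
  simp [subtree!, subtreeAt, hi]

theorem leavesBefore_add_le (t : PTree) (p : List ℕ) (hp : IsInternalAt t p) :
    leavesBefore t p + numLeaves (subtree! t p) ≤ numLeaves t := by
  induction t generalizing p with
  | node cs ih =>
    cases p with
    | nil => simp [leavesBefore_nil, subtree!_nil]
    | cons i q =>
      obtain ⟨hi, hq⟩ := (isInternalAt_cons cs i q).1 hp
      have hcs : cs ≠ [] := by rintro rfl; simp at hi
      have := ih _ (List.getElem_mem hi) q hq
      have := leafOffset_add_le cs i hi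
      rw [leavesBefore_cons _ _ _ hi, subtree!_cons _ _ _ hi, numLeaves_node_eq_sum_map hcs]
      omega

theorem sectorIn_cons (cs : List PTree) (i : ℕ) (q : List ℕ) (k : ℕ) (hi : i < cs.length) :
    SectorIn (node cs) (i :: q) k ↔
      leafOffset cs i ≤ k ∧ SectorIn cs[i] q (k - leafOffset cs i) := by
  rw [SectorIn, SectorIn, leavesBefore_cons _ _ _ hi, subtree!_cons _ _ _ hi]
  omega

theorem sectorIn_nil (t : PTree) (k : ℕ) : SectorIn t [] k ↔ k + 2 ≤ numLeaves t := by
  rw [SectorIn, leavesBefore_nil, subtree!_nil]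
  omega

theorem SectorIn.root {t : PTree} {p : List ℕ} {k : ℕ} (hp : IsInternalAt t p)
    (h : SectorIn t p k) : SectorIn t [] k := by
  have := leavesBefore_add_le t p hp
  rw [sectorIn_nil]
  rw [SectorIn] at h
  omega

theorem ownsSector_cons (cs : List PTree) (i : ℕ) (q : List ℕ) (k : ℕ) (hi : i < cs.length) :
    OwnsSector (node cs) (i :: q) k ↔
      leafOffset cs i ≤ k ∧ OwnsSector cs[i] q (k - leafOffset cs i) := by
  simp only [OwnsSector, sectorIn_cons _ _ _ _ hi, isInternalAt_cons]
  constructor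
  · rintro ⟨⟨_, hq⟩, ⟨hle, hin⟩, hdeep⟩
    refine ⟨hle, hq, hin, fun w hw hqw hne hs => hdeep (i :: w) ?_ ?_ ?_ ?_⟩
    · exact (isInternalAt_cons _ _ _).2 ⟨hi, hw⟩
    · simpa using hqw
    · simpa using hne
    · exact (sectorIn_cons _ _ _ _ hi).2 ⟨hle, hs⟩
  · rintro ⟨hle, hq, hin, hdeep⟩
    refine ⟨⟨hi, hq⟩, ⟨hle, hin⟩, fun w hw hqw hne hs => ?_⟩
    cases w with
    | nil => simp at hqw
    | cons j w =>
      obtain ⟨rfl, hqw'⟩ := List.cons_prefix_cons.1 hqw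
      exact hdeep w ((isInternalAt_cons _ _ _).1 hw).2 hqw' (by simpa using hne)
        ((sectorIn_cons _ _ _ _ hi).1 hs).2

/-- Sector `k` of the tree with list of children `cs` is not inside any of the children, so that it
belongs to the block of the root. -/
def IsRootSector (cs : List PTree) (k : ℕ) : Prop :=
  ∀ i (hi : i < cs.length), ¬ (leafOffset cs i ≤ k ∧ k - leafOffset cs i + 2 ≤ numLeaves cs[i])

theorem isRootSector_cons {c : PTree} {cs : List PTree} {k : ℕ} :
    IsRootSector (c :: cs) k ↔
      numLeaves c ≤ k + 1 ∧ (numLeaves c ≤ k → IsRootSector cs (k - numLeaves c)) := by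
  constructor
  · refine fun h => ⟨?_, fun hk i hi => ?_⟩
    · have := h 0 (by simp)
      simp only [leafOffset_zero, List.getElem_cons_zero] at this
      omega
    · have := h (i + 1) (by simpa using hi)
      simp only [leafOffset_cons_succ, List.getElem_cons_succ] at this
      omega
  · rintro ⟨hle, h⟩ (_ | i) hi
    · simp only [leafOffset_zero, List.getElem_cons_zero]
      omega
    · simp only [leafOffset_cons_succ, List.getElem_cons_succ]
      rintro ⟨hik, hlt⟩
      exact h (by omega) i (by simpa using hi) (by omega)

theorem isRootSector_cons_add {c : PTree} {cs : List PTree} {k : ℕ} :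
    IsRootSector (c :: cs) (numLeaves c + k) ↔ IsRootSector cs k := by
  rw [isRootSector_cons, Nat.add_sub_cancel_left]
  exact ⟨fun h => h.2 (by omega), fun h => ⟨by omega, fun _ => h⟩⟩

theorem ownsSector_nil {cs : List PTree} (hcs : cs ≠ []) (k : ℕ) :
    OwnsSector (node cs) [] k ↔ k + 2 ≤ (cs.map numLeaves).sum ∧ IsRootSector cs k := by
  rw [OwnsSector, isInternalAt_nil, sectorIn_nil, numLeaves_node_eq_sum_map hcs]
  constructor
  · rintro ⟨-, hk, hdeep⟩
    refine ⟨hk, fun i hi ⟨hle, hlt⟩ => hdeep [i] ?_ (by simp) (by simp) ?_⟩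
    · rw [isInternalAt_cons]
      refine ⟨hi, ?_⟩
      generalize hc : cs[i] = c at hlt
      obtain ⟨ds⟩ := c
      rw [isInternalAt_nil]
      rintro rfl
      rw [numLeaves_leaf] at hlt
      omega
    · rw [sectorIn_cons _ _ _ _ hi, sectorIn_nil]
      exact ⟨hle, hlt⟩
  · rintro ⟨hk, hroot⟩
    refine ⟨hcs, hk, fun w hw _ hne hs => ?_⟩
    cases w with
    | nil => exact hne rfl
    | cons i q =>
      obtain ⟨hi, hq⟩ := (isInternalAt_cons _ _ _).1 hw
      obtain ⟨hle, hin⟩ := (sectorIn_cons _ _ _ _ hi).1 hs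
      exact hroot i hi ⟨hle, (sectorIn_nil _ _).1 (hin.root hq)⟩

section Pick

variable {A : Type*}

open Classical in
/-- The letters of a word at the positions satisfying `p`. -/
noncomputable def pick (p : ℕ → Prop) : List A → List A
  | [] => []
  | a :: w => (if p 0 then [a] else []) ++ pick (fun k => p (k + 1)) w

open Classical in
theorem pick_eq [Zero A] (p : ℕ → Prop) (w : List A) :
    (((List.range w.length).filter fun i => decide (p i)).map fun i => w.getD i 0) = pick p w := by
  induction w generalizing p with
  | nil => simp [pick]
  | cons a w ih =>
    rw [pick, ← ih, List.length_cons, List.range_succ_eq_map, List.filter_cons, List.filter_map]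
    split_ifs with h1 h2 h2 <;> simp_all [Function.comp_def]

theorem pick_append (p : ℕ → Prop) (u v : List A) :
    pick p (u ++ v) = pick p u ++ pick (fun k => p (u.length + k)) v := by
  induction u generalizing p with
  | nil => simp [pick]
  | cons a u ih => simp [pick, ih, Nat.add_right_comm]

theorem pick_append_cons (p : ℕ → Prop) (u : List A) (x : A) (v : List A)
    [Decidable (p u.length)] :
    pick p (u ++ x :: v) = pick p u ++
      ((if p u.length then [x] else []) ++ pick (fun k => p (u.length + 1 + k)) v) := by
  rw [pick_append, pick]
  congr! 5
  omega

theorem pick_congr {p p' : ℕ → Prop} {w : List A} (h : ∀ k < w.length, (p k ↔ p' k)) :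
    pick p w = pick p' w := by
  induction w generalizing p p' with
  | nil => rfl
  | cons a w ih =>
    have hhead : p 0 ↔ p' 0 := h 0 (by simp)
    rw [pick, pick, ih (p' := fun k => p' (k + 1))]
    · by_cases hp : p' 0 <;> simp [hhead, hp]
    · exact fun k hk => h _ (by simpa using hk)

theorem pick_of_forall {p : ℕ → Prop} {w : List A} (h : ∀ k < w.length, p k) : pick p w = w := by
  induction w generalizing p with
  | nil => rfl
  | cons a w ih =>
    rw [pick, ih]
    · simp [h 0 (by simp)]
    · exact fun k hk => h _ (by simpa using hk)

theorem pick_of_forall_not {p : ℕ → Prop} {w : List A} (h : ∀ k < w.length, ¬ p k) :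
    pick p w = [] := by
  induction w generalizing p with
  | nil => rfl
  | cons a w ih =>
    rw [pick, ih]
    · simp [h 0 (by simp)]
    · exact fun k hk => h _ (by simpa using hk)

/-- The part of a word decorating the sectors of the `i`-th child of a vertex, when the whole word
decorates the sectors of the tree with list of children `cs`. -/
noncomputable def segment (cs : List PTree) (w : List A) (i : Fin cs.length) : List A :=
  (w.drop (leafOffset cs i)).take (numLeaves cs[i] - 1)

/-- The letters of a word at the sectors between consecutive children of a vertex, when the whole
word decorates the sectors of the tree with that list of children. -/
noncomputable def rootLetters : List PTree → List A → List A
  | [], _ => []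
  | c :: cs, w => (w.drop (numLeaves c - 1)).take 1 ++ rootLetters cs (w.drop (numLeaves c))

theorem length_segment (cs : List PTree) (w : List A) (h : w.length + 1 = (cs.map numLeaves).sum)
    (i : Fin cs.length) : (segment cs w i).length = numLeaves cs[i] - 1 := by
  have := leafOffset_add_le cs i i.2
  have := numLeaves_pos cs[i]
  simp only [segment, List.length_take, List.length_drop, Fin.getElem_fin] at *
  omega

theorem length_append_cons_add_one {c : PTree} {cs : List PTree} {u v : List A} (x : A)
    (hu : u.length + 1 = numLeaves c) (hv : v.length + 1 = (cs.map numLeaves).sum) :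
    (u ++ x :: v).length + 1 = ((c :: cs).map numLeaves).sum := by
  simp only [List.length_append, List.length_cons, List.map_cons, List.sum_cons]
  omega

theorem decoration_induction
    {P : ∀ (cs : List PTree) (w : List A), w.length + 1 = (cs.map numLeaves).sum → Prop}
    (single : ∀ c w (hw : w.length + 1 = numLeaves c), P [c] w (by simpa using hw))
    (cons : ∀ c cs u x v (hu : u.length + 1 = numLeaves c)
      (hv : v.length + 1 = (cs.map numLeaves).sum), P cs v hv →
        P (c :: cs) (u ++ x :: v) (length_append_cons_add_one x hu hv))
    (cs : List PTree) (w : List A) (hw : w.length + 1 = (cs.map numLeaves).sum) : P cs w hw := by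
  induction cs generalizing w with
  | nil => simp at hw
  | cons c cs ih =>
    have hc := numLeaves_pos c
    cases cs with
    | nil => exact single c w (by simpa using hw)
    | cons c' cs =>
      have hc' := numLeaves_pos c'
      have hlen := hw
      simp only [List.map_cons, List.sum_cons] at hlen
      obtain ⟨u, x, v, rfl, hu⟩ : ∃ u x v, w = u ++ x :: v ∧ u.length + 1 = numLeaves c :=
        ⟨w.take (numLeaves c - 1), w[numLeaves c - 1], w.drop (numLeaves c - 1 + 1),
          by rw [← List.drop_eq_getElem_cons, List.take_append_drop],
          by rw [List.length_take]; omega⟩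
      refine cons _ _ _ _ _ hu ?_ (ih _ _)
      simp only [List.length_append, List.length_cons, List.map_cons, List.sum_cons] at hlen ⊢
      omega

section Split

variable {c : PTree} {cs : List PTree} {u v w : List A} {x : A}

theorem rootLetters_singleton (hw : w.length + 1 = numLeaves c) : rootLetters [c] w = [] := by
  simp [rootLetters, ← hw]

theorem rootLetters_append_cons (hu : u.length + 1 = numLeaves c) :
    rootLetters (c :: cs) (u ++ x :: v) = x :: rootLetters cs v := by
  simp [rootLetters, ← hu, List.drop_append, List.drop_eq_nil_of_le]

theorem segment_singleton (hw : w.length + 1 = numLeaves c) (i : Fin [c].length) :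
    segment [c] w i = w := by
  obtain rfl : i = ⟨0, by simp⟩ := Subsingleton.elim (α := Fin 1) _ _
  simp [segment, ← hw]

theorem segment_append_cons_zero (hu : u.length + 1 = numLeaves c) :
    segment (c :: cs) (u ++ x :: v) ⟨0, by simp⟩ = u := by
  simp [segment, ← hu]

theorem segment_append_cons_succ (hu : u.length + 1 = numLeaves c) (i : ℕ) (hi : i < cs.length) :
    segment (c :: cs) (u ++ x :: v) ⟨i + 1, by simpa using hi⟩ = segment cs v ⟨i, hi⟩ := by
  have hdrop (k : ℕ) : (u ++ x :: v).drop (u.length + 1 + k) = v.drop k := by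
    rw [add_assoc, List.drop_length_add_append, Nat.add_comm 1, List.drop_succ_cons]
  simp [segment, ← hu, hdrop]

end Split

theorem pick_segment {p p' : ℕ → Prop} (cs : List PTree) (w : List A) (i : Fin cs.length)
    (hp : ∀ k, p k ↔ leafOffset cs i ≤ k ∧ p' (k - leafOffset cs i))
    (hp' : ∀ k, p' k → k + 2 ≤ numLeaves cs[i]) : pick p w = pick p' (segment cs w i) := by
  have hsplit : w = w.take (leafOffset cs i) ++ (segment cs w i ++
      (w.drop (leafOffset cs i)).drop (numLeaves cs[i] - 1)) := by
    rw [segment, List.take_append_drop, List.take_append_drop]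
  conv_lhs => rw [hsplit]
  rw [pick_append, pick_append, pick_of_forall_not, pick_of_forall_not (w := List.drop _ _),
    List.nil_append, List.append_nil]
  · refine pick_congr fun k hk => ?_
    simp only [segment, List.length_take, List.length_drop] at hk
    rw [hp, List.length_take, min_eq_left (by omega)]
    simp
  · intro k hk h
    simp only [segment, List.length_take, List.length_drop] at hk h
    have := hp' _ ((hp _).1 h).2
    omega
  · intro k hk h
    have := ((hp _).1 h).1
    simp only [List.length_take] at hk
    omega

theorem pick_append_cons_of_isRootSector {p : ℕ → Prop} {c : PTree} {cs : List PTree}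
    (hp : ∀ k, IsRootSector (c :: cs) k → p k) {u : List A} (hu : u.length + 1 = numLeaves c)
    (x : A) (v : List A) :
    pick p (u ++ x :: v) = pick p u ++ x :: pick (fun k => p (numLeaves c + k)) v := by
  classical
  have hx : p u.length := hp _ (isRootSector_cons.2 ⟨by omega, fun h => by omega⟩)
  rw [pick_append_cons, if_pos hx, hu]
  rfl

theorem pick_isRootSector (cs : List PTree) (w : List A)
    (hw : w.length + 1 = (cs.map numLeaves).sum) :
    pick (IsRootSector cs) w = rootLetters cs w := by
  induction cs, w, hw using decoration_induction with
  | single c w hw =>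
    rw [rootLetters_singleton hw, pick_of_forall_not]
    exact fun k hk h => absurd (isRootSector_cons.1 h).1 (by omega)
  | cons c cs u x v hu _ ih =>
    rw [pick_append_cons_of_isRootSector (fun _ => id) hu, rootLetters_append_cons hu, ← ih,
      pick_of_forall_not, List.nil_append]
    · simp only [isRootSector_cons_add]
    · exact fun k hk h => absurd (isRootSector_cons.1 h).1 (by omega)

theorem pick_decomposition {p : ℕ → Prop} (cs T : List PTree) (w : List A)
    (hw : w.length + 1 = (cs.map numLeaves).sum) (hp : ∀ k, IsRootSector cs k → p k)
    (hT : T.length = cs.length)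
    (hlen : ∀ i (hi : i < cs.length), (pick (fun k => p (leafOffset cs i + k))
      (segment cs w ⟨i, hi⟩)).length + 1 = numLeaves T[i]) :
    (pick p w).length + 1 = (T.map numLeaves).sum ∧
      rootLetters T (pick p w) = rootLetters cs w ∧
      ∀ i (hi : i < cs.length), segment T (pick p w) ⟨i, hT ▸ hi⟩ =
        pick (fun k => p (leafOffset cs i + k)) (segment cs w ⟨i, hi⟩) := by
  induction cs, w, hw using decoration_induction generalizing p T with
  | single c w hw =>
    obtain ⟨d, rfl⟩ := List.length_eq_one_iff.1 hT
    have hd : (pick p w).length + 1 = numLeaves d := by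
      simpa [segment_singleton hw] using hlen 0 (by simp)
    refine ⟨by simpa using hd, by rw [rootLetters_singleton hw, rootLetters_singleton hd], ?_⟩
    intro i hi
    obtain rfl : i = 0 := by simpa using hi
    simp [segment_singleton hw, segment_singleton hd]
  | cons c cs u x v hu _ ih =>
    obtain ⟨d, T, rfl⟩ := List.exists_cons_of_length_eq_add_one hT
    have hd : (pick p u).length + 1 = numLeaves d := by
      simpa only [leafOffset_zero, zero_add, segment_append_cons_zero hu,
        List.getElem_cons_zero] using hlen 0 (by simp)
    obtain ⟨hlength, hroot, hsegment⟩ := ih T (fun k hk => hp _ (isRootSector_cons_add.2 hk))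
      (by simpa using hT) fun i hi => by
        simpa [segment_append_cons_succ hu i hi, add_assoc] using hlen (i + 1) (by simpa using hi)
    rw [pick_append_cons_of_isRootSector hp hu]
    refine ⟨length_append_cons_add_one x hd hlength,
      by rw [rootLetters_append_cons hd, rootLetters_append_cons hu, hroot], ?_⟩
    rintro (_ | i) hi
    · simp only [segment_append_cons_zero hu, segment_append_cons_zero hd, leafOffset_zero,
        zero_add]
    · have hi' : i < cs.length := by simpa using hi
      rw [segment_append_cons_succ hu i hi',
        segment_append_cons_succ hd i (by simp only [List.length_cons] at hT; omega),
        hsegment i hi']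
      simp only [leafOffset_cons_succ, add_assoc]

theorem rootLetters_replicate (m : ℕ) (w : List A) (hw : w.length ≤ m) :
    rootLetters (List.replicate m leaf) w = w := by
  induction m generalizing w with
  | zero => simpa [rootLetters] using (List.length_eq_zero_iff.1 (Nat.le_zero.1 hw)).symm
  | succ m ih =>
    rw [List.replicate_succ, rootLetters, numLeaves_leaf, ih _ (by simp; omega)]
    cases w <;> simp

end Pick

section PhiPi

variable {A : Type*} [Ring A] (φ : A → ℂ)

theorem phiPi_eq (t : PTree) (w : List A) :
    phiPi φ t w = ∏ᶠ v ∈ {v : List ℕ | IsInternalAt t v}, φ (pick (OwnsSector t v) w).prod := by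
  simp only [phiPi, ← pick_eq]

theorem phiPi_leaf (w : List A) : phiPi φ leaf w = 1 := by
  rw [phiPi_eq, finprod_mem_eq_one_of_forall_eq_one]
  intro v hv
  exact absurd hv (not_isInternalAt_leaf v)

theorem phiPi_node {cs : List PTree} (hcs : cs ≠ []) (w : List A)
    (hw : w.length + 1 = (cs.map numLeaves).sum) :
    phiPi φ (node cs) w = φ (rootLetters cs w).prod *
      ∏ i : Fin cs.length, phiPi φ cs[i] (segment cs w i) := by
  have hfin (i : Fin cs.length) := (finite_internal cs[i]).image fun q => i.1 :: q
  rw [phiPi_eq, setOf_isInternalAt_node hcs, finprod_mem_insert _ (by simp)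
    (Set.finite_iUnion hfin), finprod_mem_iUnion (pairwise_disjoint_image_cons _) hfin,
    finprod_eq_prod_of_fintype]
  congr 1
  · rw [← pick_isRootSector cs w hw]
    congr 2
    refine pick_congr fun k hk => ?_
    rw [ownsSector_nil hcs]
    exact ⟨And.right, fun h => ⟨by omega, h⟩⟩
  · refine Finset.prod_congr rfl fun i _ => ?_
    rw [finprod_mem_image List.cons_injective.injOn, phiPi_eq]
    refine finprod_mem_congr rfl fun q _ => ?_
    congr 2
    refine pick_segment cs w i (fun k => ownsSector_cons cs i q k i.2) fun k hk => ?_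
    exact (sectorIn_nil _ _).1 (SectorIn.root hk.1 hk.2.1)

end PhiPi

section Cuts

theorem mem_verticesListAux (cs : List PTree) (k i : ℕ) (q : List ℕ) (hi : i < cs.length)
    (hq : q ∈ verticesList cs[i]) : (k + i) :: q ∈ verticesListAux k cs := by
  induction cs generalizing k i with
  | nil => simp at hi
  | cons c cs ih =>
    rw [verticesListAux, List.mem_append]
    cases i with
    | zero => exact Or.inl (List.mem_map_of_mem hq)
    | succ i =>
      right
      have := ih (k + 1) i (by simpa using hi) hq
      rwa [Nat.add_right_comm] at this

theorem IsInternalAt.mem_verticesList {t : PTree} {p : List ℕ} (hp : IsInternalAt t p) :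
    p ∈ verticesList t := by
  induction t generalizing p with
  | node cs ih =>
    rw [verticesList]
    cases p with
    | nil => simp
    | cons i q =>
      obtain ⟨hi, hq⟩ := (isInternalAt_cons cs i q).1 hp
      have := mem_verticesListAux cs 0 i q hi (ih _ (List.getElem_mem hi) hq)
      simp_all

theorem mem_cutsFinset {t : PTree} {c : Finset (List ℕ)} :
    c ∈ cutsFinset t ↔
      (∀ v ∈ c, IsInternalAt t v) ∧ ∀ v ∈ c, ∀ w ∈ c, v ≠ w → ¬ v <+: w := by
  rw [cutsFinset, Finset.mem_filter, Finset.mem_powerset]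
  refine and_congr_left fun _ => forall₂_congr fun v _ => ?_
  simp only [internalFinset, List.mem_toFinset, List.mem_filter, decide_eq_true_eq]
  exact ⟨fun h => h.2, fun h => ⟨h.mem_verticesList, h⟩⟩

/-- The set of vertices of a tree obtained from sets of vertices of the subtrees of the root. -/
noncomputable def join {n : ℕ} (f : Fin n → Finset (List ℕ)) : Finset (List ℕ) :=
  Finset.univ.biUnion fun i => (f i).map ⟨fun q => i.1 :: q, List.cons_injective⟩

theorem mem_join {n : ℕ} {f : Fin n → Finset (List ℕ)} {p : List ℕ} :
    p ∈ join f ↔ ∃ (i : Fin n) (q : List ℕ), q ∈ f i ∧ i.1 :: q = p := by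
  simp [join]

theorem cons_mem_join {n : ℕ} {f : Fin n → Finset (List ℕ)} (i : Fin n) {q : List ℕ} :
    i.1 :: q ∈ join f ↔ q ∈ f i := by
  rw [mem_join]
  constructor
  · rintro ⟨j, r, hr, h⟩
    simp only [List.cons.injEq, Fin.val_inj] at h
    obtain ⟨rfl, rfl⟩ := h
    exact hr
  · exact fun h => ⟨i, q, h, rfl⟩

theorem nil_notMem_join {n : ℕ} {f : Fin n → Finset (List ℕ)} : [] ∉ join f := by
  simp [mem_join]

theorem join_injective {n : ℕ} : Function.Injective (join (n := n)) := by
  intro f g h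
  ext i q
  rw [← cons_mem_join, h, cons_mem_join]

theorem prod_join {M : Type*} [CommMonoid M] {n : ℕ} (f : Fin n → Finset (List ℕ))
    (G : List ℕ → M) : ∏ v ∈ join f, G v = ∏ i, ∏ q ∈ f i, G (i.1 :: q) := by
  rw [join, Finset.prod_biUnion]
  · simp
  · intro i _ j _ hij
    simp only [Function.onFun, Finset.disjoint_left, Finset.mem_map, Function.Embedding.coeFn_mk]
    rintro _ ⟨q, _, rfl⟩ ⟨r, _, h⟩
    simp only [List.cons.injEq, Fin.val_inj] at h
    exact hij h.1.symm

theorem prod_join_subtree {M : Type*} [CommMonoid M] (cs : List PTree)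
    (f : Fin cs.length → Finset (List ℕ)) (G : PTree → M) :
    ∏ v ∈ join f, G (subtree! (node cs) v) = ∏ i, ∏ q ∈ f i, G (subtree! cs[i] q) := by
  rw [prod_join]
  refine Finset.prod_congr rfl fun i _ => Finset.prod_congr rfl fun q _ => ?_
  rw [subtree!_cons _ _ _ i.2]
  rfl

theorem sum_join_subtree {M : Type*} [AddCommMonoid M] (cs : List PTree)
    (f : Fin cs.length → Finset (List ℕ)) (G : PTree → M) :
    ∑ v ∈ join f, G (subtree! (node cs) v) = ∑ i, ∑ q ∈ f i, G (subtree! cs[i] q) :=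
  prod_join_subtree (M := Multiplicative M) cs f G

theorem cutsFinset_leaf : cutsFinset leaf = {∅} := by
  ext c
  simp only [mem_cutsFinset, not_isInternalAt_leaf, Finset.mem_singleton]
  constructor
  · rintro ⟨h, -⟩
    exact Finset.eq_empty_of_forall_notMem h
  · rintro rfl
    simp

theorem join_mem_cutsFinset {cs : List PTree} {f : Fin cs.length → Finset (List ℕ)} :
    join f ∈ cutsFinset (node cs) ↔ ∀ i, f i ∈ cutsFinset cs[i] := by
  simp only [mem_cutsFinset]
  constructor
  · rintro ⟨hinternal, hanti⟩ i
    refine ⟨fun v hv => ?_, fun v hv w hw hvw h => ?_⟩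
    · exact ((isInternalAt_cons _ _ _).1 (hinternal _ ((cons_mem_join i).2 hv))).2
    · exact hanti _ ((cons_mem_join i).2 hv) _ ((cons_mem_join i).2 hw) (by simpa) (by simpa)
  · intro h
    refine ⟨fun v hv => ?_, fun v hv w hw hvw hp => ?_⟩
    · obtain ⟨i, q, hq, rfl⟩ := mem_join.1 hv
      exact (isInternalAt_cons _ _ _).2 ⟨i.2, (h i).1 q hq⟩
    · obtain ⟨i, q, hq, rfl⟩ := mem_join.1 hv
      obtain ⟨j, r, hr, rfl⟩ := mem_join.1 hw
      simp only [List.cons_prefix_cons, Fin.val_inj] at hp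
      obtain ⟨rfl, hp⟩ := hp
      exact (h i).2 q hq r hr (by simpa using hvw) hp

theorem exists_eq_join {cs : List PTree} {c : Finset (List ℕ)} (hc : c ∈ cutsFinset (node cs))
    (hnil : [] ∉ c) : ∃ f : Fin cs.length → Finset (List ℕ), c = join f := by
  refine ⟨fun i => c.preimage (fun q => i.1 :: q) List.cons_injective.injOn, ?_⟩
  ext p
  rw [mem_join]
  simp only [Finset.mem_preimage]
  constructor
  · intro hp
    cases p with
    | nil => exact absurd hp hnil
    | cons i q =>
      exact ⟨⟨i, ((isInternalAt_cons _ _ _).1 ((mem_cutsFinset.1 hc).1 _ hp)).1⟩, q, hp, rfl⟩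
  · rintro ⟨i, q, hq, rfl⟩
    exact hq

theorem eq_singleton_nil_of_nil_mem_cut {t : PTree} {c : Finset (List ℕ)} (hc : c ∈ cutsFinset t)
    (hnil : [] ∈ c) : c = {[]} := by
  refine Finset.eq_singleton_iff_unique_mem.2 ⟨hnil, fun v hv => ?_⟩
  by_contra h
  exact (mem_cutsFinset.1 hc).2 [] hnil v hv (Ne.symm h) (List.prefix_append [] _)

theorem cut_cases {cs : List PTree} {c : Finset (List ℕ)} (hc : c ∈ cutsFinset (node cs)) :
    c = {[]} ∨ ∃ f : Fin cs.length → Finset (List ℕ), (∀ i, f i ∈ cutsFinset cs[i]) ∧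
      c = join f := by
  by_cases hnil : [] ∈ c
  · exact Or.inl (eq_singleton_nil_of_nil_mem_cut hc hnil)
  · obtain ⟨f, rfl⟩ := exists_eq_join hc hnil
    exact Or.inr ⟨f, join_mem_cutsFinset.1 hc, rfl⟩

theorem singleton_nil_mem_cutsFinset {cs : List PTree} (hcs : cs ≠ []) :
    {[]} ∈ cutsFinset (node cs) := by
  rw [mem_cutsFinset]
  simp [isInternalAt_nil, hcs]

open Classical in
theorem cutsFinset_node {cs : List PTree} (hcs : cs ≠ []) :
    cutsFinset (node cs) = insert {[]}
      ((Fintype.piFinset fun i : Fin cs.length => cutsFinset cs[i]).image join) := by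
  ext c
  rw [Finset.mem_insert, Finset.mem_image]
  constructor
  · intro hc
    rcases cut_cases hc with h | ⟨f, hf, rfl⟩
    · exact Or.inl h
    · exact Or.inr ⟨f, Fintype.mem_piFinset.2 hf, rfl⟩
  · rintro (rfl | ⟨f, hf, rfl⟩)
    · exact singleton_nil_mem_cutsFinset hcs
    · exact join_mem_cutsFinset.2 (Fintype.mem_piFinset.1 hf)

theorem sum_cutsFinset_node {M : Type*} [AddCommMonoid M] {cs : List PTree} (hcs : cs ≠ [])
    (F : Finset (List ℕ) → M) : ∑ c ∈ cutsFinset (node cs), F c =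
      F {[]} + ∑ f ∈ Fintype.piFinset fun i : Fin cs.length => cutsFinset cs[i], F (join f) := by
  rw [cutsFinset_node hcs, Finset.sum_insert, Finset.sum_image join_injective.injOn]
  rw [Finset.mem_image]
  rintro ⟨f, -, hf⟩
  exact nil_notMem_join (f := f) (by simp [hf])

/-- Replacing a list of subtrees by leaves. -/
def pruneList (l : List (List ℕ)) (t : PTree) : PTree := l.foldl (fun s v => replaceLeaf v s) t

theorem replaceLeaf_leaf (p : List ℕ) : replaceLeaf p leaf = leaf := by
  cases p <;> simp [replaceLeaf]

theorem replaceLeaf_comm (p q : List ℕ) (t : PTree) :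
    replaceLeaf p (replaceLeaf q t) = replaceLeaf q (replaceLeaf p t) := by
  induction p generalizing q t with
  | nil => rw [replaceLeaf, replaceLeaf, replaceLeaf_leaf]
  | cons i p ih =>
    obtain ⟨cs⟩ := t
    cases q with
    | nil => rw [replaceLeaf, replaceLeaf, replaceLeaf_leaf]
    | cons j q =>
      simp only [replaceLeaf, node.injEq]
      by_cases hij : i = j
      · subst hij
        by_cases hi : i < cs.length
        · simp [hi, ih q]
        · simp [List.set_eq_of_length_le (not_lt.1 hi)]
      · rw [List.set_comm _ _ (Ne.symm hij)]
        simp [List.getElem?_set_ne hij, List.getElem?_set_ne (Ne.symm hij)]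

theorem pruneList_perm {l l' : List (List ℕ)} (h : l.Perm l') (t : PTree) :
    pruneList l t = pruneList l' t :=
  h.foldl_eq' (fun _ _ _ _ _ => replaceLeaf_comm _ _ _) t

theorem sortCut_perm (t : PTree) (c : Finset (List ℕ)) : (sortCut t c).Perm c.toList :=
  List.mergeSort_perm _ _

theorem trunkTree_eq (t : PTree) (c : Finset (List ℕ)) : trunkTree t c = pruneList c.toList t :=
  pruneList_perm (sortCut_perm t c) t

theorem trunkTree_empty (t : PTree) : trunkTree t ∅ = t := by
  simp [trunkTree_eq, pruneList]

theorem trunkTree_singleton_nil (t : PTree) : trunkTree t {[]} = leaf := by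
  simp [trunkTree_eq, pruneList, replaceLeaf]

/-- The tails of the paths starting with a given letter. -/
def tailsAt (i : ℕ) (l : List (List ℕ)) : List (List ℕ) :=
  l.filterMap fun p => match p with
    | [] => none
    | j :: q => if j = i then some q else none

theorem mem_tailsAt {i : ℕ} {l : List (List ℕ)} {q : List ℕ} :
    q ∈ tailsAt i l ↔ i :: q ∈ l := by
  rw [tailsAt, List.mem_filterMap]
  constructor
  · rintro ⟨p, hp, h⟩
    cases p with
    | nil => simp at h
    | cons j r =>
      simp only [Option.ite_none_right_eq_some, Option.some.injEq] at h
      obtain ⟨rfl, rfl⟩ := h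
      exact hp
  · exact fun h => ⟨_, h, by simp⟩

theorem nodup_tailsAt {i : ℕ} {l : List (List ℕ)} (hl : l.Nodup) : (tailsAt i l).Nodup := by
  refine hl.filterMap fun p p' q h h' => ?_
  cases p <;> cases p' <;> simp_all

theorem pruneList_node (l : List (List ℕ)) (hl : [] ∉ l) (cs : List PTree) :
    pruneList l (node cs) = node (cs.mapIdx fun i c => pruneList (tailsAt i l) c) := by
  induction l generalizing cs with
  | nil => simp [pruneList, tailsAt, List.mapIdx_eq_ofFn]
  | cons p l ih =>
    cases p with
    | nil => simp at hl
    | cons j q =>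
      change pruneList l (replaceLeaf (j :: q) (node cs)) = _
      rw [replaceLeaf, ih (by simp_all)]
      congr 1
      refine List.ext_getElem (by simp) fun i _ hi => ?_
      simp only [List.length_mapIdx] at hi
      simp only [List.getElem_mapIdx, List.getElem_set]
      by_cases hij : j = i
      · subst hij
        simp [tailsAt, hi, pruneList]
      · simp [tailsAt, hij]

theorem trunkTree_join (cs : List PTree) (f : Fin cs.length → Finset (List ℕ)) :
    trunkTree (node cs) (join f) = node (List.ofFn fun i => trunkTree cs[i] (f i)) := by
  rw [trunkTree_eq, pruneList_node _ (by simpa using nil_notMem_join)]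
  congr 1
  refine List.ext_getElem (by simp) fun i hi _ => ?_
  simp only [List.length_mapIdx] at hi
  simp only [List.getElem_mapIdx, List.getElem_ofFn, trunkTree_eq]
  refine pruneList_perm ((List.perm_ext_iff_of_nodup (nodup_tailsAt (Finset.nodup_toList _))
    (Finset.nodup_toList _)).2 fun q => ?_) _
  rw [mem_tailsAt, Finset.mem_toList, Finset.mem_toList]
  exact cons_mem_join ⟨i, hi⟩

theorem removedIdx_join (cs : List PTree) (f : Fin cs.length → Finset (List ℕ)) (k : ℕ) :
    RemovedIdx (node cs) (join f) k ↔
      ∃ i : Fin cs.length, leafOffset cs i ≤ k ∧ RemovedIdx cs[i] (f i) (k - leafOffset cs i) := by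
  simp only [RemovedIdx]
  constructor
  · rintro ⟨v, hv, hle, hlt⟩
    obtain ⟨i, q, hq, rfl⟩ := mem_join.1 hv
    rw [leavesBefore_cons _ _ _ i.2] at hle hlt
    rw [subtree!_cons _ _ _ i.2] at hlt
    exact ⟨i, by omega, q, hq, by simp only [Fin.getElem_fin]; omega,
      by simp only [Fin.getElem_fin]; omega⟩
  · rintro ⟨i, hi, q, hq, hle, hlt⟩
    simp only [Fin.getElem_fin] at hle hlt
    refine ⟨i.1 :: q, (cons_mem_join i).2 hq, ?_, ?_⟩
    · rw [leavesBefore_cons _ _ _ i.2]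
      omega
    · rw [leavesBefore_cons _ _ _ i.2, subtree!_cons _ _ _ i.2]
      omega

theorem RemovedIdx.lt {t : PTree} {c : Finset (List ℕ)} (hc : c ∈ cutsFinset t) {k : ℕ}
    (h : RemovedIdx t c k) : k + 2 ≤ numLeaves t := by
  obtain ⟨v, hv, hle, hlt⟩ := h
  have := leavesBefore_add_le t v ((mem_cutsFinset.1 hc).1 v hv)
  rw [numSectors] at hlt
  omega

theorem removedIdx_join_add (cs : List PTree) {f : Fin cs.length → Finset (List ℕ)}
    (hf : ∀ i, f i ∈ cutsFinset cs[i]) (i : Fin cs.length) {k : ℕ} (hk : k + 1 < numLeaves cs[i]) :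
    RemovedIdx (node cs) (join f) (leafOffset cs i + k) ↔ RemovedIdx cs[i] (f i) k := by
  rw [removedIdx_join]
  constructor
  · rintro ⟨j, hle, hremoved⟩
    have hlt := hremoved.lt (hf j)
    obtain rfl : j = i := by
      simp only [Fin.getElem_fin] at hk hlt
      by_contra hne
      rcases lt_or_gt_of_ne hne with h | h
      · have := leafOffset_add_le_leafOffset cs j i h i.2
        omega
      · have := leafOffset_add_le_leafOffset cs i j h j.2
        omega
    simpa using hremoved
  · exact fun h => ⟨i, by omega, by simpa using h⟩

end Cuts

section Trunk

variable {A : Type*}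

theorem trunkWord_eq [Zero A] (t : PTree) (c : Finset (List ℕ)) (w : List A) :
    trunkWord t c w = pick (fun k => ¬ RemovedIdx t c k) w := by
  rw [← pick_eq, trunkWord]
  congr!

theorem trunkWord_empty [Zero A] (t : PTree) (w : List A) : trunkWord t ∅ w = w := by
  rw [trunkWord_eq, pick_of_forall]
  simp [RemovedIdx]

theorem trunkWord_singleton_nil [Zero A] (t : PTree) (w : List A)
    (hw : w.length + 1 = numLeaves t) :
    trunkWord t {[]} w = [] := by
  rw [trunkWord_eq, pick_of_forall_not]
  intro k hk h
  apply h
  refine ⟨[], by simp, ?_, ?_⟩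
  · simp [leavesBefore_nil]
  · rw [leavesBefore_nil, subtree!_nil, numSectors]
    omega

/-- The word decorating the subtree of `t` at `v`. -/
noncomputable def subword (t : PTree) (v : List ℕ) (w : List A) : List A :=
  (w.drop (leavesBefore t v)).take (numSectors (subtree! t v))

theorem subword_nil {t : PTree} {w : List A} (hw : w.length + 1 = numLeaves t) :
    subword t [] w = w := by
  rw [subword, leavesBefore_nil, subtree!_nil, numSectors]
  simp
  omega

theorem subword_cons {cs : List PTree} (i : Fin cs.length) {v : List ℕ}
    (hv : IsInternalAt cs[i] v) (w : List A) :
    subword (node cs) (i.1 :: v) w = subword cs[i] v (segment cs w i) := by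
  have := leavesBefore_add_le _ _ hv
  rw [subword, subword, segment, leavesBefore_cons _ _ _ i.2, subtree!_cons _ _ _ i.2,
    List.drop_take, List.take_take, List.drop_drop, min_eq_left]
  · rfl
  · rw [numSectors]
    omega

theorem length_subword {t : PTree} {v : List ℕ} (hv : IsInternalAt t v) {w : List A}
    (hw : w.length + 1 = numLeaves t) :
    (subword t v w).length = numSectors (subtree! t v) := by
  have := leavesBefore_add_le _ _ hv
  have := numLeaves_pos (subtree! t v)
  rw [subword, List.length_take, List.length_drop, numSectors]
  omega

theorem length_segment_add_one {cs : List PTree} (w : List A)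
    (hw : w.length + 1 = (cs.map numLeaves).sum) (i : Fin cs.length) :
    (segment cs w i).length + 1 = numLeaves cs[i] := by
  have := numLeaves_pos cs[i]
  rw [length_segment cs w hw]
  omega

theorem trunkWord_join [Zero A] {cs : List PTree} (w : List A)
    (hw : w.length + 1 = (cs.map numLeaves).sum) {f : Fin cs.length → Finset (List ℕ)}
    (hf : ∀ i, f i ∈ cutsFinset cs[i])
    (hlen : ∀ i : Fin cs.length, (trunkWord cs[i] (f i) (segment cs w i)).length + 1 =
      numLeaves (trunkTree cs[i] (f i))) :
    let T := List.ofFn fun i => trunkTree cs[i] (f i)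
    (trunkWord (node cs) (join f) w).length + 1 = (T.map numLeaves).sum ∧
    rootLetters T (trunkWord (node cs) (join f) w) = rootLetters cs w ∧
    ∀ i : Fin cs.length, segment T (trunkWord (node cs) (join f) w) ⟨i.1, by simp [T]⟩ =
      trunkWord cs[i] (f i) (segment cs w i) := by
  intro T
  have hkept (i : Fin cs.length) :
      pick (fun k => ¬ RemovedIdx (node cs) (join f) (leafOffset cs i + k)) (segment cs w i) =
        trunkWord cs[i] (f i) (segment cs w i) := by
    have hlength := length_segment_add_one w hw i
    rw [trunkWord_eq]
    exact pick_congr fun k hk => not_congr (removedIdx_join_add cs hf i (by omega))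
  have hroot (k : ℕ) (hk : IsRootSector cs k) : ¬ RemovedIdx (node cs) (join f) k := by
    rw [removedIdx_join]
    exact fun ⟨i, hle, hi⟩ => hk i i.2 ⟨hle, hi.lt (hf i)⟩
  rw [trunkWord_eq]
  obtain ⟨hlength, hletters, hsegment⟩ := pick_decomposition cs T w hw hroot (by simp [T])
    fun i hi => by simpa [T] using (congrArg (·.length + 1) (hkept ⟨i, hi⟩)).trans (hlen ⟨i, hi⟩)
  exact ⟨hlength, hletters, fun i => (hsegment i i.2).trans (hkept i)⟩

theorem length_trunkWord [Zero A] (t : PTree) {c : Finset (List ℕ)} (hc : c ∈ cutsFinset t)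
    (w : List A) (hw : w.length + 1 = numLeaves t) :
    (trunkWord t c w).length + 1 = numLeaves (trunkTree t c) := by
  induction t generalizing c w with
  | node cs ih =>
    by_cases hcs : cs = []
    · subst hcs
      rw [cutsFinset_leaf, Finset.mem_singleton] at hc
      rw [hc, trunkTree_empty, trunkWord_empty, hw]
    · rcases cut_cases hc with rfl | ⟨f, hf, rfl⟩
      · rw [trunkTree_singleton_nil, trunkWord_singleton_nil _ _ hw, numLeaves_leaf]
        rfl
      · rw [numLeaves_node_eq_sum_map hcs] at hw
        rw [trunkTree_join, numLeaves_node_eq_sum_map (by simpa using hcs)]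
        exact (trunkWord_join w hw hf fun i => ih _ (List.getElem_mem _) (hf i) _
          (length_segment_add_one w hw i)).1

theorem phiPi_trunk [Ring A] (φ : A → ℂ) (t : PTree) {c : Finset (List ℕ)} (hc : c ∈ cutsFinset t)
    (w : List A) (hw : w.length + 1 = numLeaves t) :
    phiPi φ (trunkTree t c) (trunkWord t c w) *
      ∏ v ∈ c, phiPi φ (subtree! t v) (subword t v w) = phiPi φ t w := by
  induction t generalizing c w with
  | node cs ih =>
    by_cases hcs : cs = []
    · subst hcs
      rw [cutsFinset_leaf, Finset.mem_singleton] at hc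
      rw [hc, trunkTree_empty, trunkWord_empty, Finset.prod_empty, mul_one]
    · rcases cut_cases hc with rfl | ⟨f, hf, rfl⟩
      · rw [trunkTree_singleton_nil, trunkWord_singleton_nil _ _ hw, phiPi_leaf,
          Finset.prod_singleton, subtree!_nil, subword_nil hw, one_mul]
      · rw [numLeaves_node_eq_sum_map hcs] at hw
        obtain ⟨hlength, hletters, hsegment⟩ := trunkWord_join w hw hf fun i =>
          length_trunkWord _ (hf i) _ (length_segment_add_one w hw i)
        rw [trunkTree_join, phiPi_node φ (by simpa using hcs) _ hlength, hletters,
          phiPi_node φ hcs w hw, mul_assoc, prod_join]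
        congr 1
        rw [← Fintype.prod_equiv (finCongr (by simp)) (fun i : Fin cs.length =>
          phiPi φ (trunkTree cs[i] (f i)) (trunkWord cs[i] (f i) (segment cs w i))) _ ?_,
          ← Finset.prod_mul_distrib]
        · refine Finset.prod_congr rfl fun i _ => ?_
          rw [← ih cs[i] (List.getElem_mem i.2) (hf i) (segment cs w i)
            (length_segment_add_one w hw i)]
          congr 1
          refine Finset.prod_congr rfl fun q hq => ?_
          rw [subtree!_cons _ _ _ i.2, subword_cons i ((mem_cutsFinset.1 (hf i)).1 q hq)]
          rfl
        · intro i
          rw [← hsegment i]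
          simp [finCongr]
          rfl

theorem numInternal_trunk (t : PTree) {c : Finset (List ℕ)} (hc : c ∈ cutsFinset t) :
    numInternal (trunkTree t c) + ∑ v ∈ c, numInternal (subtree! t v) = numInternal t := by
  induction t generalizing c with
  | node cs ih =>
    by_cases hcs : cs = []
    · subst hcs
      rw [cutsFinset_leaf, Finset.mem_singleton] at hc
      rw [hc, trunkTree_empty, Finset.sum_empty, add_zero]
    · rcases cut_cases hc with rfl | ⟨f, hf, rfl⟩
      · rw [trunkTree_singleton_nil, numInternal_leaf, Finset.sum_singleton, subtree!_nil, zero_add]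
      · rw [trunkTree_join, numInternal_node_eq_sum_map (by simpa using hcs), numInternal_node hcs,
          sum_join_subtree, List.map_ofFn, List.sum_ofFn, add_assoc, ← Finset.sum_add_distrib]
        congr 1
        refine Finset.sum_congr rfl fun i _ => ?_
        rw [← ih cs[i] (List.getElem_mem i.2) (hf i)]
        rfl

theorem isSchroder_node_iff {cs : List PTree} (hcs : cs ≠ []) :
    IsSchroder (node cs) ↔ 2 ≤ cs.length ∧ ∀ c ∈ cs, IsSchroder c := by
  constructor
  · intro h
    cases h with
    | leaf => exact absurd rfl hcs
    | node _ hlength hcs' => exact ⟨hlength, hcs'⟩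
  · exact fun h => .node _ h.1 h.2

theorem IsSchroder.trunk {t : PTree} (ht : IsSchroder t) {c : Finset (List ℕ)}
    (hc : c ∈ cutsFinset t) : IsSchroder (trunkTree t c) := by
  induction t generalizing c with
  | node cs ih =>
    by_cases hcs : cs = []
    · subst hcs
      rw [cutsFinset_leaf, Finset.mem_singleton] at hc
      rwa [hc, trunkTree_empty]
    · rcases cut_cases hc with rfl | ⟨f, hf, rfl⟩
      · rw [trunkTree_singleton_nil]
        exact IsSchroder.leaf
      · rw [isSchroder_node_iff hcs] at ht
        rw [trunkTree_join, isSchroder_node_iff (by simpa using hcs)]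
        refine ⟨by simpa using ht.1, fun c hc => ?_⟩
        obtain ⟨i, rfl⟩ := List.mem_ofFn.1 hc
        exact ih _ (List.getElem_mem i.2) (ht.2 _ (List.getElem_mem i.2)) (hf i)

theorem IsSchroder.subtree {t : PTree} (ht : IsSchroder t) {v : List ℕ}
    (hv : IsInternalAt t v) : IsSchroder (subtree! t v) ∧ subtree! t v ≠ PTree.leaf := by
  induction t generalizing v with
  | node cs ih =>
    cases v with
    | nil =>
      rw [subtree!_nil]
      exact ⟨ht, by simpa [isInternalAt_nil] using hv⟩
    | cons i q =>
      obtain ⟨hi, hq⟩ := (isInternalAt_cons _ _ _).1 hv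
      rw [subtree!_cons _ _ _ hi]
      exact ih _ (List.getElem_mem hi) (((isSchroder_node_iff
        (List.ne_nil_of_length_pos (by omega))).1 ht).2 _ (List.getElem_mem hi)) hq

theorem GoodTree.length_add_one {d : PTree × List A} (hd : GoodTree d) :
    d.2.length + 1 = numLeaves d.1 := by
  have := numLeaves_pos d.1
  have := hd.2.2
  rw [numSectors] at this
  omega

theorem GoodTree.trunk [Zero A] {d : PTree × List A} (hd : GoodTree d) {c : Finset (List ℕ)}
    (hc : c ∈ cutsFinset d.1) : GoodForest (trunkPart d c) := by
  rw [PTree.trunkPart]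
  split_ifs with h
  · simp [GoodForest]
  · intro e he
    rw [List.mem_singleton] at he
    subst he
    refine ⟨hd.1.trunk hc, h, ?_⟩
    have := length_trunkWord _ hc _ hd.length_add_one
    simp only [numSectors]
    omega

theorem prunePart_perm (d : PTree × List A) (c : Finset (List ℕ)) :
    (prunePart d c).Perm (c.toList.map fun v => (subtree! d.1 v, subword d.1 v d.2)) :=
  (sortCut_perm d.1 c).map _

theorem GoodTree.prune {d : PTree × List A} (hd : GoodTree d) {c : Finset (List ℕ)}
    (hc : c ∈ cutsFinset d.1) : GoodForest (prunePart d c) := by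
  intro e he
  rw [(prunePart_perm d c).mem_iff, List.mem_map] at he
  obtain ⟨v, hv, rfl⟩ := he
  have hv := (mem_cutsFinset.1 hc).1 v (by simpa using hv)
  exact ⟨(hd.1.subtree hv).1, (hd.1.subtree hv).2, length_subword hv hd.length_add_one⟩

/-- Number of internal vertices of a decorated forest. -/
noncomputable def forestInternal (F : DForest A) : ℕ :=
  (F.map fun d => numInternal d.1).sum

theorem forestInternal_append (F G : DForest A) :
    forestInternal (F ++ G) = forestInternal F + forestInternal G := by
  simp [forestInternal]

theorem forestInternal_cons (d : PTree × List A) (F : DForest A) :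
    forestInternal (d :: F) = numInternal d.1 + forestInternal F := by
  simp [forestInternal]

theorem prod_prunePart {M : Type*} [CommMonoid M] (d : PTree × List A) (c : Finset (List ℕ))
    (q : PTree × List A → M) : ((prunePart d c).map q).prod =
      ∏ v ∈ c, q (subtree! d.1 v, subword d.1 v d.2) := by
  rw [((prunePart_perm d c).map q).prod_eq, List.map_map, ← Finset.prod_map_toList]
  rfl

theorem forestInternal_trunkPart_add [Zero A] {d : PTree × List A} {c : Finset (List ℕ)}
    (hc : c ∈ cutsFinset d.1) :
    forestInternal (trunkPart d c) + forestInternal (prunePart d c) = numInternal d.1 := by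
  rw [← numInternal_trunk _ hc]
  congr 1
  · rw [trunkPart]
    split_ifs with h
    · simp [h, numInternal_leaf, forestInternal]
    · simp [forestInternal]
  · exact prod_prunePart (M := Multiplicative ℕ) d c fun e => Multiplicative.ofAdd (numInternal e.1)

theorem GoodForest.append {F G : DForest A} (hF : GoodForest F) (hG : GoodForest G) :
    GoodForest (F ++ G) := fun d hd => (List.mem_append.1 hd).elim (hF d) (hG d)

theorem goodForest_cons {d : PTree × List A} {F : DForest A} :
    GoodForest (d :: F) ↔ GoodTree d ∧ GoodForest F := by
  simp [GoodForest]

theorem mem_forestSplits [Zero A] {F : DForest A} (hF : GoodForest F) {pr : DForest A × DForest A}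
    (h : pr ∈ forestSplits F) : GoodForest pr.1 ∧ GoodForest pr.2 ∧
      forestInternal pr.1 + forestInternal pr.2 = forestInternal F := by
  induction F generalizing pr with
  | nil =>
    rw [forestSplits, List.mem_singleton] at h
    subst h
    simp [GoodForest, forestInternal]
  | cons d F ih =>
    rw [goodForest_cons] at hF
    simp only [forestSplits, List.mem_flatMap, List.mem_map, Finset.mem_toList] at h
    obtain ⟨c, hc, pr, hpr, rfl⟩ := h
    obtain ⟨htrunk, hprune, hinternal⟩ := ih hF.2 hpr
    refine ⟨(hF.1.trunk hc).append htrunk, (hF.1.prune hc).append hprune, ?_⟩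
    have := forestInternal_trunkPart_add hc
    rw [forestInternal_append, forestInternal_append, forestInternal_cons]
    omega

theorem GoodTree.numInternal_pos {d : PTree × List A} (hd : GoodTree d) : 0 < numInternal d.1 :=
  Nat.pos_of_ne_zero fun h => hd.2.1 (numInternal_eq_zero.1 h)

theorem GoodForest.eq_nil {F : DForest A} (hF : GoodForest F) (h : forestInternal F = 0) :
    F = [] := by
  cases F with
  | nil => rfl
  | cons d F =>
    have := (goodForest_cons.1 hF).1.numInternal_pos
    rw [forestInternal_cons] at h
    omega

end Trunk

end PTree

section StrictMaps

/-- Maps to `Fin n` that are strictly increasing along a relation. -/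
abbrev StrictMaps {V : Type*} (R : V → V → Prop) (n : ℕ) : Type _ :=
  {f : V → Fin n // ∀ v w, R v w → f v < f w}

/-- Surjective maps to `Fin n` that are strictly increasing along a relation. -/
abbrev StrictSurjections {V : Type*} (R : V → V → Prop) (n : ℕ) : Type _ :=
  {f : V → Fin n // Function.Surjective f ∧ ∀ v w, R v w → f v < f w}

variable {V : Type*} [Fintype V] (R : V → V → Prop)

/-- A strictly increasing map is a strictly increasing surjection onto its range. -/
noncomputable def strictMapsRangeEquiv {n : ℕ} (S : Finset (Fin n)) :
    {f : StrictMaps R n // Finset.univ.image f.1 = S} ≃ StrictSurjections R S.card where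
  toFun f :=
    have hmem (v : V) : f.1.1 v ∈ S := by simp [← f.2]
    ⟨fun v => (S.orderIsoOfFin rfl).symm ⟨f.1.1 v, hmem v⟩, by
      intro k
      have hk : (S.orderIsoOfFin rfl k : Fin n) ∈ Finset.univ.image f.1.1 := by simp [f.2]
      obtain ⟨v, -, hv⟩ := Finset.mem_image.1 hk
      exact ⟨v, (OrderIso.symm_apply_eq _).2 (Subtype.ext hv)⟩,
      fun v w h => by simpa using f.1.2 v w h⟩
  invFun g := ⟨⟨fun v => S.orderIsoOfFin rfl (g.1 v), fun v w h => by simpa using g.2.2 v w h⟩, by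
    ext x
    simp only [Finset.mem_image, Finset.mem_univ, true_and]
    refine ⟨?_, fun hx => ?_⟩
    · rintro ⟨v, rfl⟩
      exact Subtype.mem _
    · obtain ⟨v, hv⟩ := g.2.1 ((S.orderIsoOfFin rfl).symm ⟨x, hx⟩)
      exact ⟨v, by simp [hv]⟩⟩
  left_inv f := by ext; simp
  right_inv g := Subtype.ext (funext fun v => OrderIso.symm_apply_apply _ _)

theorem card_strictMaps (n : ℕ) : Nat.card (StrictMaps R n) =
    ∑ k ∈ Finset.range (Fintype.card V + 1), n.choose k * Nat.card (StrictSurjections R k) := by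
  have hempty (k : ℕ) (hk : Fintype.card V < k) : Nat.card (StrictSurjections R k) = 0 := by
    rw [Nat.card_eq_zero]
    refine Or.inl ⟨fun f => ?_⟩
    have := Fintype.card_le_of_surjective _ f.2.1
    rw [Fintype.card_fin] at this
    omega
  rw [Nat.card_congr (Equiv.sigmaFiberEquiv fun f : StrictMaps R n => Finset.univ.image f.1).symm,
    Nat.card_sigma, Finset.sum_congr rfl fun S _ => Nat.card_congr (strictMapsRangeEquiv R S),
    ← Finset.powerset_univ,
    Finset.sum_powerset_apply_card fun k => Nat.card (StrictSurjections R k)]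
  simp only [smul_eq_mul, Finset.card_univ, Fintype.card_fin]
  trans ∑ k ∈ Finset.range (n + 1 + Fintype.card V), n.choose k * Nat.card (StrictSurjections R k)
  · refine Finset.sum_subset (Finset.range_mono (by omega)) fun k _ hk => ?_
    simp only [Finset.mem_range, not_lt] at hk
    rw [Nat.choose_eq_zero_of_lt (by omega), zero_mul]
  · refine (Finset.sum_subset (Finset.range_mono (by omega)) fun k _ hk => ?_).symm
    simp only [Finset.mem_range, not_lt] at hk
    rw [hempty k (by omega), mul_zero]

end StrictMaps

namespace PTree

open Polynomial

section OrderPolynomial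

/-- The strict order of the skeleton: `v` is a proper ancestor of the internal vertex `w`. -/
def Above (t : PTree) (v w : {p : List ℕ // IsInternalAt t p}) : Prop := v.1 <+: w.1 ∧ v ≠ w

/-- Number of strictly order-preserving maps from the internal vertices of `t` to `Fin n`. -/
noncomputable def numStrict (t : PTree) (n : ℕ) : ℕ := Nat.card (StrictMaps (Above t) n)

theorem omegaSkK_eq (t : PTree) (k : ℕ) :
    omegaSkK t k = Nat.card (StrictSurjections (Above t) k) := by
  simp only [omegaSkK, StrictSurjections, Above, and_imp]

theorem numStrict_eq_sum (t : PTree) (n : ℕ) : numStrict t n =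
    ∑ k ∈ Finset.range (numInternal t + 1), n.choose k * omegaSkK t k := by
  have : Fintype {p // IsInternalAt t p} := (finite_internal t).fintype
  have hcard : numInternal t = Fintype.card {p // IsInternalAt t p} := Nat.card_eq_fintype_card
  simp only [hcard, omegaSkK_eq]
  exact card_strictMaps (Above t) n

theorem numStrict_leaf (n : ℕ) : numStrict leaf n = 1 := by
  have : IsEmpty {p : List ℕ // IsInternalAt leaf p} := ⟨fun p => not_isInternalAt_leaf _ p.2⟩
  rw [numStrict, Nat.card_eq_one_iff_unique]
  exact ⟨⟨fun f g => Subtype.ext (Subsingleton.elim _ _)⟩,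
    ⟨⟨fun v => isEmptyElim v, fun v => isEmptyElim v⟩⟩⟩

theorem numStrict_node_zero {cs : List PTree} (hcs : cs ≠ []) : numStrict (node cs) 0 = 0 := by
  rw [numStrict, Nat.card_eq_zero]
  exact Or.inl ⟨fun f => (f.1 ⟨[], (isInternalAt_nil cs).2 hcs⟩).elim0⟩

/-- The root of a nontrivial tree as an internal vertex. -/
abbrev rootVertex {cs : List PTree} (hcs : cs ≠ []) : {p // IsInternalAt (node cs) p} :=
  ⟨[], (isInternalAt_nil cs).2 hcs⟩

/-- The internal vertex of a tree given by an internal vertex of its `i`-th subtree. -/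
abbrev childVertex {cs : List PTree} (i : Fin cs.length) (q : {q // IsInternalAt cs[i] q}) :
    {p // IsInternalAt (node cs) p} :=
  ⟨i.1 :: q.1, (isInternalAt_cons cs i q.1).2 ⟨i.2, q.2⟩⟩

theorem rootVertex_lt {cs : List PTree} (hcs : cs ≠ []) {n : ℕ} (f : StrictMaps (Above (node cs)) n)
    {v : {p // IsInternalAt (node cs) p}} (hv : v ≠ rootVertex hcs) :
    f.1 (rootVertex hcs) < f.1 v :=
  f.2 _ _ ⟨(List.prefix_append [] _), hv.symm⟩

/-- Strict maps avoiding the least value at the root. -/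
def strictMapsRootNeEquiv {cs : List PTree} (hcs : cs ≠ []) (n : ℕ) :
    {f : StrictMaps (Above (node cs)) (n + 1) // ¬ f.1 (rootVertex hcs) = 0} ≃
      StrictMaps (Above (node cs)) n where
  toFun f := ⟨fun v => (f.1.1 v).pred (by
    by_cases hv : v = rootVertex hcs
    · rw [hv]
      exact f.2
    · exact (Fin.zero_le _).trans_lt (rootVertex_lt hcs f.1 hv) |>.ne'), fun v w h => by
      simpa using f.1.2 v w h⟩
  invFun g := ⟨⟨fun v => (g.1 v).succ, fun v w h => by simpa using g.2 v w h⟩, Fin.succ_ne_zero _⟩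
  left_inv f := by ext; simp
  right_inv g := by ext; simp

/-- Strict maps taking the least value at the root. -/
def strictMapsRootEqEquiv {cs : List PTree} (hcs : cs ≠ []) (n : ℕ) :
    {f : StrictMaps (Above (node cs)) (n + 1) // f.1 (rootVertex hcs) = 0} ≃
      ∀ i : Fin cs.length, StrictMaps (Above cs[i]) n where
  toFun f i := ⟨fun q => (f.1.1 (childVertex i q)).pred
      ((Fin.zero_le _).trans_lt (rootVertex_lt hcs f.1 (by simp)) |>.ne'), fun v w h => by
      have := f.1.2 (childVertex i v) (childVertex i w)
        ⟨by simpa using h.1, by simpa [Subtype.ext_iff] using h.2⟩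
      simpa using this⟩
  invFun g := ⟨⟨fun v => match v with
      | ⟨[], _⟩ => 0
      | ⟨i :: q, h⟩ => ((g ⟨i, ((isInternalAt_cons cs i q).1 h).1⟩).1
          ⟨q, ((isInternalAt_cons cs i q).1 h).2⟩).succ, by
      rintro ⟨v, hv⟩ ⟨w, hw⟩ ⟨hprefix, hne⟩
      cases v with
      | nil =>
        cases w with
        | nil => exact absurd rfl hne
        | cons j r => exact Fin.succ_pos _
      | cons i q =>
        cases w with
        | nil => simp at hprefix
        | cons j r =>
          obtain ⟨rfl, htail⟩ := List.cons_prefix_cons.1 hprefix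
          exact Fin.succ_lt_succ_iff.2
            ((g _).2 _ _ ⟨htail, by simpa [Subtype.ext_iff] using hne⟩)⟩,
    rfl⟩
  left_inv f := by
    ext ⟨v, hv⟩
    cases v with
    | nil => simp [f.2]
    | cons i q => simp
  right_inv g := by
    ext i q
    simp

theorem numStrict_node_succ {cs : List PTree} (hcs : cs ≠ []) (n : ℕ) :
    numStrict (node cs) (n + 1) =
      numStrict (node cs) n + ∏ i : Fin cs.length, numStrict cs[i] n := by
  classical
  have : Finite {p // IsInternalAt (node cs) p} := finite_internal (node cs)
  have (i : Fin cs.length) : Finite {p // IsInternalAt cs[i] p} := finite_internal cs[i]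
  rw [numStrict, Nat.card_congr (Equiv.sumCompl fun f : StrictMaps (Above (node cs)) (n + 1) =>
    f.1 (rootVertex hcs) = 0).symm, Nat.card_sum, Nat.card_congr (strictMapsRootEqEquiv hcs n),
    Nat.card_congr (strictMapsRootNeEquiv hcs n), Nat.card_pi, add_comm]
  rfl

theorem sum_cuts_numStrict (t : PTree) (m n : ℕ) :
    ∑ c ∈ cutsFinset t, numStrict (trunkTree t c) m * ∏ v ∈ c, numStrict (subtree! t v) n =
      numStrict t (m + n) := by
  induction t generalizing m with
  | node cs ih =>
    by_cases hcs : cs = []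
    · subst hcs
      simp [cutsFinset_leaf, trunkTree_empty, numStrict_leaf]
    · have hT (f : Fin cs.length → Finset (List ℕ)) :
          (List.ofFn fun i => trunkTree cs[i] (f i)) ≠ [] := by simpa using hcs
      rw [sum_cutsFinset_node hcs, trunkTree_singleton_nil, numStrict_leaf, one_mul,
        Finset.prod_singleton, subtree!_nil]
      simp only [trunkTree_join, prod_join_subtree cs _ fun t => numStrict t n]
      induction m with
      | zero => simp only [numStrict_node_zero (hT _), zero_mul, Finset.sum_const_zero, add_zero,
          zero_add]
      | succ m ihm =>
        rw [Nat.add_right_comm, numStrict_node_succ hcs, ← ihm, add_assoc]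
        congr 1
        simp only [numStrict_node_succ (hT _), add_mul, Finset.sum_add_distrib]
        congr 1
        have hchild (i : Fin cs.length) := (ih cs[i] (List.getElem_mem i.2) m).symm
        rw [Fintype.prod_congr _ _ hchild, Finset.prod_univ_sum]
        refine Finset.sum_congr rfl fun f _ => ?_
        rw [Finset.prod_mul_distrib]
        congr 1
        refine Fintype.prod_equiv (finCongr (by simp)) _ _ fun i => ?_
        simp [Fin.cast]

/-- The strict order polynomial of the poset of internal vertices of a tree. -/
noncomputable def orderPoly (t : PTree) : ℂ[X] :=
  ∑ k ∈ Finset.range (numInternal t + 1),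
    C ((omegaSkK t k : ℂ) / (k.factorial : ℂ)) * descPochhammer ℂ k

theorem eval_orderPoly_natCast (t : PTree) (n : ℕ) :
    (orderPoly t).eval (n : ℂ) = numStrict t n := by
  rw [numStrict_eq_sum, orderPoly, eval_finsetSum, Nat.cast_sum]
  refine Finset.sum_congr rfl fun k _ => ?_
  rw [eval_mul, eval_C, descPochhammer_eval_eq_descFactorial,
    Nat.descFactorial_eq_factorial_mul_choose]
  have : (k.factorial : ℂ) ≠ 0 := by exact_mod_cast k.factorial_ne_zero
  push_cast
  field_simp

theorem eq_of_eval_natCast {R : Type*} [CommRing R] [IsDomain R] [CharZero R] {p q : R[X]}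
    (h : ∀ n : ℕ, p.eval (n : R) = q.eval (n : R)) : p = q := by
  refine eq_of_infinite_eval_eq p q (Set.Infinite.mono ?_ (Set.infinite_range_of_injective
    (Nat.cast_injective (R := R))))
  rintro _ ⟨n, rfl⟩
  exact h n

theorem orderPoly_leaf : orderPoly leaf = 1 := by
  refine eq_of_eval_natCast fun n => ?_
  rw [eval_orderPoly_natCast, numStrict_leaf]
  simp

theorem eval_zero_orderPoly_node {cs : List PTree} (hcs : cs ≠ []) :
    (orderPoly (node cs)).eval 0 = 0 := by
  have := eval_orderPoly_natCast (node cs) 0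
  rw [numStrict_node_zero hcs] at this
  simpa using this

theorem orderPoly_node_add_one {cs : List PTree} (hcs : cs ≠ []) (x : ℂ) :
    (orderPoly (node cs)).eval (x + 1) =
      (orderPoly (node cs)).eval x + ∏ i : Fin cs.length, (orderPoly cs[i]).eval x := by
  have : (orderPoly (node cs)).comp (X + 1) =
      orderPoly (node cs) + ∏ i : Fin cs.length, orderPoly cs[i] := by
    refine eq_of_eval_natCast fun n => ?_
    rw [eval_add, eval_prod, eval_comp, eval_add, eval_X, eval_one]
    simp only [← Nat.cast_succ, eval_orderPoly_natCast]
    rw [Nat.succ_eq_add_one, numStrict_node_succ hcs]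
    push_cast
    rfl
  have := congrArg (eval x) this
  simpa only [eval_prod, eval_comp, eval_add, eval_X, eval_one] using this

theorem eval_neg_one_orderPoly (t : PTree) :
    (orderPoly t).eval (-1) = (-1) ^ numInternal t := by
  induction t with
  | node cs ih =>
    by_cases hcs : cs = []
    · subst hcs
      rw [orderPoly_leaf, numInternal_leaf]
      simp
    · have := orderPoly_node_add_one hcs (-1)
      rw [neg_add_cancel, eval_zero_orderPoly_node hcs] at this
      rw [eq_neg_of_add_eq_zero_left this.symm, numInternal_node hcs, pow_add, pow_one, neg_one_mul,
        ← Finset.prod_pow_eq_pow_sum]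
      congr 1
      exact Finset.prod_congr rfl fun i _ => ih _ (List.getElem_mem i.2)

open Classical in
theorem eval_one_orderPoly_node {cs : List PTree} (hcs : cs ≠ []) :
    (orderPoly (node cs)).eval 1 = if ∀ c ∈ cs, c = leaf then 1 else 0 := by
  have := orderPoly_node_add_one hcs 0
  rw [zero_add, eval_zero_orderPoly_node hcs, zero_add] at this
  rw [this]
  split_ifs with h
  · refine Finset.prod_eq_one fun i _ => ?_
    rw [h cs[i] (List.getElem_mem i.2), orderPoly_leaf, eval_one]
  · push Not at h
    obtain ⟨⟨ds⟩, hc, hds⟩ := h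
    obtain ⟨i, hi, heq⟩ := List.getElem_of_mem hc
    refine Finset.prod_eq_zero (Finset.mem_univ ⟨i, hi⟩) ?_
    simpa [heq] using eval_zero_orderPoly_node (by simpa using hds)

theorem eval_zero_derivative_descPochhammer_succ {R : Type*} [CommRing R] (k : ℕ) :
    (derivative (descPochhammer R (k + 1))).eval 0 = (-1) ^ k * k.factorial := by
  rw [descPochhammer_succ_left, derivative_mul, derivative_X, one_mul, eval_add, eval_mul, eval_X,
    zero_mul, add_zero, eval_comp, eval_sub, eval_X, eval_one, zero_sub]
  induction k with
  | zero => simp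
  | succ k ih =>
    rw [descPochhammer_succ_eval, ih, Nat.factorial_succ]
    push_cast
    ring

theorem eval_zero_derivative_orderPoly (t : PTree) :
    (derivative (orderPoly t)).eval 0 = omegaSk t := by
  rw [orderPoly, derivative_sum, eval_finsetSum, Finset.sum_range_succ', omegaSk,
    ← Finset.Ico_add_one_right_eq_Icc, Finset.sum_Ico_eq_sum_range]
  simp only [descPochhammer_zero, mul_one, derivative_C, eval_zero, add_zero, Nat.add_sub_cancel]
  refine Finset.sum_congr rfl fun k _ => ?_
  rw [derivative_C_mul, eval_mul, eval_C, eval_zero_derivative_descPochhammer_succ, add_comm 1 k,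
    Nat.factorial_succ]
  have hfactorial : (k.factorial : ℂ) ≠ 0 := by exact_mod_cast k.factorial_ne_zero
  have hsucc : (k + 1 : ℂ) ≠ 0 := by exact_mod_cast k.succ_ne_zero
  push_cast
  field_simp
  ring

theorem sum_cuts_orderPoly (t : PTree) (x y : ℂ) :
    ∑ c ∈ cutsFinset t, (orderPoly (trunkTree t c)).eval x *
      ∏ v ∈ c, (orderPoly (subtree! t v)).eval y = (orderPoly t).eval (x + y) := by
  have hnat (n : ℕ) : ∑ c ∈ cutsFinset t, orderPoly (trunkTree t c) *
      C (∏ v ∈ c, (orderPoly (subtree! t v)).eval (n : ℂ)) =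
        (orderPoly t).comp (X + C (n : ℂ)) := by
    refine eq_of_eval_natCast fun m => ?_
    rw [eval_finsetSum, eval_comp, eval_add, eval_X, eval_C]
    simp only [eval_mul, eval_C, ← Nat.cast_add, eval_orderPoly_natCast, ← sum_cuts_numStrict t m n]
    push_cast
    rfl
  have hpoly : ∑ c ∈ cutsFinset t, C ((orderPoly (trunkTree t c)).eval x) *
      ∏ v ∈ c, orderPoly (subtree! t v) = (orderPoly t).comp (C x + X) := by
    refine eq_of_eval_natCast fun n => ?_
    have := congrArg (eval x) (hnat n)
    simpa [eval_finsetSum, eval_prod] using this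
  have := congrArg (eval y) hpoly
  simpa [eval_finsetSum, eval_prod] using this

end OrderPolynomial

section ForestPoly

variable {A : Type*}

theorem sum_map_flatMap_toList {ι κ M : Type*} [AddCommMonoid M] (s : Finset ι) (f : ι → List κ)
    (g : κ → M) : ((s.toList.flatMap f).map g).sum = ∑ x ∈ s, ((f x).map g).sum := by
  rw [← Finset.sum_map_toList, List.map_flatMap, List.flatMap, List.sum_flatten, List.map_map]
  rfl

theorem convD_cons [Zero A] {f g : DForest A → ℂ} (hf : ∀ F G, f (F ++ G) = f F * f G)
    (hg : ∀ F G, g (F ++ G) = g F * g G) (d : PTree × List A) (F : DForest A) :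
    convD f g (d :: F) =
      (∑ c ∈ cutsFinset d.1, f (trunkPart d c) * g (prunePart d c)) * convD f g F := by
  rw [convD, forestSplits, sum_map_flatMap_toList, Finset.sum_mul]
  refine Finset.sum_congr rfl fun c _ => ?_
  rw [convD, List.map_map, ← List.sum_map_mul_left]
  congr 1
  refine List.map_congr_left fun pr _ => ?_
  simp only [Function.comp_apply, hf, hg]
  ring

theorem isCorolla_node_iff {cs : List PTree} (hcs : cs ≠ []) (ht : IsSchroder (node cs)) :
    IsCorolla (node cs) ↔ ∀ c ∈ cs, c = leaf := by
  constructor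
  · rintro ⟨m, -, h⟩ c hc
    rw [corolla, node.injEq] at h
    rw [h] at hc
    exact List.eq_of_mem_replicate hc
  · intro h
    refine ⟨cs.length, ((isSchroder_node_iff hcs).1 ht).1, ?_⟩
    rw [corolla, ← List.eq_replicate_length.2 h]

variable [Ring A] (φ : A → ℂ)

/-- The polynomial interpolating the convolution powers of the moment character on a tree:
its value at `n` is the value of `Φ̃^{*n}`. -/
noncomputable def treePoly (d : PTree × List A) : ℂ[X] := C (phiPi φ d.1 d.2) * orderPoly d.1

/-- The multiplicative extension of `treePoly` to forests. -/
noncomputable def forestPoly (F : DForest A) : ℂ[X] := (F.map (treePoly φ)).prod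

theorem forestPoly_nil : forestPoly φ [] = 1 := rfl

theorem forestPoly_append (F G : DForest A) :
    forestPoly φ (F ++ G) = forestPoly φ F * forestPoly φ G := by
  simp [forestPoly]

theorem forestPoly_singleton (d : PTree × List A) : forestPoly φ [d] = treePoly φ d := by
  simp [forestPoly]

theorem forestPoly_trunkPart (d : PTree × List A) (c : Finset (List ℕ)) :
    forestPoly φ (trunkPart d c) =
      C (phiPi φ (trunkTree d.1 c) (trunkWord d.1 c d.2)) * orderPoly (trunkTree d.1 c) := by
  rw [trunkPart]
  split_ifs with h
  · rw [h, phiPi_leaf, orderPoly_leaf, map_one, one_mul, forestPoly_nil]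
  · rw [forestPoly_singleton, treePoly]

theorem forestPoly_prunePart (d : PTree × List A) (c : Finset (List ℕ)) :
    forestPoly φ (prunePart d c) =
      ∏ v ∈ c, treePoly φ (subtree! d.1 v, subword d.1 v d.2) :=
  prod_prunePart d c _

theorem sum_cuts_eval {d : PTree × List A} (hd : GoodTree d) (x y : ℂ) :
    ∑ c ∈ cutsFinset d.1, (forestPoly φ (trunkPart d c)).eval x *
      (forestPoly φ (prunePart d c)).eval y = (treePoly φ d).eval (x + y) := by
  rw [treePoly, eval_mul, eval_C, ← sum_cuts_orderPoly, Finset.mul_sum]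
  refine Finset.sum_congr rfl fun c hc => ?_
  rw [← phiPi_trunk φ d.1 hc d.2 hd.length_add_one, forestPoly_trunkPart, forestPoly_prunePart,
    eval_prod]
  simp only [treePoly, eval_mul, eval_C, Finset.prod_mul_distrib]
  ring

theorem convD_forestPoly {F : DForest A} (hF : GoodForest F) (x y : ℂ) :
    convD (fun G => (forestPoly φ G).eval x) (fun G => (forestPoly φ G).eval y) F =
      (forestPoly φ F).eval (x + y) := by
  induction F with
  | nil => simp [convD, forestSplits, forestPoly_nil]
  | cons d F ih =>
    rw [goodForest_cons] at hF
    rw [convD_cons, sum_cuts_eval φ hF.1, ih hF.2, ← eval_mul, ← forestPoly_singleton,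
      ← forestPoly_append]
    · rfl
    all_goals
      intro F G
      simp [forestPoly_append]

theorem phiPi_corolla {t : PTree} (ht : IsCorolla t) (w : List A)
    (hw : w.length + 1 = numLeaves t) : phiPi φ t w = φ w.prod := by
  obtain ⟨m, hm, rfl⟩ := ht
  have hne : List.replicate m leaf ≠ [] := by simp; omega
  rw [corolla, numLeaves_node_eq_sum_map hne] at hw
  rw [corolla, phiPi_node φ hne w hw, rootLetters_replicate, Finset.prod_eq_one, mul_one]
  · intro i _
    simp [phiPi_leaf]
  · rw [List.map_replicate, numLeaves_leaf, List.sum_replicate, smul_eq_mul, mul_one] at hw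
    omega

open Classical in
theorem eval_one_treePoly {d : PTree × List A} (hd : GoodTree d) :
    (treePoly φ d).eval 1 = if IsCorolla d.1 then φ d.2.prod else 0 := by
  obtain ⟨⟨cs⟩, w⟩ := d
  have hcs : cs ≠ [] := by simpa using hd.2.1
  have hcorolla := isCorolla_node_iff hcs hd.1
  rw [treePoly, eval_mul, eval_C, eval_one_orderPoly_node hcs]
  simp only [hcorolla]
  split_ifs with h
  · rw [mul_one]
    exact phiPi_corolla φ (hcorolla.2 h) w hd.length_add_one
  · rw [mul_zero]

theorem charD_eq_eval_one_forestPoly {F : DForest A} (hF : GoodForest F) :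
    charD φ F = (forestPoly φ F).eval 1 := by
  rw [charD, forestPoly, ← coe_evalRingHom, map_list_prod, List.map_map]
  congr 1
  exact List.map_congr_left fun d hd => (eval_one_treePoly φ (hF d hd)).symm

theorem eval_zero_treePoly {d : PTree × List A} (hd : GoodTree d) :
    (treePoly φ d).eval 0 = 0 := by
  obtain ⟨⟨cs⟩, w⟩ := d
  rw [treePoly, eval_mul, eval_zero_orderPoly_node (by simpa using hd.2.1), mul_zero]

theorem eval_zero_forestPoly {F : DForest A} (hF : GoodForest F) :
    (forestPoly φ F).eval 0 = epsD F := by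
  cases F with
  | nil => simp [forestPoly_nil, epsD]
  | cons d F =>
    rw [goodForest_cons] at hF
    simp [forestPoly, epsD, eval_zero_treePoly φ hF.1]

end ForestPoly

section Powers

variable {A : Type*}

/-- Iterated products `α · (α · (⋯ (α · ε)))` for the product dual to a splitting. -/
noncomputable def splitPow (S : DForest A → List (DForest A × DForest A)) (α : DForest A → ℂ) :
    ℕ → DForest A → ℂ
  | 0 => epsD
  | k + 1 => fun F => ((S F).map fun pr => α pr.1 * splitPow S α k pr.2).sum

/-- Splittings of genuine forests into genuine forests, respecting the degree. -/
def IsSplitting (S : DForest A → List (DForest A × DForest A)) : Prop :=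
  ∀ F, GoodForest F → ∀ pr ∈ S F, GoodForest pr.1 ∧ GoodForest pr.2 ∧
    forestInternal pr.1 + forestInternal pr.2 = forestInternal F

theorem sum_list_sum_map {ι κ M : Type*} [AddCommMonoid M] (s : Finset κ) (l : List ι)
    (f : κ → ι → M) : ∑ k ∈ s, (l.map (f k)).sum = (l.map fun x => ∑ k ∈ s, f k x).sum := by
  induction l with
  | nil => simp
  | cons a l ih => simp [Finset.sum_add_distrib, ih]

theorem splitPow_eq_zero {S : DForest A → List (DForest A × DForest A)} (hS : IsSplitting S)
    {α : DForest A → ℂ} (hα : α [] = 0) {k : ℕ} {F : DForest A} (hF : GoodForest F)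
    (hk : forestInternal F < k) : splitPow S α k F = 0 := by
  induction k generalizing F with
  | zero => omega
  | succ k ih =>
    rw [splitPow]
    refine List.sum_eq_zero fun x hx => ?_
    obtain ⟨pr, hpr, rfl⟩ := List.mem_map.1 hx
    obtain ⟨htrunk, hprune, hinternal⟩ := hS F hF pr hpr
    by_cases h : forestInternal pr.1 = 0
    · rw [htrunk.eq_nil h, hα, zero_mul]
    · rw [ih hprune (by omega), mul_zero]

theorem finsum_splitPow {S : DForest A → List (DForest A × DForest A)} (hS : IsSplitting S)
    {α : DForest A → ℂ} (hα : α [] = 0) (u : ℕ → ℂ) {N : ℕ} {F : DForest A} (hF : GoodForest F)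
    (hN : forestInternal F < N) :
    ∑ᶠ k, u k * splitPow S α k F = ∑ k ∈ Finset.range N, u k * splitPow S α k F := by
  refine finsum_eq_sum_of_support_subset _ fun k hk => ?_
  rw [Finset.coe_range, Set.mem_Iio]
  by_contra h
  exact hk (mul_eq_zero_of_right _ (splitPow_eq_zero hS hα hF (by omega)))

theorem eq_sum_map_of_eq_finsum_splitPow {S : DForest A → List (DForest A × DForest A)}
    (hS : IsSplitting S) {α Φ : DForest A → ℂ} (hα : α [] = 0)
    (h : ∀ F, GoodForest F → Φ F = ∑ᶠ k, splitPow S α k F) {F : DForest A} (hF : GoodForest F)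
    (hne : F ≠ []) : Φ F = ((S F).map fun pr => α pr.1 * Φ pr.2).sum := by
  have hsum (G : DForest A) (hG : GoodForest G) (N : ℕ) (hN : forestInternal G < N) :
      Φ G = ∑ k ∈ Finset.range N, splitPow S α k G := by
    have := finsum_splitPow hS hα (fun _ => 1) hG hN
    simp only [one_mul] at this
    rw [h G hG, this]
  rw [hsum F hF (forestInternal F + 1 + 1) (by omega), Finset.sum_range_succ', splitPow, epsD,
    if_neg hne, add_zero]
  simp only [splitPow]
  rw [sum_list_sum_map]
  refine congrArg List.sum (List.map_congr_left fun pr hpr => ?_)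
  obtain ⟨-, hprune, hinternal⟩ := hS F hF pr hpr
  rw [hsum pr.2 hprune (forestInternal F + 1) (by omega), Finset.mul_sum]

end Powers

theorem goodForest_singleton {A : Type*} {d : PTree × List A} (hd : GoodTree d) :
    GoodForest [d] := by
  simpa [GoodForest] using hd

open Classical in
theorem mem_cutsPrecFinset {t : PTree} {c : Finset (List ℕ)} :
    c ∈ cutsPrecFinset t ↔ c ∈ cutsFinset t ∧ ∀ v ∈ c, ¬ OnLeftBranch v := by
  rw [cutsPrecFinset, Finset.mem_filter]

open Classical in
theorem mem_cutsSuccFinset {t : PTree} {c : Finset (List ℕ)} :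
    c ∈ cutsSuccFinset t ↔ c ∈ cutsFinset t ∧ ∃ v ∈ c, OnLeftBranch v := by
  rw [cutsSuccFinset, Finset.mem_filter]

theorem prunePart_empty {A : Type*} (d : PTree × List A) : prunePart d ∅ = [] := by
  simpa using (prunePart_perm d ∅)

theorem prunePart_singleton {A : Type*} (d : PTree × List A) (v : List ℕ) :
    prunePart d {v} = [(subtree! d.1 v, subword d.1 v d.2)] := by
  simpa using (prunePart_perm d {v})

theorem prunePart_singleton_nil {A : Type*} {d : PTree × List A} (hd : GoodTree d) :
    prunePart d {[]} = [d] := by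
  rw [prunePart_singleton, subtree!_nil, subword_nil hd.length_add_one]

section Splittings

variable {A : Type*}

theorem IsInfCharD.eq_zero_of_length_ne_one {α : DForest A → ℂ} (hα : IsInfCharD α)
    {F : DForest A} (hF : F.length ≠ 1) : α F = 0 := by
  match F, hF with
  | [], _ => exact hα.1
  | d :: e :: F, _ => exact hα.2 [d] (e :: F) (by simp) (by simp)

variable [Zero A]

theorem isSplitting_forestSplits : IsSplitting (forestSplits (A := A)) :=
  fun _ hF _ hpr => mem_forestSplits hF hpr

theorem forestSplitsPrec_subset (F : DForest A) : forestSplitsPrec F ⊆ forestSplits F := by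
  intro pr hpr
  cases F with
  | nil => simp [forestSplitsPrec] at hpr
  | cons d F =>
    rw [forestSplitsPrec, List.mem_flatMap] at hpr
    obtain ⟨c, hc, hpr⟩ := hpr
    rw [forestSplits, List.mem_flatMap]
    exact ⟨c, Finset.mem_toList.2 (mem_cutsPrecFinset.1 (Finset.mem_toList.1 hc)).1, hpr⟩

theorem forestSplitsSucc_subset (F : DForest A) : forestSplitsSucc F ⊆ forestSplits F := by
  intro pr hpr
  cases F with
  | nil => simp [forestSplitsSucc] at hpr
  | cons d F =>
    rw [forestSplitsSucc, List.mem_flatMap] at hpr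
    obtain ⟨c, hc, hpr⟩ := hpr
    rw [forestSplits, List.mem_flatMap]
    exact ⟨c, Finset.mem_toList.2 (mem_cutsSuccFinset.1 (Finset.mem_toList.1 hc)).1, hpr⟩

theorem isSplitting_forestSplitsPrec : IsSplitting (forestSplitsPrec (A := A)) :=
  fun F hF _ hpr => mem_forestSplits hF (forestSplitsPrec_subset F hpr)

theorem isSplitting_forestSplitsSucc :
    IsSplitting fun F : DForest A => (forestSplitsSucc F).map Prod.swap := by
  intro F hF pr hpr
  obtain ⟨qr, hqr, rfl⟩ := List.mem_map.1 hpr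
  obtain ⟨hfst, hsnd, hadd⟩ := mem_forestSplits hF (forestSplitsSucc_subset F hqr)
  exact ⟨hsnd, hfst, by rw [← hadd, add_comm]; rfl⟩

theorem convPowD_eq_splitPow (α : DForest A → ℂ) (k : ℕ) :
    convPowD α k = splitPow forestSplits α k := by
  induction k with
  | zero => rfl
  | succ k ih => rw [convPowD, ih]; rfl

theorem precPowD_eq_splitPow (α : DForest A → ℂ) (k : ℕ) :
    precPowD α k = splitPow forestSplitsPrec α k := by
  induction k with
  | zero => rfl
  | succ k ih => rw [precPowD, ih]; rfl

theorem succPowD_eq_splitPow (α : DForest A → ℂ) (k : ℕ) :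
    succPowD α k = splitPow (fun F => (forestSplitsSucc F).map Prod.swap) α k := by
  induction k with
  | zero => rfl
  | succ k ih =>
    rw [succPowD, ih]
    funext F
    simp [splitPow, succD, Function.comp_def, mul_comm]

theorem eq_sum_cutsPrec {κ Φ : DForest A → ℂ} (hκ : κ [] = 0)
    (hΦ : ∀ F, GoodForest F → Φ F = ePrecD κ F) {d : PTree × List A} (hd : GoodTree d) :
    Φ [d] = ∑ c ∈ cutsPrecFinset d.1, κ (trunkPart d c) * Φ (prunePart d c) := by
  rw [eq_sum_map_of_eq_finsum_splitPow (Φ := Φ) isSplitting_forestSplitsPrec hκ _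
    (goodForest_singleton hd) (by simp)]
  · rw [forestSplitsPrec, sum_map_flatMap_toList]
    simp [forestSplits]
  · intro F hF
    simp_rw [hΦ F hF, ePrecD, precPowD_eq_splitPow]

theorem eq_sum_cutsSucc {β Φ : DForest A → ℂ} (hβ : β [] = 0)
    (hΦ : ∀ F, GoodForest F → Φ F = eSuccD β F) {d : PTree × List A} (hd : GoodTree d) :
    Φ [d] = ∑ c ∈ cutsSuccFinset d.1, Φ (trunkPart d c) * β (prunePart d c) := by
  rw [eq_sum_map_of_eq_finsum_splitPow (Φ := Φ) isSplitting_forestSplitsSucc hβ _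
    (goodForest_singleton hd) (by simp)]
  · rw [List.map_map, forestSplitsSucc, sum_map_flatMap_toList]
    simp [forestSplits, mul_comm]
  · intro F hF
    simp_rw [hΦ F hF, eSuccD, succPowD_eq_splitPow]

theorem trunkPart_empty {d : PTree × List A} (hd : GoodTree d) : trunkPart d ∅ = [d] := by
  rw [trunkPart, trunkTree_empty, trunkWord_empty, if_neg hd.2.1]

theorem trunkPart_singleton_nil (d : PTree × List A) : trunkPart d {[]} = [] := by
  rw [trunkPart, trunkTree_singleton_nil, if_pos rfl]

theorem empty_mem_cutsFinset (t : PTree) : ∅ ∈ cutsFinset t := by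
  simp [mem_cutsFinset]

theorem empty_mem_cutsPrecFinset (t : PTree) : ∅ ∈ cutsPrecFinset t := by
  simp [mem_cutsPrecFinset, empty_mem_cutsFinset]

theorem onLeftBranch_nil : OnLeftBranch [] := rfl

theorem numInternal_trunkTree_lt {t : PTree} {c : Finset (List ℕ)} (hc : c ∈ cutsFinset t)
    (hne : c ≠ ∅) : numInternal (trunkTree t c) < numInternal t := by
  obtain ⟨v, hv⟩ := Finset.nonempty_iff_ne_empty.2 hne
  have hpos : 0 < numInternal (subtree! t v) := by
    obtain ⟨cs, hcs, hne⟩ := (mem_cutsFinset.1 hc).1 v hv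
    refine Nat.pos_of_ne_zero fun h => hne ?_
    rw [numInternal_eq_zero, subtree!, hcs] at h
    simpa using h
  have := numInternal_trunk t hc
  have := Finset.single_le_sum (f := fun v => numInternal (subtree! t v)) (fun _ _ => Nat.zero_le _)
    hv
  omega

theorem eq_of_sum_cutsPrec_eq {κ κ' Φ : DForest A → ℂ} (hnil : κ [] = κ' []) (hΦ : Φ [] = 1)
    (hsum : ∀ d, GoodTree d →
      ∑ c ∈ cutsPrecFinset d.1, κ (trunkPart d c) * Φ (prunePart d c) =
        ∑ c ∈ cutsPrecFinset d.1, κ' (trunkPart d c) * Φ (prunePart d c))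
    {d : PTree × List A} (hd : GoodTree d) : κ [d] = κ' [d] := by
  classical
  induction hn : numInternal d.1 using Nat.strong_induction_on generalizing d with
  | _ n ih =>
    have htrunk (c) (hc : c ∈ (cutsPrecFinset d.1).erase ∅) :
        κ (trunkPart d c) = κ' (trunkPart d c) := by
      obtain ⟨hne, hc⟩ := Finset.mem_erase.1 hc
      have hcut := (mem_cutsPrecFinset.1 hc).1
      have hgood := hd.trunk hcut
      rw [trunkPart] at hgood ⊢
      split_ifs at hgood ⊢
      · exact hnil
      · exact ih _ (hn ▸ numInternal_trunkTree_lt hcut hne) (hgood _ (List.mem_singleton_self _))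
          rfl
    have h := hsum d hd
    rw [← Finset.add_sum_erase _ _ (empty_mem_cutsPrecFinset d.1),
      ← Finset.add_sum_erase _ _ (empty_mem_cutsPrecFinset d.1),
      Finset.sum_congr rfl fun c hc => by rw [htrunk c hc]] at h
    simpa [trunkPart_empty hd, prunePart_empty, hΦ] using h

end Splittings

section Character

variable {A : Type*} [Ring A] (φ : A → ℂ)

theorem charD_nil : charD φ [] = 1 := rfl

open Classical in
theorem charD_singleton {d : PTree × List A} (hd : GoodTree d) :
    charD φ [d] = if IsCorolla d.1 then phiPi φ d.1 d.2 else 0 := by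
  rw [charD, List.map_singleton, List.prod_singleton]
  split_ifs with h
  · rw [phiPi_corolla φ h _ hd.length_add_one]
  · rfl

theorem charD_singleton_eq_zero {d : PTree × List A} (hd : ¬ IsCorolla d.1) :
    charD φ [d] = 0 := by
  simp [charD, hd]

end Character

section Free

theorem IsCorolla.isPST {t : PTree} (ht : IsCorolla t) : IsPST t := by
  obtain ⟨m, hm, rfl⟩ := ht
  refine ⟨List.replicate (m - 1) leaf, ?_⟩
  rw [corolla, ← List.replicate_succ, Nat.sub_add_cancel (by omega)]

theorem not_isPST_leaf : ¬ IsPST leaf := by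
  rintro ⟨cs, hcs⟩
  simp at hcs

theorem not_isInternalAt_zero_cons {cs : List PTree} {v : List ℕ} :
    ¬ IsInternalAt (node (leaf :: cs)) (0 :: v) := by
  rintro ⟨ds, hsub, hds⟩
  cases v with
  | nil => simp [subtreeAt, hds.symm] at hsub
  | cons => simp [subtreeAt] at hsub

theorem cutsPrecFinset_of_isPST {t : PTree} (ht : IsPST t) :
    cutsPrecFinset t = (cutsFinset t).erase {[]} := by
  obtain ⟨cs, rfl⟩ := ht
  ext c
  rw [mem_cutsPrecFinset, Finset.mem_erase, and_comm]
  refine and_congr_left fun hc => ⟨?_, fun hne v hv hleft => hne ?_⟩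
  · rintro h rfl
    exact h [] (Finset.mem_singleton_self _) onLeftBranch_nil
  · cases v with
    | nil => exact eq_singleton_nil_of_nil_mem_cut hc hv
    | cons i v =>
      have hv := (mem_cutsFinset.1 hc).1 _ hv
      rw [OnLeftBranch, List.length_cons, List.replicate_succ, List.cons.injEq] at hleft
      rw [hleft.1] at hv
      exact absurd hv not_isInternalAt_zero_cons

theorem isPST_trunkTree {t : PTree} (ht : IsPST t) {c : Finset (List ℕ)} (hc : c ∈ cutsFinset t)
    (hne : c ≠ {[]}) : IsPST (trunkTree t c) := by
  obtain ⟨cs, rfl⟩ := ht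
  obtain hnil | ⟨f, hf, rfl⟩ := cut_cases hc
  · exact absurd hnil hne
  · have hfirst : f ⟨0, by simp⟩ = ∅ := by simpa [cutsFinset_leaf] using hf ⟨0, by simp⟩
    rw [trunkTree_join]
    refine ⟨List.ofFn fun i : Fin cs.length => trunkTree cs[i] (f i.succ), ?_⟩
    rw [List.ofFn_succ]
    congr 2
    exact (congrArg (trunkTree leaf) hfirst).trans (trunkTree_empty _)

theorem eq_leaf_or_eq_singleton_nil_of_trunkTree_eq_leaf {t : PTree} {c : Finset (List ℕ)}
    (hc : c ∈ cutsFinset t) (h : trunkTree t c = leaf) : t = leaf ∨ c = {[]} := by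
  obtain ⟨cs⟩ := t
  obtain hnil | ⟨f, -, rfl⟩ := cut_cases hc
  · exact Or.inr hnil
  · rw [trunkTree_join, node.injEq, List.ofFn_eq_nil_iff, List.length_eq_zero_iff] at h
    exact Or.inl (congrArg node h)

theorem isPST_of_trunkTree {t : PTree} {c : Finset (List ℕ)} (hc : c ∈ cutsPrecFinset t)
    (h : IsPST (trunkTree t c)) : IsPST t := by
  obtain ⟨hc, hleft⟩ := mem_cutsPrecFinset.1 hc
  obtain ⟨cs⟩ := t
  obtain rfl | ⟨f, hf, rfl⟩ := cut_cases hc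
  · exact absurd (trunkTree_singleton_nil _ ▸ h) not_isPST_leaf
  · obtain ⟨ds, h⟩ := h
    rw [trunkTree_join] at h
    cases cs with
    | nil => simp at h
    | cons c cs =>
      rw [node.injEq, List.ofFn_succ, List.cons.injEq] at h
      obtain hc | hnil := eq_leaf_or_eq_singleton_nil_of_trunkTree_eq_leaf (hf 0) h.1
      · exact ⟨cs, congrArg (fun x => node (x :: cs)) hc⟩
      · refine absurd rfl (hleft [0] ?_)
        rw [mem_join]
        exact ⟨0, [], by simp [hnil], rfl⟩

variable {A : Type*} [Ring A] (φ : A → ℂ)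

open Classical in
/-- The left half-shuffle logarithm of `charD φ` on forests of at most one tree: minus the value
at `-1` of the one-parameter group `forestPoly φ`, restricted to prime Schröder trees. -/
noncomputable def precLog (F : DForest A) : ℂ :=
  if ∃ d, F = [d] ∧ IsPST d.1 then -(forestPoly φ F).eval (-1) else 0

theorem precLog_trunkPart_of_isPST {d : PTree × List A} {c : Finset (List ℕ)}
    (h : IsPST (trunkTree d.1 c)) :
    precLog φ (trunkPart d c) = -(forestPoly φ (trunkPart d c)).eval (-1) := by
  have hne : trunkTree d.1 c ≠ leaf := fun he => not_isPST_leaf (he ▸ h)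
  rw [precLog, trunkPart, if_neg hne, if_pos ⟨_, rfl, h⟩]

theorem precLog_trunkPart_of_not_isPST {d : PTree × List A} {c : Finset (List ℕ)}
    (h : ¬ IsPST (trunkTree d.1 c)) : precLog φ (trunkPart d c) = 0 := by
  rw [precLog, if_neg]
  rintro ⟨e, he, hpst⟩
  rw [trunkPart] at he
  split_ifs at he
  rw [List.singleton_inj] at he
  subst he
  exact h hpst

theorem sum_precLog_mul_charD {d : PTree × List A} (hd : GoodTree d) :
    ∑ c ∈ cutsPrecFinset d.1, precLog φ (trunkPart d c) * charD φ (prunePart d c) =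
      charD φ [d] := by
  by_cases hp : IsPST d.1
  · have hroot : {[]} ∈ cutsFinset d.1 := by
      obtain ⟨cs, hcs⟩ := hp
      exact hcs ▸ singleton_nil_mem_cutsFinset (by simp)
    have hgroup := sum_cuts_eval φ hd (-1) 1
    rw [neg_add_cancel, eval_zero_treePoly φ hd, ← Finset.add_sum_erase _ _ hroot,
      trunkPart_singleton_nil, prunePart_singleton_nil hd, forestPoly_nil, eval_one, one_mul,
      ← charD_eq_eval_one_forestPoly φ (goodForest_singleton hd)] at hgroup
    rw [cutsPrecFinset_of_isPST hp, eq_neg_of_add_eq_zero_left hgroup, ← Finset.sum_neg_distrib]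
    refine Finset.sum_congr rfl fun c hc => ?_
    obtain ⟨hne, hc⟩ := Finset.mem_erase.1 hc
    rw [precLog_trunkPart_of_isPST φ (isPST_trunkTree hp hc hne), neg_mul,
      charD_eq_eval_one_forestPoly φ (hd.prune hc)]
  · rw [charD_singleton_eq_zero φ fun hcorolla => hp hcorolla.isPST]
    refine Finset.sum_eq_zero fun c hc => ?_
    rw [precLog_trunkPart_of_not_isPST φ fun h => hp (isPST_of_trunkTree hc h), zero_mul]

theorem neg_eval_neg_one_treePoly {d : PTree × List A} (hd : GoodTree d) :
    -(treePoly φ d).eval (-1) = (-1) ^ (numInternal d.1 - 1) * phiPi φ d.1 d.2 := by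
  obtain ⟨k, hk⟩ := Nat.exists_eq_succ_of_ne_zero hd.numInternal_pos.ne'
  rw [treePoly, eval_mul, eval_C, eval_neg_one_orderPoly, hk, Nat.succ_sub_one, pow_succ]
  ring

open Classical in
theorem eq_of_charD_eq_ePrecD {κ : DForest A → ℂ} (hκ : IsInfCharD κ)
    (h : ∀ F, GoodForest F → charD φ F = ePrecD κ F) {d : PTree × List A} (hd : GoodTree d) :
    κ [d] = if IsPST d.1 then (-1) ^ (numInternal d.1 - 1) * phiPi φ d.1 d.2 else 0 := by
  have hnil : κ [] = precLog φ [] := by simp [hκ.1, precLog]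
  rw [eq_of_sum_cutsPrec_eq hnil (charD_nil φ) (fun e he =>
    (eq_sum_cutsPrec hκ.1 h he).symm.trans (sum_precLog_mul_charD φ he).symm) hd, precLog,
    forestPoly_singleton, neg_eval_neg_one_treePoly φ hd]
  simp

end Free

section Boolean

theorem isBST_node {c : PTree} {cs : List PTree} :
    IsBST (node (c :: cs)) ↔ (∀ x ∈ cs, x = leaf) ∧ cs ≠ [] ∧ IsBST c := by
  constructor
  · intro h
    generalize ht : node (c :: cs) = t at h
    induction h generalizing c cs with
    | single => simp at ht
    | graft t m _ hm ih =>
      obtain ⟨ds⟩ := t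
      cases ds with
      | nil =>
        obtain ⟨k, rfl⟩ : ∃ k, m = k + 2 := ⟨m - 2, by omega⟩
        rw [graftLeftmost, corolla, node.injEq, List.replicate_succ, List.cons.injEq] at ht
        obtain ⟨rfl, rfl⟩ := ht
        exact ⟨fun x hx => List.eq_of_mem_replicate hx, by simp, IsBST.single⟩
      | cons d ds =>
        rw [graftLeftmost, node.injEq, List.cons.injEq] at ht
        obtain ⟨rfl, rfl⟩ := ht
        obtain ⟨hleaf, hne, hd⟩ := ih rfl
        exact ⟨hleaf, hne, IsBST.graft _ _ hd hm⟩
  · rintro ⟨hleaf, hne, hc⟩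
    induction hc with
    | single =>
      have hcorolla := IsBST.graft leaf (cs.length + 1) IsBST.single
        (by have := List.length_pos_iff.2 hne; omega)
      rwa [graftLeftmost, corolla, List.replicate_succ,
        ← List.eq_replicate_length.2 hleaf] at hcorolla
    | graft t m _ hm ih => exact IsBST.graft _ m ih hm

theorem trunkTree_singleton (t : PTree) (v : List ℕ) : trunkTree t {v} = replaceLeaf v t := by
  simp [trunkTree_eq, pruneList]

theorem numInternal_corolla {t : PTree} (ht : IsCorolla t) : numInternal t = 1 := by
  obtain ⟨m, hm, rfl⟩ := ht
  rw [corolla, numInternal_node_eq_sum_map (by simp; omega)]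
  simp [numInternal_leaf]

theorem not_isCorolla_cons {c : PTree} {cs : List PTree} (hc : c ≠ leaf) :
    ¬ IsCorolla (node (c :: cs)) := by
  rintro ⟨m, -, h⟩
  rw [corolla, node.injEq] at h
  exact hc (List.eq_of_mem_replicate (h ▸ List.mem_cons_self))

theorem isCorolla_node_leaf_cons_iff {cs : List PTree} (hs : IsSchroder (node (leaf :: cs))) :
    IsCorolla (node (leaf :: cs)) ↔ ∀ x ∈ cs, x = leaf := by
  rw [isCorolla_node_iff (by simp) hs, List.forall_mem_cons, and_iff_right rfl]

theorem tail_ne_nil_of_isSchroder {c : PTree} {cs : List PTree} (hs : IsSchroder (node (c :: cs))) :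
    cs ≠ [] := by
  rintro rfl
  simpa using (isSchroder_node_iff (by simp)).1 hs

theorem isBST_node_leaf_cons_iff {cs : List PTree} (hs : IsSchroder (node (leaf :: cs))) :
    IsBST (node (leaf :: cs)) ↔ IsCorolla (node (leaf :: cs)) := by
  rw [isBST_node, isCorolla_node_leaf_cons_iff hs]
  simp [tail_ne_nil_of_isSchroder hs, IsBST.single]

theorem singleton_nil_mem_cutsSuccFinset {cs : List PTree} (hcs : cs ≠ []) :
    {[]} ∈ cutsSuccFinset (node cs) :=
  mem_cutsSuccFinset.2
    ⟨singleton_nil_mem_cutsFinset hcs, [], Finset.mem_singleton_self _, onLeftBranch_nil⟩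

theorem singleton_zero_mem_cutsFinset {c : PTree} {cs : List PTree} (hc : c ≠ leaf) :
    {[0]} ∈ cutsFinset (node (c :: cs)) := by
  have hinternal : IsInternalAt (node (c :: cs)) [0] := by
    obtain ⟨ds⟩ := c
    exact ⟨ds, by simp [subtreeAt], by simpa using hc⟩
  simp [mem_cutsFinset, hinternal]

theorem trunkTree_singleton_zero (c : PTree) (cs : List PTree) :
    trunkTree (node (c :: cs)) {[0]} = node (leaf :: cs) := by
  rw [trunkTree_singleton]
  simp [replaceLeaf]

theorem subtree!_node_cons_zero (c : PTree) (cs : List PTree) :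
    subtree! (node (c :: cs)) [0] = c := by
  simp [subtree!, subtreeAt]

theorem numInternal_node_cons {c : PTree} {cs : List PTree} (hc : c ≠ leaf) :
    numInternal (node (leaf :: cs)) + numInternal c = numInternal (node (c :: cs)) := by
  have h := numInternal_trunk _ (singleton_zero_mem_cutsFinset (cs := cs) hc)
  rwa [trunkTree_singleton_zero, Finset.sum_singleton, subtree!_node_cons_zero] at h

theorem trunkPart_singleton_zero {A : Type*} [Zero A] (c : PTree) (cs : List PTree) (w : List A) :
    trunkPart (node (c :: cs), w) {[0]} =
      [(node (leaf :: cs), trunkWord (node (c :: cs)) {[0]} w)] := by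
  rw [trunkPart, trunkTree_singleton_zero, if_neg (by simp)]

theorem prunePart_singleton_zero {A : Type*} (c : PTree) (cs : List PTree) (w : List A) :
    prunePart (node (c :: cs), w) {[0]} = [(c, subword (node (c :: cs)) [0] w)] := by
  rw [prunePart_singleton, subtree!_node_cons_zero]

variable {A : Type*} [Ring A] (φ : A → ℂ)

theorem phiPi_node_cons {c : PTree} {cs : List PTree} (hc : c ≠ leaf) {w : List A}
    (hw : w.length + 1 = numLeaves (node (c :: cs))) :
    phiPi φ (node (leaf :: cs)) (trunkWord (node (c :: cs)) {[0]} w) *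
      phiPi φ c (subword (node (c :: cs)) [0] w) = phiPi φ (node (c :: cs)) w := by
  have h := phiPi_trunk φ _ (singleton_zero_mem_cutsFinset hc) w hw
  rwa [trunkTree_singleton_zero, Finset.prod_singleton, subtree!_node_cons_zero] at h

theorem charD_trunkPart_mul_eq_zero {β : DForest A → ℂ} (hβ : IsInfCharD β) {c : PTree}
    {cs : List PTree} {w : List A} {s : Finset (List ℕ)} (hs : s ∈ cutsSuccFinset (node (c :: cs)))
    (hroot : s ≠ {[]}) (hfirst : s ≠ {[0]}) :
    charD φ (trunkPart (node (c :: cs), w) s) * β (prunePart (node (c :: cs), w) s) = 0 := by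
  obtain ⟨hs, v, hv, hleft⟩ := mem_cutsSuccFinset.1 hs
  by_cases hcard : s.card = 1
  · obtain ⟨u, rfl⟩ := Finset.card_eq_one.1 hcard
    obtain rfl := Finset.mem_singleton.1 hv
    match v, hleft with
    | [], _ => exact absurd rfl hroot
    | [i], hleft =>
      rw [OnLeftBranch] at hleft
      exact absurd (by rw [hleft]; rfl) hfirst
    | i :: j :: v, hleft =>
      rw [OnLeftBranch, List.length_cons, List.length_cons, List.replicate_succ,
        List.replicate_succ, List.cons.injEq, List.cons.injEq] at hleft
      obtain ⟨rfl, rfl, -⟩ := hleft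
      obtain ⟨ds⟩ := c
      cases ds with
      | nil => exact absurd ((mem_cutsFinset.1 hs).1 _ hv) not_isInternalAt_zero_cons
      | cons d ds =>
        have htrunk : trunkTree (node (node (d :: ds) :: cs)) {0 :: 0 :: v} =
            node (node (replaceLeaf v d :: ds) :: cs) := by
          rw [trunkTree_singleton]
          simp [replaceLeaf]
        rw [trunkPart, htrunk, if_neg (by simp),
          charD_singleton_eq_zero φ (not_isCorolla_cons (by simp)), zero_mul]
  · rw [hβ.eq_zero_of_length_ne_one, mul_zero]
    rwa [(prunePart_perm _ _).length_eq, List.length_map, Finset.length_toList]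

theorem eq_charD_of_charD_eq_eSuccD {β : DForest A → ℂ} (hβ : IsInfCharD β)
    (h : ∀ F, GoodForest F → charD φ F = eSuccD β F) {cs : List PTree} {w : List A}
    (hd : GoodTree (node (leaf :: cs), w)) :
    β [(node (leaf :: cs), w)] = charD φ [(node (leaf :: cs), w)] := by
  rw [eq_sum_cutsSucc hβ.1 h hd, Finset.sum_eq_single_of_mem _
    (singleton_nil_mem_cutsSuccFinset (by simp)), trunkPart_singleton_nil,
    prunePart_singleton_nil hd, charD_nil, one_mul]
  intro s hs hroot
  refine charD_trunkPart_mul_eq_zero φ hβ hs hroot ?_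
  rintro rfl
  exact not_isInternalAt_zero_cons
    ((mem_cutsFinset.1 (mem_cutsSuccFinset.1 hs).1).1 [0] (Finset.mem_singleton_self _))

theorem eq_neg_charD_mul_of_charD_eq_eSuccD {β : DForest A → ℂ} (hβ : IsInfCharD β)
    (h : ∀ F, GoodForest F → charD φ F = eSuccD β F) {c : PTree} (hc : c ≠ leaf)
    {cs : List PTree} {w : List A} (hd : GoodTree (node (c :: cs), w)) :
    β [(node (c :: cs), w)] = -(charD φ [(node (leaf :: cs), trunkWord (node (c :: cs)) {[0]} w)] *
      β [(c, subword (node (c :: cs)) [0] w)]) := by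
  have hfirst : {[0]} ∈ cutsSuccFinset (node (c :: cs)) :=
    mem_cutsSuccFinset.2 ⟨singleton_zero_mem_cutsFinset hc, [0], Finset.mem_singleton_self _, rfl⟩
  have hpair : ({{[]}, {[0]}} : Finset (Finset (List ℕ))) ⊆ cutsSuccFinset (node (c :: cs)) := by
    simp [Finset.insert_subset_iff, hfirst, singleton_nil_mem_cutsSuccFinset]
  have hrec := eq_sum_cutsSucc hβ.1 h hd
  rw [← Finset.sum_subset hpair, Finset.sum_pair (by simp), trunkPart_singleton_nil,
    prunePart_singleton_nil hd, charD_nil, one_mul, trunkPart_singleton_zero,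
    prunePart_singleton_zero, charD_singleton_eq_zero φ (not_isCorolla_cons hc)] at hrec
  · exact eq_neg_of_add_eq_zero_left hrec.symm
  · intro s hs hpair
    rw [Finset.mem_insert, Finset.mem_singleton, not_or] at hpair
    exact charD_trunkPart_mul_eq_zero φ hβ hs hpair.1 hpair.2

open Classical in
theorem eq_of_charD_eq_eSuccD {β : DForest A → ℂ} (hβ : IsInfCharD β)
    (h : ∀ F, GoodForest F → charD φ F = eSuccD β F) {d : PTree × List A} (hd : GoodTree d) :
    β [d] = if IsBST d.1 then (-1) ^ (numInternal d.1 - 1) * phiPi φ d.1 d.2 else 0 := by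
  obtain ⟨t, w⟩ := d
  induction t generalizing w with
  | node cs ih =>
    obtain ⟨c, cs, rfl⟩ := List.exists_cons_of_ne_nil (l := cs) (by simpa using hd.2.1)
    by_cases hc : c = leaf
    · subst hc
      rw [eq_charD_of_charD_eq_eSuccD φ hβ h hd, charD_singleton φ hd]
      simp only [isBST_node_leaf_cons_iff hd.1]
      split_ifs with hcorolla
      · simp [numInternal_corolla hcorolla]
      · rfl
    · have hcut := singleton_zero_mem_cutsFinset (cs := cs) hc
      have hrest : GoodTree (node (leaf :: cs), trunkWord (node (c :: cs)) {[0]} w) :=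
        hd.trunk hcut _ (by simp [trunkPart_singleton_zero])
      have hfirst : GoodTree (c, subword (node (c :: cs)) [0] w) :=
        hd.prune hcut _ (by simp [prunePart_singleton_zero])
      have hcorolla := isCorolla_node_leaf_cons_iff hrest.1
      rw [eq_neg_charD_mul_of_charD_eq_eSuccD φ hβ h hc hd, charD_singleton φ hrest,
        ih c List.mem_cons_self _ hfirst]
      simp only [isBST_node, hcorolla]
      by_cases hbst : (∀ x ∈ cs, x = leaf) ∧ IsBST c
      · obtain ⟨k, hk⟩ := Nat.exists_eq_succ_of_ne_zero hfirst.numInternal_pos.ne'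
        dsimp only at hk
        rw [if_pos hbst.1, if_pos hbst.2, if_pos ⟨hbst.1, tail_ne_nil_of_isSchroder hd.1, hbst.2⟩,
          ← phiPi_node_cons φ hc hd.length_add_one, ← numInternal_node_cons hc,
          numInternal_corolla (hcorolla.2 hbst.1), hk, Nat.succ_sub_one, Nat.add_sub_cancel_left,
          pow_succ]
        ring
      · have hnode : ¬ ((∀ x ∈ cs, x = leaf) ∧ cs ≠ [] ∧ IsBST c) := by tauto
        rw [if_neg hnode, neg_eq_zero, mul_eq_zero,
          ite_eq_right_iff, ite_eq_right_iff]
        tauto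

end Boolean

section Monotone

theorem splitPow_congr {A : Type*} {S : DForest A → List (DForest A × DForest A)}
    (hS : IsSplitting S) {α α' : DForest A → ℂ} {n : ℕ}
    (h : ∀ F, GoodForest F → forestInternal F < n → α F = α' F) (k : ℕ) {F : DForest A}
    (hF : GoodForest F) (hn : forestInternal F < n) : splitPow S α k F = splitPow S α' k F := by
  induction k generalizing F with
  | zero => rfl
  | succ k ih =>
    refine congrArg List.sum (List.map_congr_left fun pr hpr => ?_)
    obtain ⟨hfst, hsnd, hadd⟩ := hS F hF pr hpr
    rw [h _ hfst (by omega), ih hsnd (by omega)]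

theorem splitPow_add_two_congr {A : Type*} {S : DForest A → List (DForest A × DForest A)}
    (hS : IsSplitting S) {α α' : DForest A → ℂ} (hα : α [] = 0) (hα' : α' [] = 0) {n : ℕ}
    (h : ∀ F, GoodForest F → forestInternal F < n → α F = α' F) (k : ℕ) {F : DForest A}
    (hF : GoodForest F) (hn : forestInternal F = n) :
    splitPow S α (k + 2) F = splitPow S α' (k + 2) F := by
  refine congrArg List.sum (List.map_congr_left fun pr hpr => ?_)
  obtain ⟨hfst, hsnd, hadd⟩ := hS F hF pr hpr
  by_cases hfst0 : forestInternal pr.1 = 0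
  · rw [hfst.eq_nil hfst0, hα, hα', zero_mul, zero_mul]
  by_cases hsnd0 : forestInternal pr.2 = 0
  · rw [splitPow_eq_zero hS hα hsnd (by omega), splitPow_eq_zero hS hα' hsnd (by omega),
      mul_zero, mul_zero]
  · rw [h _ hfst (by omega), splitPow_congr hS h _ hsnd (by omega)]

theorem splitPow_one {A : Type*} [Zero A] {α : DForest A → ℂ} {d : PTree × List A}
    (hd : GoodTree d) : splitPow forestSplits α 1 [d] = α [d] := by
  change ((forestSplits [d]).map fun pr => α pr.1 * epsD pr.2).sum = _
  rw [forestSplits, sum_map_flatMap_toList,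
    Finset.sum_eq_single_of_mem _ (empty_mem_cutsFinset d.1)]
  · simp [forestSplits, trunkPart_empty hd, prunePart_empty, epsD]
  · intro c _ hne
    simp [forestSplits, epsD, ← List.length_eq_zero_iff, (prunePart_perm _ _).length_eq,
      hne]

variable {A : Type*} [Ring A] (φ : A → ℂ)

/-- The infinitesimal generator of the one-parameter group `forestPoly`, i.e. the convolution
logarithm of `charD φ`. -/
noncomputable def generator (F : DForest A) : ℂ := (derivative (forestPoly φ F)).eval 0

theorem generator_nil : generator φ [] = 0 := by
  simp [generator, forestPoly_nil]

theorem generator_singleton (d : PTree × List A) :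
    generator φ [d] = omegaSk d.1 * phiPi φ d.1 d.2 := by
  rw [generator, forestPoly_singleton, treePoly, derivative_C_mul, eval_mul, eval_C,
    eval_zero_derivative_orderPoly, mul_comm]

theorem generator_eq_zero {F : DForest A} (hF : GoodForest F) (h : F.length ≠ 1) :
    generator φ F = 0 := by
  match F, h with
  | [], _ => exact generator_nil φ
  | d :: e :: F, _ =>
    have hd := goodForest_cons.1 hF
    have he := goodForest_cons.1 hd.2
    rw [generator, forestPoly, List.map_cons, List.prod_cons, List.map_cons, List.prod_cons,
      derivative_mul, eval_add, eval_mul, eval_mul, eval_mul, eval_zero_treePoly φ hd.1,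
      eval_zero_treePoly φ he.1]
    simp

theorem derivative_forestPoly {F : DForest A} (hF : GoodForest F) :
    derivative (forestPoly φ F) =
      ((forestSplits F).map fun pr => C (generator φ pr.1) * forestPoly φ pr.2).sum := by
  refine Polynomial.funext fun y => ?_
  have hgroup : (forestPoly φ F).comp (X + C y) =
      ((forestSplits F).map fun pr => forestPoly φ pr.1 * C ((forestPoly φ pr.2).eval y)).sum := by
    refine Polynomial.funext fun x => ?_
    rw [eval_comp, eval_add, eval_X, eval_C, ← convD_forestPoly φ hF, convD,
      ← coe_evalRingHom x, map_list_sum, List.map_map]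
    refine congrArg List.sum (List.map_congr_left fun pr _ => ?_)
    simp
  have hderiv := congrArg (fun p => (derivative p).eval 0) hgroup
  simp only [derivative_comp, derivative_add, derivative_X, derivative_C, add_zero, one_mul,
    eval_comp, eval_add, eval_X, eval_C, zero_add, map_list_sum, List.map_map] at hderiv
  rw [hderiv, ← coe_evalRingHom 0, ← coe_evalRingHom y, map_list_sum, map_list_sum, List.map_map,
    List.map_map]
  refine congrArg List.sum (List.map_congr_left fun pr _ => ?_)
  simp [generator]

theorem splitPow_generator (k : ℕ) {F : DForest A} (hF : GoodForest F) :
    splitPow forestSplits (generator φ) k F = (derivative^[k] (forestPoly φ F)).eval 0 := by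
  induction k generalizing F with
  | zero => rw [splitPow, Function.iterate_zero_apply, eval_zero_forestPoly φ hF]
  | succ k ih =>
    rw [splitPow, Function.iterate_succ_apply, derivative_forestPoly φ hF,
      ← Module.End.coe_pow, map_list_sum, ← coe_evalRingHom 0, map_list_sum, List.map_map,
      List.map_map]
    refine congrArg List.sum (List.map_congr_left fun pr hpr => ?_)
    rw [ih (mem_forestSplits hF hpr).2.1]
    simp [Module.End.coe_pow]

theorem charD_eq_expStarD_generator {F : DForest A} (hF : GoodForest F) :
    charD φ F = expStarD (generator φ) F := by
  have hN : forestInternal F < max (forestInternal F) (forestPoly φ F).natDegree + 1 := by omega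
  simp only [expStarD, convPowD_eq_splitPow]
  rw [finsum_splitPow isSplitting_forestSplits (generator_nil φ) _ hF hN,
    charD_eq_eval_one_forestPoly φ hF,
    eval_eq_sum_range' (n := max (forestInternal F) (forestPoly φ F).natDegree + 1) (by omega)]
  refine Finset.sum_congr rfl fun k _ => ?_
  rw [splitPow_generator φ k hF, one_pow, mul_one, ← coeff_zero_eq_eval_zero,
    coeff_iterate_derivative, zero_add, Nat.descFactorial_self, nsmul_eq_mul,
    inv_mul_cancel_left₀ (by exact_mod_cast k.factorial_ne_zero)]

theorem eq_generator_of_charD_eq_expStarD {ρ : DForest A → ℂ} (hρ : IsInfCharD ρ)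
    (h : ∀ F, GoodForest F → charD φ F = expStarD ρ F) {F : DForest A} (hF : GoodForest F) :
    ρ F = generator φ F := by
  induction hn : forestInternal F using Nat.strong_induction_on generalizing F with
  | _ n ih =>
    by_cases hlen : F.length = 1
    · obtain ⟨d, rfl⟩ := List.length_eq_one_iff.1 hlen
      have hd : GoodTree d := hF d (List.mem_singleton_self d)
      have hexp := (h _ hF).symm.trans (charD_eq_expStarD_generator φ hF)
      have hN : forestInternal [d] < n + 2 := by omega
      simp only [expStarD, convPowD_eq_splitPow] at hexp
      rw [finsum_splitPow isSplitting_forestSplits (generator_nil φ) _ hF hN,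
        finsum_splitPow isSplitting_forestSplits hρ.1 _ hF hN, Finset.sum_range_succ',
        Finset.sum_range_succ', Finset.sum_range_succ' _ (n + 1), Finset.sum_range_succ' _ n,
        Finset.sum_congr rfl fun k _ => by rw [splitPow_add_two_congr isSplitting_forestSplits hρ.1
          (generator_nil φ) (fun G hG hlt => ih _ hlt hG rfl) k hF hn], zero_add,
        splitPow_one hd, splitPow_one hd] at hexp
      simpa [splitPow] using hexp
    · rw [hρ.eq_zero_of_length_ne_one hlen, generator_eq_zero φ hF hlen]

end Monotone

section TreeSums

/-- Nonempty ordered forests of Schröder trees with `n + 1` leaves in total. -/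
def SF (n : ℕ) : Set (List PTree) :=
  {cs | cs ≠ [] ∧ (∀ c ∈ cs, IsSchroder c) ∧ (cs.map numLeaves).sum = n + 1}

variable {n : ℕ}

theorem mem_ST {t : PTree} : t ∈ ST n ↔ IsSchroder t ∧ numLeaves t = n + 1 := Iff.rfl

theorem mem_SF {cs : List PTree} : cs ∈ SF n ↔
    cs ≠ [] ∧ (∀ c ∈ cs, IsSchroder c) ∧ (cs.map numLeaves).sum = n + 1 := Iff.rfl

theorem singleton_mem_SF {c : PTree} : [c] ∈ SF n ↔ c ∈ ST n := by
  simp [mem_SF, mem_ST]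

theorem length_le_sum_numLeaves (cs : List PTree) : cs.length ≤ (cs.map numLeaves).sum := by
  simpa using List.length_le_sum_of_one_le (cs.map numLeaves)
    (List.forall_mem_map.2 fun c _ => numLeaves_pos c)

theorem cons_mem_SF {c : PTree} {cs : List PTree} (hcs : cs ≠ []) :
    c :: cs ∈ SF n ↔ ∃ j : Fin n, c ∈ ST j ∧ cs ∈ SF (n - 1 - j) := by
  simp only [mem_SF, mem_ST, List.forall_mem_cons, List.map_cons, List.sum_cons]
  constructor
  · rintro ⟨-, ⟨hc, hforall⟩, hsum⟩
    have := numLeaves_pos c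
    have := length_le_sum_numLeaves cs
    have := List.length_pos_iff.2 hcs
    exact ⟨⟨numLeaves c - 1, by omega⟩, ⟨hc, by simp only; omega⟩, hcs, hforall,
      by simp only; omega⟩
  · rintro ⟨j, ⟨hc, hleaves⟩, -, hforall, hsum⟩
    exact ⟨by simp, ⟨hc, hforall⟩, by omega⟩

theorem mem_ST_zero {t : PTree} : t ∈ ST 0 ↔ t = leaf := by
  obtain ⟨cs⟩ := t
  rw [mem_ST]
  rcases eq_or_ne cs [] with rfl | hcs
  · simp [numLeaves_leaf, IsSchroder.leaf]
  · have := length_le_sum_numLeaves cs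
    rw [isSchroder_node_iff hcs, numLeaves_node_eq_sum_map hcs, node.injEq]
    exact iff_of_false (by omega) hcs

theorem node_mem_ST (hn : n ≠ 0) {cs : List PTree} :
    node cs ∈ ST n ↔ cs ∈ SF n ∧ 2 ≤ cs.length := by
  rcases eq_or_ne cs [] with rfl | hcs
  · simp [mem_ST, mem_SF, numLeaves_leaf, hn]
  · rw [mem_ST, isSchroder_node_iff hcs, numLeaves_node_eq_sum_map hcs, mem_SF]
    tauto

theorem finite_ST_and_SF (n : ℕ) : (ST n).Finite ∧ (SF n).Finite := by
  induction n using Nat.strong_induction_on with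
  | _ n ih =>
    have hforests : {cs | cs ∈ SF n ∧ 2 ≤ cs.length}.Finite := by
      refine Set.Finite.subset (Set.finite_iUnion fun j : Fin n =>
        Set.Finite.image2 List.cons (ih j j.2).1 (ih (n - 1 - j) (by omega)).2) ?_
      rintro cs ⟨hcs, hlength⟩
      match cs, hlength with
      | c :: d :: cs, _ =>
        obtain ⟨j, hc, hcs⟩ := (cons_mem_SF (by simp)).1 hcs
        exact Set.mem_iUnion.2 ⟨j, c, hc, _, hcs, rfl⟩
    have htrees : (ST n).Finite := by
      refine Set.Finite.subset ((Set.finite_singleton leaf).union (hforests.image node)) ?_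
      rintro ⟨cs⟩ ht
      rcases eq_or_ne n 0 with rfl | hn
      · exact Or.inl (mem_ST_zero.1 ht)
      · exact Or.inr ⟨cs, (node_mem_ST hn).1 ht, rfl⟩
    refine ⟨htrees, Set.Finite.subset ((htrees.image fun c => [c]).union hforests) ?_⟩
    intro cs hcs
    match cs, hcs with
    | [], hcs => exact absurd rfl hcs.1
    | [c], hcs => exact Or.inl ⟨c, singleton_mem_SF.1 hcs, rfl⟩
    | c :: d :: cs, hcs => exact Or.inr ⟨hcs, by simp⟩

/-- `ST n` as a finite set. -/
noncomputable def stFinset (n : ℕ) : Finset PTree := (finite_ST_and_SF n).1.toFinset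

/-- `SF n` as a finite set. -/
noncomputable def sfFinset (n : ℕ) : Finset (List PTree) := (finite_ST_and_SF n).2.toFinset

theorem mem_stFinset {t : PTree} : t ∈ stFinset n ↔ t ∈ ST n :=
  Set.Finite.mem_toFinset _

theorem mem_sfFinset {cs : List PTree} : cs ∈ sfFinset n ↔ cs ∈ SF n :=
  Set.Finite.mem_toFinset _

theorem finsum_ST {M : Type*} [AddCommMonoid M] (n : ℕ) (G : PTree → M) :
    ∑ᶠ t ∈ ST n, G t = ∑ t ∈ stFinset n, G t :=
  finsum_mem_eq_finite_toFinset_sum _ _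

theorem stFinset_zero : stFinset 0 = {leaf} := by
  ext t
  rw [mem_stFinset, Finset.mem_singleton, mem_ST_zero]

theorem sum_sfFinset_filter_two_le_length {M : Type*} [AddCommMonoid M] (n : ℕ)
    (G : List PTree → M) :
    ∑ cs ∈ sfFinset n with 2 ≤ cs.length, G cs =
      ∑ j : Fin n, ∑ c ∈ stFinset j, ∑ cs ∈ sfFinset (n - 1 - j), G (c :: cs) := by
  simp_rw [← Finset.sum_product', Finset.sum_sigma']
  symm
  refine Finset.sum_bij (fun x _ => x.2.1 :: x.2.2) ?_ ?_ ?_ ?_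
  · rintro ⟨j, c, cs⟩ h
    simp only [Finset.mem_sigma, Finset.mem_univ, Finset.mem_product, mem_stFinset, mem_sfFinset,
      true_and] at h
    rw [Finset.mem_filter, mem_sfFinset, cons_mem_SF h.2.1]
    exact ⟨⟨j, h⟩, by simpa [Nat.one_le_iff_ne_zero] using h.2.1⟩
  · rintro ⟨j, c, cs⟩ h ⟨j', c', cs'⟩ h' heq
    simp only [Finset.mem_sigma, Finset.mem_univ, Finset.mem_product, mem_stFinset, mem_sfFinset,
      true_and, mem_ST] at h h'
    obtain ⟨rfl, rfl⟩ : c = c' ∧ cs = cs' := by simpa using heq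
    obtain rfl : j = j' := Fin.ext (by have := h.1.2; have := h'.1.2; omega)
    rfl
  · intro cs h
    rw [Finset.mem_filter, mem_sfFinset] at h
    match cs, h with
    | c :: d :: cs, h =>
      obtain ⟨j, hc, hcs⟩ := (cons_mem_SF (by simp)).1 h.1
      exact ⟨⟨j, c, d :: cs⟩, by simp [mem_stFinset, mem_sfFinset, hc, hcs], rfl⟩
  · intro _ _
    rfl

theorem sum_stFinset {M : Type*} [AddCommMonoid M] (hn : n ≠ 0) (G : PTree → M) :
    ∑ t ∈ stFinset n, G t =
      ∑ j : Fin n, ∑ c ∈ stFinset j, ∑ cs ∈ sfFinset (n - 1 - j), G (node (c :: cs)) := by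
  rw [← sum_sfFinset_filter_two_le_length n fun cs => G (node cs)]
  symm
  refine Finset.sum_bij (fun cs _ => node cs) ?_ ?_ ?_ ?_
  · intro cs h
    rw [Finset.mem_filter, mem_sfFinset] at h
    rw [mem_stFinset]
    exact (node_mem_ST hn).2 h
  · exact fun _ _ _ _ => node.inj
  · rintro ⟨cs⟩ h
    refine ⟨cs, ?_, rfl⟩
    rw [Finset.mem_filter, mem_sfFinset]
    exact (node_mem_ST hn).1 (mem_stFinset.1 h)
  · intro _ _
    rfl

theorem sum_sfFinset {M : Type*} [AddCommMonoid M] (n : ℕ) (G : List PTree → M) :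
    ∑ cs ∈ sfFinset n, G cs = ∑ c ∈ stFinset n, G [c] +
      ∑ j : Fin n, ∑ c ∈ stFinset j, ∑ cs ∈ sfFinset (n - 1 - j), G (c :: cs) := by
  rw [← sum_sfFinset_filter_two_le_length n,
    ← Finset.sum_filter_not_add_sum_filter _ fun cs => 2 ≤ cs.length]
  congr 1
  symm
  refine Finset.sum_bij (fun c _ => [c]) ?_ ?_ ?_ ?_
  · intro c h
    rw [Finset.mem_filter, mem_sfFinset, singleton_mem_SF]
    exact ⟨mem_stFinset.1 h, by simp⟩
  · exact fun _ _ _ _ => List.singleton_inj.1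
  · intro cs h
    rw [Finset.mem_filter, mem_sfFinset] at h
    match cs, h with
    | [], h => exact absurd rfl h.1.1
    | [c], h => exact ⟨c, mem_stFinset.2 (singleton_mem_SF.1 h.1), rfl⟩
    | c :: d :: cs, h => simp at h
  · intro _ _
    rfl

theorem prod_segment_cons {A R : Type*} [CommMonoid R] (q : PTree → List A → R) (c : PTree)
    (cs : List PTree) (w : List A) :
    ∏ i : Fin (c :: cs).length, q (c :: cs)[i] (segment (c :: cs) w i) =
      q c (w.take (numLeaves c - 1)) *
        ∏ i : Fin cs.length, q cs[i] (segment cs (w.drop (numLeaves c)) i) := by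
  refine (Fin.prod_univ_succ (n := cs.length) _).trans ?_
  refine congrArg₂ _ ?_ ?_
  · simp [segment]
  · refine Finset.prod_congr rfl fun i _ => congrArg (q _) ?_
    simp [segment, List.drop_drop, add_comm]

/-- The total weight of the Schröder trees decorated by a word. -/
noncomputable def treeSum {A R : Type*} [AddCommMonoid R] (q : PTree → List A → R)
    (w : List A) : R :=
  ∑ t ∈ stFinset w.length, q t w

theorem sum_singleton_rootLetters_mul_prod {A R : Type*} [CommRing R] (q : PTree → List A → R)
    (f : List A → R) (w : List A) :
    ∑ c ∈ stFinset w.length, f (rootLetters [c] w) *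
      ∏ i : Fin [c].length, q [c][i] (segment [c] w i) = treeSum q w • f [] := by
  rw [treeSum, Finset.sum_smul]
  refine Finset.sum_congr rfl fun c hc => ?_
  rw [mem_stFinset, mem_ST] at hc
  rw [prod_segment_cons, rootLetters, hc.2]
  simp [rootLetters, mul_comm]

theorem sum_sfFinset_eq_wordConv {A R : Type*} [CommRing R] (q : PTree → List A → R)
    (f : List A → R) (w : List A) :
    ∑ cs ∈ sfFinset w.length, f (rootLetters cs w) *
      ∏ i : Fin cs.length, q cs[i] (segment cs w i) =
        wordConv f (treeSum q) (treeSum q) w := by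
  induction hw : w.length using Nat.strong_induction_on generalizing f w with
  | _ n ih =>
    subst hw
    rw [sum_sfFinset, wordConv_eq_sum_first_letter]
    congr 1
    · exact sum_singleton_rootLetters_mul_prod q f w
    · refine Finset.sum_congr rfl fun j _ => ?_
      rw [treeSum, List.length_take, min_eq_left j.2.le, Finset.sum_smul]
      refine Finset.sum_congr rfl fun c hc => ?_
      rw [mem_stFinset, mem_ST] at hc
      rw [← ih _ _ _ _ rfl, Finset.smul_sum, List.length_drop]
      · refine Finset.sum_congr (by congr 1; omega) fun cs _ => ?_
        rw [prod_segment_cons, rootLetters, hc.2, Nat.add_sub_cancel,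
          List.take_one_drop_eq_of_lt_length j.2, List.singleton_append, smul_eq_mul]
        simp only [Fin.getElem_fin, List.get_eq_getElem]
        ring
      · rw [List.length_drop]
        have := j.2
        omega

theorem sum_numLeaves_cons {j : Fin n} {c : PTree} {cs : List PTree}
    (hc : c ∈ stFinset j) (hcs : cs ∈ sfFinset (n - 1 - j)) :
    n + 1 = ((c :: cs).map numLeaves).sum := by
  rw [mem_stFinset, mem_ST] at hc
  rw [mem_sfFinset, mem_SF] at hcs
  rw [List.map_cons, List.sum_cons, hc.2, hcs.2.2]
  omega

theorem treeSum_nil {A R : Type*} [AddCommMonoid R] (q : PTree → List A → R) :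
    treeSum q [] = q leaf [] := by
  simp [treeSum, stFinset_zero]

end TreeSums

section Moments

variable {A : Type*} [Ring A] (φ : A → ℂ)

theorem eval_treePoly_node_add_one {cs : List PTree} (hcs : cs ≠ []) {w : List A}
    (hw : w.length + 1 = (cs.map numLeaves).sum) (x : ℂ) :
    (treePoly φ (node cs, w)).eval (x + 1) = (treePoly φ (node cs, w)).eval x +
      φ (rootLetters cs w).prod *
        ∏ i : Fin cs.length, (treePoly φ (cs[i], segment cs w i)).eval x := by
  simp only [treePoly, eval_mul, eval_C, orderPoly_node_add_one hcs, phiPi_node φ hcs w hw,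
    Finset.prod_mul_distrib]
  ring

theorem treePoly_leaf (w : List A) : treePoly φ (leaf, w) = 1 := by
  simp [treePoly, phiPi_leaf, orderPoly_leaf]

theorem eval_zero_treePoly_node {cs : List PTree} (hcs : cs ≠ []) (w : List A) :
    (treePoly φ (node cs, w)).eval 0 = 0 := by
  rw [treePoly, eval_mul, eval_zero_orderPoly_node hcs, mul_zero]

/-- The word counterpart of `forestPoly`: a polynomial interpolating the convolution powers of the
moments, whose value at `1` is the moment itself. -/
noncomputable def momentPoly (w : List A) : ℂ[X] := treeSum (fun t u => treePoly φ (t, u)) w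

theorem eval_momentPoly (x : ℂ) (w : List A) :
    (momentPoly φ w).eval x = treeSum (fun t u => (treePoly φ (t, u)).eval x) w :=
  eval_finsetSum _ _ _

theorem momentPoly_nil : momentPoly φ [] = 1 := by
  rw [momentPoly, treeSum_nil, treePoly_leaf]

theorem eval_momentPoly_zero (w : List A) : (momentPoly φ w).eval 0 = wordOne ℂ w := by
  cases w with
  | nil => simp [momentPoly_nil, wordOne]
  | cons a w =>
    rw [eval_momentPoly, treeSum, sum_stFinset (by simp)]
    refine Finset.sum_eq_zero fun j _ => Finset.sum_eq_zero fun c _ =>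
      Finset.sum_eq_zero fun cs _ => ?_
    rw [eval_zero_treePoly_node φ (by simp)]

theorem eval_momentPoly_add_one (hφ : φ 1 = 1) (x : ℂ) (w : List A) :
    (momentPoly φ w).eval (x + 1) = wordConv (fun u => φ u.prod)
      (fun u => (momentPoly φ u).eval x) (fun u => (momentPoly φ u).eval x) w := by
  simp only [eval_momentPoly]
  rw [← sum_sfFinset_eq_wordConv _ (fun u => φ u.prod), sum_sfFinset,
    sum_singleton_rootLetters_mul_prod (fun t u => (treePoly φ (t, u)).eval x) (fun u => φ u.prod)]
  rw [List.prod_nil, hφ, smul_eq_mul, mul_one]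
  by_cases hw : w = []
  · subst hw
    simp [treeSum_nil, treePoly_leaf]
  · have hn : w.length ≠ 0 := by simpa using hw
    rw [treeSum, sum_stFinset hn, treeSum, sum_stFinset hn]
    simp only [← Finset.sum_add_distrib]
    refine Finset.sum_congr rfl fun j _ => Finset.sum_congr rfl fun c hc =>
      Finset.sum_congr rfl fun cs hcs => ?_
    exact eval_treePoly_node_add_one φ (by simp) (sum_numLeaves_cons hc hcs) x

theorem eval_momentPoly_one (hφ : φ 1 = 1) (w : List A) :
    (momentPoly φ w).eval 1 = φ w.prod := by
  rw [← zero_add 1, eval_momentPoly_add_one φ hφ]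
  simp only [eval_momentPoly_zero]
  exact wordConv_wordOne_gap _ w

theorem wordConv_eval_neg_one (hφ : φ 1 = 1) :
    wordConv (fun u => φ u.prod) (fun u => (momentPoly φ u).eval (-1))
      (fun u => (momentPoly φ u).eval (-1)) = wordOne ℂ := by
  funext w
  rw [← eval_momentPoly_add_one φ hφ, neg_add_cancel, eval_momentPoly_zero]

theorem eval_momentPoly_natCast_add (hφ : φ 1 = 1) (j k : ℕ) (w : List A) :
    (momentPoly φ w).eval (j + k : ℂ) = wordConv (fun u => (momentPoly φ u).eval (j : ℂ))
      (fun u => (momentPoly φ u).eval (k : ℂ)) (fun u => (momentPoly φ u).eval (k : ℂ)) w := by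
  induction j generalizing w with
  | zero =>
    simp only [Nat.cast_zero, zero_add, eval_momentPoly_zero]
    exact (wordConv_wordOne (R := ℂ) _ (fun u => (momentPoly φ u).eval (k : ℂ)) w).symm
  | succ j ih =>
    rw [Nat.cast_succ, add_right_comm, eval_momentPoly_add_one φ hφ]
    simp only [ih, eval_momentPoly_add_one φ hφ]
    exact (wordConv_assoc _ _ _ _ _ w).symm

theorem momentPoly_comp (hφ : φ 1 = 1) (k : ℕ) (w : List A) :
    (momentPoly φ w).comp (X + C (k : ℂ)) = wordConv (momentPoly φ)
      (fun u => (momentPoly φ u).eval (k : ℂ)) (fun u => (momentPoly φ u).eval (k : ℂ)) w := by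
  refine eq_of_eval_natCast fun j => ?_
  rw [eval_comp, eval_add, eval_X, eval_C, eval_momentPoly_natCast_add φ hφ]
  exact (wordConv_linearMap (leval (j : ℂ)) _ _ _ w).symm

/-- The infinitesimal generator of the one-parameter group `momentPoly`. -/
noncomputable def momentGenerator (w : List A) : ℂ := (derivative (momentPoly φ w)).eval 0

theorem momentGenerator_nil : momentGenerator φ [] = 0 := by
  simp [momentGenerator, momentPoly_nil]

theorem derivative_momentPoly (hφ : φ 1 = 1) (w : List A) :
    derivative (momentPoly φ w) = wordConv (fun u => C (momentGenerator φ u)) (momentPoly φ)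
      (momentPoly φ) w := by
  refine eq_of_eval_natCast fun k => ?_
  have hderiv := congrArg (fun p => (derivative p).eval 0) (momentPoly_comp φ hφ k w)
  simp only [derivative_comp, derivative_add, derivative_X, derivative_C, add_zero, one_mul,
    eval_comp, eval_add, eval_X, eval_C, zero_add] at hderiv
  rw [hderiv, ← coe_evalRingHom (k : ℂ), wordConv_ringHom]
  simp only [coe_evalRingHom, eval_C]
  exact wordConv_linearMap (leval (0 : ℂ) ∘ₗ derivative) _ _ _ w

theorem sum_generator (w : List A) :
    ∑ t ∈ stFinset w.length, generator φ [(t, w)] = momentGenerator φ w := by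
  rw [momentGenerator, momentPoly, treeSum, derivative_sum, eval_finsetSum]
  simp only [generator, forestPoly_singleton]

open Classical in
theorem sum_isPST (a : A) (v : List A) :
    ∑ t ∈ stFinset (a :: v).length,
      (if IsPST t then -(treePoly φ (t, a :: v)).eval (-1) else 0) =
    wordConv (fun u => φ (a :: u).prod) (fun u => (momentPoly φ u).eval (-1))
      (fun u => (momentPoly φ u).eval (-1)) v := by
  simp only [eval_momentPoly]
  rw [← sum_sfFinset_eq_wordConv _ (fun u => φ (a :: u).prod), sum_stFinset (by simp),
    Finset.sum_eq_single_of_mem (⟨0, by simp⟩ : Fin (a :: v).length) (Finset.mem_univ _)]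
  · rw [stFinset_zero, Finset.sum_singleton]
    refine Finset.sum_congr (by simp) fun cs hcs => ?_
    rw [if_pos ⟨cs, rfl⟩]
    have hw := sum_numLeaves_cons (j := (⟨0, by simp⟩ : Fin (a :: v).length)) (c := leaf)
      (by simp [stFinset_zero]) hcs
    have hnode := eval_treePoly_node_add_one φ (by simp) hw (-1)
    rw [neg_add_cancel, eval_zero_treePoly_node φ (by simp),
      prod_segment_cons (fun t u => (treePoly φ (t, u)).eval (-1)), treePoly_leaf, eval_one,
      one_mul, rootLetters, numLeaves_leaf] at hnode
    simp only [Nat.sub_self, List.drop_zero, List.take_succ_cons, List.take_zero,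
      List.drop_succ_cons, List.singleton_append] at hnode
    linear_combination hnode
  · intro j _ hj
    refine Finset.sum_eq_zero fun c hc => Finset.sum_eq_zero fun cs _ => if_neg ?_
    rintro ⟨ds, hds⟩
    rw [node.injEq, List.cons.injEq] at hds
    rw [hds.1, mem_stFinset, mem_ST, numLeaves_leaf] at hc
    exact hj (Fin.ext (by simpa using hc.2.symm))

open Classical in
/-- The value at a decorated tree of the infinitesimal character `β̃`, extended to the single-vertex
tree by `-1`, which makes it satisfy the recursion `treeSum_boolWeight`. -/
noncomputable def boolWeight (t : PTree) (w : List A) : ℂ :=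
  if IsBST t then -(-1) ^ numInternal t * phiPi φ t w else 0

theorem boolWeight_of_not_isBST {t : PTree} (ht : ¬ IsBST t) (w : List A) :
    boolWeight φ t w = 0 :=
  if_neg ht

theorem boolWeight_of_isBST {t : PTree} (h : IsBST t) (ht : 0 < numInternal t) (w : List A) :
    boolWeight φ t w = (-1) ^ (numInternal t - 1) * phiPi φ t w := by
  obtain ⟨k, hk⟩ := Nat.exists_eq_succ_of_ne_zero ht.ne'
  rw [boolWeight, if_pos h, hk, Nat.succ_sub_one, pow_succ]
  ring

theorem treeSum_boolWeight_nil : treeSum (boolWeight φ) [] = -1 := by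
  rw [treeSum_nil, boolWeight, if_pos IsBST.single, phiPi_leaf, numInternal_leaf]
  simp

theorem replicate_leaf_mem_SF (n : ℕ) : List.replicate (n + 1) leaf ∈ SF n := by
  refine mem_SF.2 ⟨by simp, fun c hc => ?_, by simp [numLeaves_leaf]⟩
  rw [List.eq_of_mem_replicate hc]
  exact IsSchroder.leaf

theorem eq_replicate_of_mem_SF {n : ℕ} {cs : List PTree} (hcs : cs ∈ SF n)
    (hleaf : ∀ c ∈ cs, c = leaf) : cs = List.replicate (n + 1) leaf := by
  have hreplicate := List.eq_replicate_length.2 hleaf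
  have hsum := hcs.2.2
  rw [hreplicate, List.map_replicate, numLeaves_leaf, List.sum_replicate, smul_eq_mul,
    mul_one] at hsum
  rwa [hsum] at hreplicate

theorem boolWeight_node_replicate {c : PTree} {u v : List A} (hu : u.length + 1 = numLeaves c)
    (hv : v ≠ []) : boolWeight φ (node (c :: List.replicate v.length leaf)) (u ++ v) =
      -(boolWeight φ c u * φ v.prod) := by
  obtain ⟨x, v, rfl⟩ := List.exists_cons_of_ne_nil hv
  have hbst : IsBST (node (c :: List.replicate (x :: v).length leaf)) ↔ IsBST c := by
    simp [isBST_node]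
  by_cases hc : IsBST c
  · have hlen : (u ++ x :: v).length + 1 =
        ((c :: List.replicate (x :: v).length leaf).map numLeaves).sum :=
      length_append_cons_add_one x hu (by simp [numLeaves_leaf])
    rw [boolWeight, boolWeight, if_pos hc, if_pos (hbst.2 hc), phiPi_node φ (by simp) _ hlen,
      rootLetters_append_cons hu, List.length_cons, rootLetters_replicate _ _ (by simp),
      numInternal_node_eq_sum_map (by simp), prod_segment_cons (phiPi φ), Finset.prod_eq_one
        (s := (Finset.univ : Finset (Fin (List.replicate _ _).length)))
        fun i _ => by simp [phiPi_leaf]]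
    simp [numInternal_leaf, pow_add, ← hu]
    ring
  · rw [boolWeight_of_not_isBST φ hc, boolWeight_of_not_isBST φ (mt hbst.1 hc), zero_mul, neg_zero]

theorem sum_boolWeight_node (w : List A) (j : Fin w.length) {c : PTree} (hc : c ∈ stFinset j) :
    ∑ cs ∈ sfFinset (w.length - 1 - j), boolWeight φ (node (c :: cs)) w =
      -(boolWeight φ c (w.take j) * φ (w.drop j).prod) := by
  have hmem := mem_sfFinset.2 (replicate_leaf_mem_SF (w.length - 1 - j))
  have hlength : w.length - 1 - j + 1 = (w.drop j).length := by simp; omega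
  rw [Finset.sum_eq_single_of_mem _ hmem, hlength,
    ← boolWeight_node_replicate φ _ (by simp), List.take_append_drop]
  · rw [List.length_take, min_eq_left j.2.le, (mem_stFinset.1 hc).2]
  · intro cs hcs hne
    refine boolWeight_of_not_isBST φ (fun h => hne ?_) w
    exact eq_replicate_of_mem_SF (mem_sfFinset.1 hcs) (isBST_node.1 h).1

theorem treeSum_boolWeight {w : List A} (hw : w ≠ []) :
    treeSum (boolWeight φ) w =
      -∑ j : Fin w.length, treeSum (boolWeight φ) (w.take j) * φ (w.drop j).prod := by
  rw [treeSum, sum_stFinset (by simpa using hw), ← Finset.sum_neg_distrib]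
  refine Finset.sum_congr rfl fun j _ => ?_
  rw [Finset.sum_congr rfl fun c hc => sum_boolWeight_node φ w j hc, Finset.sum_neg_distrib,
    ← Finset.sum_mul, treeSum, List.length_take, min_eq_left j.2.le]

end Moments

section NC

variable {ι : Type*} [LinearOrder ι]

/-- `W` lies between the extreme elements of `V`. -/
def Covers (W V : Finset ι) : Prop :=
  ∀ w ∈ W, (∃ a ∈ V, a ≤ w) ∧ (∃ b ∈ V, w ≤ b)

theorem Covers.rfl {V : Finset ι} : Covers V V := fun w hw => ⟨⟨w, hw, le_rfl⟩, w, hw, le_rfl⟩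

theorem Covers.trans {U V W : Finset ι} (h₁ : Covers U V) (h₂ : Covers V W) : Covers U W := by
  intro w hw
  obtain ⟨⟨a, ha, haw⟩, b, hb, hwb⟩ := h₁ w hw
  obtain ⟨a', ha', haa⟩ := (h₂ a ha).1
  obtain ⟨b', hb', hbb⟩ := (h₂ b hb).2
  exact ⟨⟨a', ha', haa.trans haw⟩, b', hb', hwb.trans hbb⟩

/-- `P` is the set of blocks of a noncrossing partition of `X`. -/
structure IsNC (X : Finset ι) (P : Finset (Finset ι)) : Prop where
  nonempty : ∀ V ∈ P, V.Nonempty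
  subset : ∀ V ∈ P, V ⊆ X
  cover : ∀ x ∈ X, ∃ V ∈ P, x ∈ V
  unique : ∀ V ∈ P, ∀ W ∈ P, ∀ x ∈ V, x ∈ W → V = W
  noncrossing : ∀ V ∈ P, ∀ W ∈ P, ∀ a ∈ V, ∀ b ∈ W, ∀ c ∈ V, ∀ d ∈ W,
    a < b → b < c → c < d → V = W

/-- No block of `P` has elements on both sides of an element of `V`. -/
def Avoids (V : Finset ι) (P : Finset (Finset ι)) : Prop :=
  ∀ W ∈ P, ∀ x ∈ W, ∀ y ∈ W, ∀ v ∈ V, x < v → v < y → False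

open Classical in
/-- The noncrossing partitions of `X` whose blocks avoid `V`. -/
noncomputable def ncs (V X : Finset ι) : Finset (Finset (Finset ι)) :=
  X.powerset.powerset.filter fun P => IsNC X P ∧ Avoids V P

open Classical in
theorem mem_ncs {V X : Finset ι} {P : Finset (Finset ι)} :
    P ∈ ncs V X ↔ IsNC X P ∧ Avoids V P := by
  rw [ncs, Finset.mem_filter, and_iff_right_iff_imp]
  intro h
  exact Finset.mem_powerset.2 fun W hW => Finset.mem_powerset.2 (h.1.subset W hW)

open Classical in
/-- The number of blocks of `P` lying under `V`. -/
noncomputable def under (P : Finset (Finset ι)) (V : Finset ι) : ℕ :=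
  (P.filter fun W => Covers W V).card

theorem avoids_empty (P : Finset (Finset ι)) : Avoids ∅ P := by
  simp [Avoids]

theorem avoids_insert {a : ι} {V : Finset ι} {P : Finset (Finset ι)} :
    Avoids (insert a V) P ↔ Avoids {a} P ∧ Avoids V P := by
  simp only [Avoids, Finset.mem_insert, Finset.mem_singleton]
  grind

theorem avoids_union {V : Finset ι} {P Q : Finset (Finset ι)} :
    Avoids V (P ∪ Q) ↔ Avoids V P ∧ Avoids V Q := by
  simp only [Avoids, Finset.forall_mem_union]

theorem Avoids.filter {V : Finset ι} {P : Finset (Finset ι)} (h : Avoids V P)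
    (p : Finset ι → Prop) [DecidablePred p] : Avoids V (P.filter p) :=
  fun W hW => h W (Finset.mem_of_mem_filter W hW)

theorem not_covers_of_lt {U V : Finset ι} (hU : U.Nonempty) (h : ∀ u ∈ U, ∀ v ∈ V, u < v) :
    ¬ Covers U V := by
  obtain ⟨u, hu⟩ := hU
  intro hcovers
  obtain ⟨v, hv, hvu⟩ := (hcovers u hu).1
  exact (h u hu v hv).not_ge hvu

theorem not_covers_of_gt {U V : Finset ι} (hU : U.Nonempty) (h : ∀ u ∈ U, ∀ v ∈ V, v < u) :
    ¬ Covers U V := by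
  obtain ⟨u, hu⟩ := hU
  intro hcovers
  obtain ⟨v, hv, huv⟩ := (hcovers u hu).2
  exact (h u hu v hv).not_ge huv

theorem under_union {P Q : Finset (Finset ι)} {V : Finset ι} (h : ∀ W ∈ Q, ¬ Covers W V) :
    under (P ∪ Q) V = under P V := by
  classical
  rw [under, under, Finset.filter_union, Finset.filter_false_of_mem h, Finset.union_empty]

namespace IsNC

variable {V W X Y Z : Finset ι} {P Q : Finset (Finset ι)}

theorem avoids_of_lt (hP : IsNC X P) (h : ∀ x ∈ X, ∀ v ∈ V, x < v) : Avoids V P :=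
  fun W hW _ _ y hy v hv _ hvy => hvy.not_gt (h y (hP.subset W hW hy) v hv)

theorem avoids_of_gt (hP : IsNC X P) (h : ∀ x ∈ X, ∀ v ∈ V, v < x) : Avoids V P :=
  fun W hW x hx _ _ v hv hxv _ => hxv.not_gt (h x (hP.subset W hW hx) v hv)

theorem disjoint (hP : IsNC X P) (hQ : IsNC Y Q) (h : Disjoint X Y) : Disjoint P Q := by
  rw [Finset.disjoint_left]
  intro W hWP hWQ
  obtain ⟨x, hx⟩ := hP.nonempty W hWP
  exact Finset.disjoint_left.1 h (hP.subset W hWP hx) (hQ.subset W hWQ hx)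

theorem union (hP : IsNC X P) (hQ : IsNC Y Q) (hXY : ∀ x ∈ X, ∀ y ∈ Y, x < y) :
    IsNC (X ∪ Y) (P ∪ Q) := by
  have hlt {U W x y} (hU : U ∈ P) (hW : W ∈ Q) (hx : x ∈ U) (hy : y ∈ W) : x < y :=
    hXY x (hP.subset U hU hx) y (hQ.subset W hW hy)
  refine ⟨fun W hW => ?_, fun W hW => ?_, fun x hx => ?_, fun W hW U hU x hxW hxU => ?_,
    fun W hW U hU a ha b hb c hc d hd hab hbc hcd => ?_⟩
  · exact (Finset.mem_union.1 hW).elim (hP.nonempty W) (hQ.nonempty W)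
  · exact (Finset.mem_union.1 hW).elim
      (fun h => (hP.subset W h).trans Finset.subset_union_left)
      (fun h => (hQ.subset W h).trans Finset.subset_union_right)
  · rcases Finset.mem_union.1 hx with hx | hx
    · obtain ⟨W, hW, hxW⟩ := hP.cover x hx
      exact ⟨W, Finset.mem_union_left _ hW, hxW⟩
    · obtain ⟨W, hW, hxW⟩ := hQ.cover x hx
      exact ⟨W, Finset.mem_union_right _ hW, hxW⟩
  · rcases Finset.mem_union.1 hW with hW | hW <;> rcases Finset.mem_union.1 hU with hU | hU
    · exact hP.unique W hW U hU x hxW hxU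
    · exact absurd (hlt hW hU hxW hxU) (lt_irrefl x)
    · exact absurd (hlt hU hW hxU hxW) (lt_irrefl x)
    · exact hQ.unique W hW U hU x hxW hxU
  · rcases Finset.mem_union.1 hW with hW | hW <;> rcases Finset.mem_union.1 hU with hU | hU
    · exact hP.noncrossing W hW U hU a ha b hb c hc d hd hab hbc hcd
    · exact absurd (hlt hW hU hc hb) hbc.not_gt
    · exact absurd (hlt hU hW hb ha) hab.not_gt
    · exact hQ.noncrossing W hW U hU a ha b hb c hc d hd hab hbc hcd

theorem filter_subset (hP : IsNC X P) (hZX : Z ⊆ X)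
    (hZ : ∀ W ∈ P, ∀ x ∈ W, x ∈ Z → W ⊆ Z) : IsNC Z (P.filter (· ⊆ Z)) := by
  have hmem {W} (hW : W ∈ P.filter (· ⊆ Z)) : W ∈ P := Finset.mem_of_mem_filter W hW
  refine ⟨fun W hW => hP.nonempty W (hmem hW), fun W hW => (Finset.mem_filter.1 hW).2,
    fun x hx => ?_, fun W hW U hU => hP.unique W (hmem hW) U (hmem hU),
    fun W hW U hU => hP.noncrossing W (hmem hW) U (hmem hU)⟩
  obtain ⟨W, hW, hxW⟩ := hP.cover x (hZX hx)
  exact ⟨W, Finset.mem_filter.2 ⟨hW, hZ W hW x hxW hx⟩, hxW⟩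

theorem filter_subset_union (hP : IsNC X P) (hQ : IsNC Y Q) (hXY : Disjoint X Y) :
    (P ∪ Q).filter (· ⊆ X) = P := by
  rw [Finset.filter_union, Finset.filter_true_of_mem hP.subset, Finset.filter_false_of_mem,
    Finset.union_empty]
  intro W hW hWX
  obtain ⟨x, hx⟩ := hQ.nonempty W hW
  exact Finset.disjoint_left.1 hXY (hWX hx) (hQ.subset W hW hx)

theorem subset_or_subset {a : ι} (hP : IsNC (X ∪ Y) P) (ha : Avoids {a} P)
    (hX : ∀ x ∈ X, x < a) (hY : ∀ y ∈ Y, a < y) (hW : W ∈ P) : W ⊆ X ∨ W ⊆ Y := by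
  by_contra! h
  obtain ⟨y, hyW, hyX⟩ := Finset.not_subset.1 h.1
  obtain ⟨x, hxW, hxY⟩ := Finset.not_subset.1 h.2
  have hx := hX x ((Finset.mem_union.1 (hP.subset W hW hxW)).resolve_right hxY)
  have hy := hY y ((Finset.mem_union.1 (hP.subset W hW hyW)).resolve_left hyX)
  exact ha W hW x hxW y hyW a (Finset.mem_singleton_self a) hx hy

end IsNC

theorem sum_ncs_insert_union {M : Type*} [AddCommMonoid M] {a : ι} {V X Y : Finset ι}
    (hX : ∀ x ∈ X, x < a) (hV : ∀ x ∈ V, a < x) (hY : ∀ x ∈ Y, a < x)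
    (F : Finset (Finset ι) → M) :
    ∑ P ∈ ncs (insert a V) (X ∪ Y), F P = ∑ P ∈ ncs ∅ X, ∑ Q ∈ ncs V Y, F (P ∪ Q) := by
  have hlt (x) (hx : x ∈ X) (y) (hy : y ∈ Y) : x < y := (hX x hx).trans (hY y hy)
  have hdisj : Disjoint X Y := Finset.disjoint_left.2 fun x hx hx' => lt_irrefl x (hlt x hx x hx')
  rw [← Finset.sum_product']
  symm
  refine Finset.sum_bij' (fun PQ _ => PQ.1 ∪ PQ.2)
    (fun P _ => (P.filter (· ⊆ X), P.filter (· ⊆ Y))) ?_ ?_ ?_ ?_ fun _ _ => rfl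
  · rintro ⟨P, Q⟩ h
    simp only [Finset.mem_product, mem_ncs] at h ⊢
    obtain ⟨⟨hP, -⟩, hQ, hQV⟩ := h
    refine ⟨hP.union hQ hlt, avoids_union.2 ⟨hP.avoids_of_lt fun x hx v hv => ?_,
      avoids_insert.2 ⟨hQ.avoids_of_gt (by simpa using hY), hQV⟩⟩⟩
    rcases Finset.mem_insert.1 hv with rfl | hv
    · exact hX x hx
    · exact (hX x hx).trans (hV v hv)
  · intro P hP
    simp only [Finset.mem_product, mem_ncs, avoids_insert] at hP ⊢
    obtain ⟨hP, hPa, hPV⟩ := hP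
    refine ⟨⟨hP.filter_subset Finset.subset_union_left fun W hW x hxW hx => ?_, avoids_empty _⟩,
      hP.filter_subset Finset.subset_union_right fun W hW x hxW hx => ?_, hPV.filter _⟩
    · exact (hP.subset_or_subset hPa hX hY hW).resolve_right
        fun hWY => Finset.disjoint_left.1 hdisj hx (hWY hxW)
    · exact (hP.subset_or_subset hPa hX hY hW).resolve_left
        fun hWX => Finset.disjoint_left.1 hdisj (hWX hxW) hx
  · rintro ⟨P, Q⟩ h
    simp only [Finset.mem_product, mem_ncs] at h
    rw [h.1.1.filter_subset_union h.2.1 hdisj, Finset.union_comm,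
      h.2.1.filter_subset_union h.1.1 hdisj.symm]
  · intro P hP
    rw [mem_ncs, avoids_insert] at hP
    rw [← Finset.filter_or, Finset.filter_true_of_mem]
    exact fun W hW => hP.1.subset_or_subset hP.2.1 hX hY hW

variable {R : Type*} [CommRing R] (θ : Finset ι → ℕ → R)

/-- The sum over the noncrossing partitions of `X` avoiding `V` of the product of the weights of
the blocks, where the weight of a block may depend on the number of blocks lying under it. -/
noncomputable def ncSum (V X : Finset ι) : R :=
  ∑ P ∈ ncs V X, ∏ W ∈ P, θ W (under P W)

theorem ncSum_insert_union {a : ι} {V X Y : Finset ι} (hX : ∀ x ∈ X, x < a) (hV : ∀ x ∈ V, a < x)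
    (hY : ∀ x ∈ Y, a < x) :
    ncSum θ (insert a V) (X ∪ Y) = ncSum θ ∅ X * ncSum θ V Y := by
  have hlt (x) (hx : x ∈ X) (y) (hy : y ∈ Y) : x < y := (hX x hx).trans (hY y hy)
  rw [ncSum, ncSum, ncSum, sum_ncs_insert_union hX hV hY, Finset.sum_mul_sum]
  refine Finset.sum_congr rfl fun P hP => Finset.sum_congr rfl fun Q hQ => ?_
  rw [mem_ncs] at hP hQ
  rw [Finset.prod_union (hP.1.disjoint hQ.1 (Finset.disjoint_left.2 fun x hx hx' =>
    lt_irrefl x (hlt x hx x hx')))]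
  congr 1
  · refine Finset.prod_congr rfl fun W hW => ?_
    rw [under_union fun U hU => not_covers_of_gt (hQ.1.nonempty U hU) fun u hu w hw =>
      hlt w (hP.1.subset W hW hw) u (hQ.1.subset U hU hu)]
  · refine Finset.prod_congr rfl fun W hW => ?_
    rw [Finset.union_comm, under_union fun U hU => not_covers_of_lt (hP.1.nonempty U hU)
      fun u hu w hw => hlt u (hP.1.subset U hU hu) w (hQ.1.subset W hW hw)]

theorem ncs_empty (V : Finset ι) : ncs V ∅ = {∅} := by
  ext P
  rw [mem_ncs, Finset.mem_singleton]
  constructor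
  · rintro ⟨hP, -⟩
    refine Finset.eq_empty_of_forall_notMem fun W hW => ?_
    exact (hP.nonempty W hW).ne_empty (Finset.subset_empty.1 (hP.subset W hW))
  · rintro rfl
    exact ⟨⟨by simp, by simp, by simp, by simp, by simp⟩, by simp [Avoids]⟩

theorem ncSum_empty (V : Finset ι) : ncSum θ V ∅ = 1 := by
  rw [ncSum, ncs_empty, Finset.sum_singleton, Finset.prod_empty]

theorem notMem_toFinset_of_pairwise_lt {a : ι} {w : List ι} (hw : (a :: w).Pairwise (· < ·)) :
    a ∉ w.toFinset := fun h =>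
  lt_irrefl a ((List.pairwise_cons.1 hw).1 a (List.mem_toFinset.1 h))

theorem lt_of_mem_toFinset {a x : ι} {w : List ι} (hw : (a :: w).Pairwise (· < ·))
    (hx : x ∈ w.toFinset) : a < x :=
  (List.pairwise_cons.1 hw).1 x (List.mem_toFinset.1 hx)

theorem sum_powerset_mul_ncSum (f : Finset ι → R) (X : Finset ι) {w : List ι}
    (hw : w.Pairwise (· < ·)) (hX : ∀ x ∈ X, ∀ y ∈ w, x < y) :
    ∑ V ∈ w.toFinset.powerset, f V * ncSum θ V (X ∪ (w.toFinset \ V)) =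
      wordConv (fun v => f v.toFinset) (fun u => ncSum θ ∅ u.toFinset)
        (fun u => ncSum θ ∅ (X ∪ u.toFinset)) w := by
  induction w generalizing f X with
  | nil => simp [wordConv, mul_comm]
  | cons a w ih =>
    have ha := notMem_toFinset_of_pairwise_lt hw
    have hlt {x} (hx : x ∈ w.toFinset) : a < x := lt_of_mem_toFinset hw hx
    have hw' := (List.pairwise_cons.1 hw).2
    rw [List.toFinset_cons, Finset.sum_powerset_insert ha, wordConv, add_comm]
    congr 1
    · have hmem := ih (fun V => f (insert a V)) ∅ hw' (by simp)
      simp only [List.toFinset_cons, Finset.empty_union, List.toFinset_nil,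
        Finset.union_empty] at hmem ⊢
      rw [← hmem, smul_eq_mul, Finset.mul_sum]
      refine Finset.sum_congr rfl fun V hV => ?_
      rw [Finset.mem_powerset] at hV
      rw [Finset.insert_sdiff_insert, Finset.sdiff_insert_of_notMem ha,
        ncSum_insert_union θ (fun x hx => hX x hx a List.mem_cons_self)
          (fun x hx => hlt (hV hx)) (fun x hx => hlt (Finset.sdiff_subset hx))]
      ring
    · have hnotMem := ih f (insert a X) hw' (by
        intro x hx y hy
        rcases Finset.mem_insert.1 hx with rfl | hx
        · exact hlt (List.mem_toFinset.2 hy)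
        · exact hX x hx y (List.mem_cons_of_mem _ hy))
      simp only [List.toFinset_cons, Finset.union_insert, Finset.insert_union] at hnotMem ⊢
      rw [← hnotMem]
      refine Finset.sum_congr rfl fun V hV => ?_
      rw [Finset.insert_sdiff_of_notMem _ fun h => ha (Finset.mem_powerset.1 hV h),
        Finset.union_insert]

end NC

section Outer

variable {ι : Type*} [LinearOrder ι]

/-- `V` lies under no other block of `P`. -/
def IsOuter (P : Finset (Finset ι)) (V : Finset ι) : Prop := ∀ W ∈ P, Covers V W → W = V

theorem IsNC.avoids_erase {X : Finset ι} {P : Finset (Finset ι)} (hP : IsNC X P) {V : Finset ι}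
    (hV : V ∈ P) (ho : IsOuter P V) : Avoids V (P.erase V) := by
  intro W hW x hx y hy v hv hxv hvy
  rw [Finset.mem_erase] at hW
  refine hW.1 (ho W hW.2 fun u hu => ⟨?_, ?_⟩)
  · by_contra! h
    exact hW.1 (hP.noncrossing V hV W hW.2 u hu x hx v hv y hy (h x hx) hxv hvy).symm
  · by_contra! h
    exact hW.1 (hP.noncrossing W hW.2 V hV x hx v hv y hy u hu hxv hvy (h y hy))

theorem IsNC.erase {X : Finset ι} {P : Finset (Finset ι)} (hP : IsNC X P) {V : Finset ι}
    (hV : V ∈ P) : IsNC (X \ V) (P.erase V) := by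
  refine ⟨fun W hW => hP.nonempty W (Finset.mem_of_mem_erase hW), fun W hW x hx => ?_,
    fun x hx => ?_, fun W hW U hU => ?_, fun W hW U hU => ?_⟩
  · refine Finset.mem_sdiff.2 ⟨hP.subset W (Finset.mem_of_mem_erase hW) hx, fun hxV => ?_⟩
    exact Finset.ne_of_mem_erase hW (hP.unique W (Finset.mem_of_mem_erase hW) V hV x hx hxV)
  · rw [Finset.mem_sdiff] at hx
    obtain ⟨W, hW, hxW⟩ := hP.cover x hx.1
    exact ⟨W, Finset.mem_erase.2 ⟨fun h => hx.2 (h ▸ hxW), hW⟩, hxW⟩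
  · exact hP.unique W (Finset.mem_of_mem_erase hW) U (Finset.mem_of_mem_erase hU)
  · exact hP.noncrossing W (Finset.mem_of_mem_erase hW) U (Finset.mem_of_mem_erase hU)

theorem IsNC.insert {X V : Finset ι} {P : Finset (Finset ι)} (hVX : V ⊆ X) (hV : V.Nonempty)
    (hP : IsNC (X \ V) P) (ha : Avoids V P) : IsNC X (insert V P) := by
  have hdisj (W) (hW : W ∈ P) (x) (hx : x ∈ W) : x ∉ V :=
    (Finset.mem_sdiff.1 (hP.subset W hW hx)).2
  refine ⟨fun W hW => ?_, fun W hW => ?_, fun x hx => ?_, fun W hW U hU x hxW hxU => ?_,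
    fun W hW U hU a haW b hb c hc d hd hab hbc hcd => ?_⟩
  · rcases Finset.mem_insert.1 hW with rfl | hW
    · exact hV
    · exact hP.nonempty W hW
  · rcases Finset.mem_insert.1 hW with rfl | hW
    · exact hVX
    · exact (hP.subset W hW).trans Finset.sdiff_subset
  · by_cases hxV : x ∈ V
    · exact ⟨V, Finset.mem_insert_self V P, hxV⟩
    · obtain ⟨W, hW, hxW⟩ := hP.cover x (Finset.mem_sdiff.2 ⟨hx, hxV⟩)
      exact ⟨W, Finset.mem_insert_of_mem hW, hxW⟩
  · rcases Finset.mem_insert.1 hW with rfl | hW₁ <;> rcases Finset.mem_insert.1 hU with rfl | hU₁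
    · rfl
    · exact (hdisj U hU₁ x hxU hxW).elim
    · exact (hdisj W hW₁ x hxW hxU).elim
    · exact hP.unique W hW₁ U hU₁ x hxW hxU
  · rcases Finset.mem_insert.1 hW with rfl | hW₁ <;> rcases Finset.mem_insert.1 hU with rfl | hU₁
    · rfl
    · exact (ha U hU₁ b hb d hd c hc hbc hcd).elim
    · exact (ha W hW₁ a haW c hc b hb hab hbc).elim
    · exact hP.noncrossing W hW₁ U hU₁ a haW b hb c hc d hd hab hbc hcd

theorem IsNC.notMem {V X : Finset ι} {P : Finset (Finset ι)} (hP : IsNC (X \ V) P)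
    (hV : V.Nonempty) : V ∉ P := by
  obtain ⟨v, hv⟩ := hV
  exact fun hVP => (Finset.mem_sdiff.1 (hP.subset V hVP hv)).2 hv

theorem isOuter_insert_of_avoids {V X : Finset ι} {P : Finset (Finset ι)} (hP : IsNC (X \ V) P)
    (hV : V.Nonempty) (ha : Avoids V P) : IsOuter (insert V P) V := by
  intro W hW hcovers
  refine (Finset.mem_insert.1 hW).resolve_right fun hWP => ?_
  have hne {x} (hx : x ∈ W) : x ∉ V := (Finset.mem_sdiff.1 (hP.subset W hWP hx)).2
  obtain ⟨v, hv⟩ := hV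
  obtain ⟨⟨x, hx, hxv⟩, y, hy, hvy⟩ := hcovers v hv
  exact ha W hWP x hx y hy v hv (hxv.lt_of_ne fun h => hne hx (h ▸ hv))
    (hvy.lt_of_ne fun h => hne hy (h ▸ hv))

theorem under_erase {P : Finset (Finset ι)} {V W : Finset ι} (hV : V ∈ P) (ho : IsOuter P V)
    (hW : W ∈ P.erase V) : under (P.erase V) W = under P W := by
  classical
  have hcovers : ¬ Covers V W := fun h =>
    Finset.ne_of_mem_erase hW (ho W (Finset.mem_of_mem_erase hW) h)
  conv_rhs => rw [under, ← Finset.insert_erase hV, Finset.filter_insert, if_neg hcovers]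
  rfl

open Classical in
theorem sum_ncs_sum_isOuter {M : Type*} [AddCommMonoid M] (X : Finset ι)
    (F : Finset ι → Finset (Finset ι) → M) :
    ∑ P ∈ ncs ∅ X, ∑ V ∈ P.filter (IsOuter P), F V (P.erase V) =
      ∑ V ∈ X.powerset.filter Finset.Nonempty, ∑ Q ∈ ncs V (X \ V), F V Q := by
  rw [Finset.sum_sigma', Finset.sum_sigma']
  refine Finset.sum_bij' (fun PV _ => ⟨PV.2, PV.1.erase PV.2⟩)
    (fun VQ _ => ⟨insert VQ.1 VQ.2, VQ.1⟩) ?_ ?_ ?_ ?_ fun _ _ => rfl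
  · rintro ⟨P, V⟩ h
    simp only [Finset.mem_sigma, Finset.mem_filter, mem_ncs, Finset.mem_powerset] at h ⊢
    obtain ⟨⟨hP, -⟩, hV, ho⟩ := h
    exact ⟨⟨hP.subset V hV, hP.nonempty V hV⟩, hP.erase hV, hP.avoids_erase hV ho⟩
  · rintro ⟨V, Q⟩ h
    simp only [Finset.mem_sigma, Finset.mem_filter, mem_ncs, Finset.mem_powerset] at h ⊢
    obtain ⟨⟨hVX, hV⟩, hQ, ha⟩ := h
    exact ⟨⟨hQ.insert hVX hV ha, avoids_empty _⟩, Finset.mem_insert_self V Q,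
      isOuter_insert_of_avoids hQ hV ha⟩
  · rintro ⟨P, V⟩ h
    simp only [Finset.mem_sigma, Finset.mem_filter] at h
    simp [Finset.insert_erase h.2.1]
  · rintro ⟨V, Q⟩ h
    simp only [Finset.mem_sigma, Finset.mem_filter, mem_ncs] at h
    simp [Finset.erase_insert (h.2.1.notMem h.1.2)]

variable {R : Type*} [CommRing R]

open Classical in
theorem sum_ncs_sum_isOuter_mul_prod (θ : Finset ι → ℕ → R) (f : Finset ι → R) (hf : f ∅ = 0)
    (X : Finset ι) :
    ∑ P ∈ ncs ∅ X, ∑ V ∈ P.filter (IsOuter P), f V * ∏ W ∈ P.erase V, θ W (under P W) =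
      ∑ V ∈ X.powerset, f V * ncSum θ V (X \ V) := by
  trans ∑ V ∈ X.powerset.filter Finset.Nonempty, f V * ncSum θ V (X \ V)
  · simp only [ncSum, Finset.mul_sum]
    rw [← sum_ncs_sum_isOuter]
    refine Finset.sum_congr rfl fun P _ => Finset.sum_congr rfl fun V hV => ?_
    rw [Finset.mem_filter] at hV
    exact congrArg _ (Finset.prod_congr rfl fun W hW =>
      congrArg _ (under_erase hV.1 hV.2 hW).symm)
  · refine Finset.sum_subset (Finset.filter_subset _ _) fun V hV hne => ?_
    rw [Finset.mem_filter, not_and, Finset.not_nonempty_iff_eq_empty] at hne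
    rw [hne hV, hf, zero_mul]

theorem IsNC.outer_unique {X : Finset ι} {P : Finset (Finset ι)} (hP : IsNC X P)
    {U V W : Finset ι} (hU : U ∈ P) (hV : V ∈ P) (hW : W.Nonempty) (hoU : IsOuter P U)
    (hoV : IsOuter P V) (hWU : Covers W U) (hWV : Covers W V) : U = V := by
  by_contra hne
  wlog h : U.min' (hP.nonempty U hU) < V.min' (hP.nonempty V hV) generalizing U V
  · refine this hV hU hoV hoU hWV hWU (Ne.symm hne) (lt_of_le_of_ne (not_lt.1 h) fun heq => hne ?_)
    exact hP.unique U hU V hV _ (Finset.min'_mem _ _) (heq ▸ Finset.min'_mem _ _)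
  obtain ⟨w, hw⟩ := hW
  obtain ⟨b, hb, hwb⟩ := (hWU w hw).2
  obtain ⟨a, ha, haw⟩ := (hWV w hw).1
  have hminV := Finset.min'_mem V (hP.nonempty V hV)
  have hminU := Finset.min'_mem U (hP.nonempty U hU)
  refine hne (hoV U hU fun v hv => ⟨⟨_, hminU, (h.trans_le (Finset.min'_le V v hv)).le⟩, b, hb, ?_⟩)
  by_contra! hbv
  have hlt : V.min' (hP.nonempty V hV) < b := by
    refine lt_of_le_of_ne ((Finset.min'_le V a ha).trans (haw.trans hwb)) fun heq => hne ?_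
    exact hP.unique U hU V hV b hb (heq ▸ hminV)
  exact hne (hP.noncrossing U hU V hV _ hminU _ hminV b hb v hv h hlt hbv)

theorem IsNC.exists_outer {X : Finset ι} {P : Finset (Finset ι)} (hP : IsNC X P)
    {W : Finset ι} (hW : W ∈ P) : ∃ V ∈ P, IsOuter P V ∧ Covers W V := by
  classical
  -- The smallest point of a block covering `W` lies in an outer block.
  let S := X.filter fun x => ∃ V ∈ P, x ∈ V ∧ Covers W V
  have hS : S.Nonempty := by
    obtain ⟨x, hx⟩ := hP.nonempty W hW
    exact ⟨x, Finset.mem_filter.2 ⟨hP.subset W hW hx, W, hW, hx, Covers.rfl⟩⟩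
  obtain ⟨V, hV, hmV, hWV⟩ := (Finset.mem_filter.1 (S.min'_mem hS)).2
  refine ⟨V, hV, fun U hU hVU => ?_, hWV⟩
  obtain ⟨a, ha, ham⟩ := (hVU _ hmV).1
  have haS : a ∈ S := Finset.mem_filter.2 ⟨hP.subset U hU ha, U, hU, ha, hWV.trans hVU⟩
  exact hP.unique U hU V hV a ha (le_antisymm ham (S.min'_le a haS) ▸ hmV)

open Classical in
theorem IsNC.sum_under_isOuter {X : Finset ι} {P : Finset (Finset ι)} (hP : IsNC X P) :
    ∑ V ∈ P.filter (IsOuter P), under P V = P.card := by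
  simp only [under]
  rw [← Finset.card_biUnion]
  · congr 1
    ext W
    simp only [Finset.mem_biUnion, Finset.mem_filter]
    constructor
    · rintro ⟨V, -, hW, -⟩
      exact hW
    · intro hW
      obtain ⟨V, hV, ho, hc⟩ := hP.exists_outer hW
      exact ⟨V, ⟨hV, ho⟩, hW, hc⟩
  · intro U hU V hV hne
    refine Finset.disjoint_left.2 fun W hWU hWV => ?_
    simp only [Finset.coe_filter, Set.mem_ofPred_eq, Finset.mem_filter] at hU hV hWU hWV
    exact hne (hP.outer_unique hU.1 hV.1 (hP.nonempty W hWU.1) hU.2 hV.2 hWU.2 hWV.2)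

theorem IsNC.isOuter_of_mem_of_forall_le {X : Finset ι} {P : Finset (Finset ι)} (hP : IsNC X P)
    {V : Finset ι} (hV : V ∈ P) {a : ι} (ha : a ∈ V) (hmin : ∀ x ∈ X, a ≤ x) : IsOuter P V := by
  intro W hW hcovers
  obtain ⟨x, hx, hxa⟩ := (hcovers a ha).1
  obtain rfl := le_antisymm hxa (hmin x (hP.subset W hW hx))
  exact hP.unique W hW V hV x hx ha

open Classical in
theorem IsNC.sum_isOuter_mem_mul_prod_erase {X : Finset ι} {P : Finset (Finset ι)}
    (hP : IsNC X P) (g : Finset ι → R) {a : ι} (ha : a ∈ X) (hmin : ∀ x ∈ X, a ≤ x) :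
    ∑ V ∈ P.filter (IsOuter P), (if a ∈ V then g V else 0) * ∏ W ∈ P.erase V, g W =
      ∏ W ∈ P, g W := by
  obtain ⟨V, hV, haV⟩ := hP.cover a ha
  have hV' := Finset.mem_filter.2 ⟨hV, hP.isOuter_of_mem_of_forall_le hV haV hmin⟩
  rw [Finset.sum_eq_single_of_mem V hV', if_pos haV, Finset.mul_prod_erase _ _ hV]
  intro W hW hne
  rw [if_neg, zero_mul]
  exact fun haW => hne (hP.unique W (Finset.mem_filter.1 hW).1 V hV a haW haV)

theorem ncSum_cons (g : Finset ι → R) {a : ι} {w : List ι} (hw : (a :: w).Pairwise (· < ·)) :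
    ncSum (fun V _ => g V) ∅ (a :: w).toFinset =
      wordConv (fun v => g (a :: v).toFinset) (fun u => ncSum (fun V _ => g V) ∅ u.toFinset)
        (fun u => ncSum (fun V _ => g V) ∅ u.toFinset) w := by
  classical
  have ha := notMem_toFinset_of_pairwise_lt hw
  have hlt {x} (hx : x ∈ w.toFinset) : a < x := lt_of_mem_toFinset hw hx
  have hmin : ∀ x ∈ (a :: w).toFinset, a ≤ x := by
    simpa using fun x hx => (hlt (List.mem_toFinset.2 hx)).le
  have hpowerset := sum_powerset_mul_ncSum (fun V _ => g V) (fun V => g (insert a V)) ∅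
    (List.pairwise_cons.1 hw).2 (by simp)
  simp only [Finset.empty_union, ← List.toFinset_cons] at hpowerset
  rw [← hpowerset]
  trans ∑ V ∈ (a :: w).toFinset.powerset,
    (if a ∈ V then g V else 0) * ncSum (fun V _ => g V) V ((a :: w).toFinset \ V)
  · rw [← sum_ncs_sum_isOuter_mul_prod _ _ (by simp)]
    exact Finset.sum_congr rfl fun P hP =>
      ((mem_ncs.1 hP).1.sum_isOuter_mem_mul_prod_erase g (by simp) hmin).symm
  · rw [List.toFinset_cons, Finset.sum_powerset_insert ha, Finset.sum_eq_zero, zero_add]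
    · refine Finset.sum_congr rfl fun V hV => ?_
      rw [Finset.mem_powerset] at hV
      have hsplit := ncSum_insert_union (fun V _ => g V) (X := ∅) (by simp)
        (fun x hx => hlt (hV hx)) (Y := w.toFinset \ V) fun x hx => hlt (Finset.sdiff_subset hx)
      rw [Finset.empty_union, ncSum_empty, one_mul] at hsplit
      rw [if_pos (Finset.mem_insert_self a V), Finset.insert_sdiff_insert,
        Finset.sdiff_insert_of_notMem ha, hsplit]
    · intro V hV
      rw [if_neg fun h => ha (Finset.mem_powerset.1 hV h), zero_mul]

theorem derivative_ncSum {K : Type*} [Field K] [CharZero K] (g : Finset ι → K) (hg : g ∅ = 0)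
    {w : List ι} (hw : w.Pairwise (· < ·)) :
    derivative (ncSum (fun V c => C (g V / c) * X) ∅ w.toFinset) =
      wordConv (fun v => C (g v.toFinset))
        (fun u => ncSum (fun V c => C (g V / c) * X) ∅ u.toFinset)
        (fun u => ncSum (fun V c => C (g V / c) * X) ∅ u.toFinset) w := by
  classical
  have hpowerset := sum_powerset_mul_ncSum (fun V c => C (g V / c) * X) (fun V => C (g V)) ∅ hw
    (by simp)
  simp only [Finset.empty_union] at hpowerset
  rw [← hpowerset, ← sum_ncs_sum_isOuter_mul_prod _ _ (by simp [hg]), ncSum, derivative_sum]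
  refine Finset.sum_congr rfl fun P hP => ?_
  rw [mem_ncs] at hP
  have hremove : ∀ V ∈ P.filter (IsOuter P), C (g V) * ∏ W ∈ P.erase V, (C (g W / under P W) * X) =
      (under P V : K[X]) * (C (∏ W ∈ P, g W / under P W) * X ^ (P.card - 1)) := by
    intro V hV
    replace hV := (Finset.mem_filter.1 hV).1
    have hunder : (under P V : K) ≠ 0 := by
      rw [under, Nat.cast_ne_zero, Finset.card_ne_zero]
      exact ⟨V, Finset.mem_filter.2 ⟨hV, Covers.rfl⟩⟩
    rw [Finset.prod_mul_distrib, Finset.prod_const, Finset.card_erase_of_mem hV,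
      ← Finset.mul_prod_erase P _ hV, ← map_prod, ← mul_assoc, ← C_mul, ← mul_assoc,
      ← C_eq_natCast, ← C_mul, ← mul_assoc, mul_div_cancel₀ _ hunder]
  rw [Finset.sum_congr rfl hremove, ← Finset.sum_mul, ← Nat.cast_sum, hP.1.sum_under_isOuter,
    Finset.prod_mul_distrib, Finset.prod_const, ← map_prod, derivative_C_mul, derivative_X_pow]
  simp only [map_natCast]
  ring

end Outer

section Transport

variable {ι κ : Type*} [LinearOrder ι] [LinearOrder κ]

theorem covers_map (e : ι ↪o κ) {V W : Finset ι} :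
    Covers (W.map e.toEmbedding) (V.map e.toEmbedding) ↔ Covers W V := by
  simp [Covers]

theorem isNC_map (e : ι ↪o κ) {X : Finset ι} {P : Finset (Finset ι)} :
    IsNC (X.map e.toEmbedding) (P.map (Finset.mapEmbedding e.toEmbedding).toEmbedding) ↔
      IsNC X P := by
  have mem_map (x : ι) (W : Finset ι) : e x ∈ W.map e.toEmbedding ↔ x ∈ W := by simp
  constructor
  · rintro ⟨nonempty, subset, cover, unique, noncrossing⟩
    refine ⟨by simpa using nonempty, by simpa using subset, by simpa using cover, ?_,
      by simpa using noncrossing⟩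
    simpa only [Finset.forall_mem_map, RelEmbedding.coe_toEmbedding, Finset.mapEmbedding_apply,
      mem_map, Finset.map_inj] using unique
  · rintro ⟨nonempty, subset, cover, unique, noncrossing⟩
    refine ⟨by simpa using nonempty, by simpa using subset, by simpa using cover, ?_,
      by simpa using noncrossing⟩
    simpa only [Finset.forall_mem_map, RelEmbedding.coe_toEmbedding, Finset.mapEmbedding_apply,
      mem_map, Finset.map_inj] using unique

theorem ncs_map (e : ι ↪o κ) (X : Finset ι) :
    ncs ∅ (X.map e.toEmbedding) = (ncs ∅ X).map
      (Finset.mapEmbedding (Finset.mapEmbedding e.toEmbedding).toEmbedding).toEmbedding := by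
  ext Q
  simp only [mem_ncs, avoids_empty, and_true, Finset.mem_map, RelEmbedding.coe_toEmbedding,
    Finset.mapEmbedding_apply]
  constructor
  · intro hQ
    have hsubset : Q ⊆ X.powerset.map (Finset.mapEmbedding e.toEmbedding).toEmbedding := by
      intro V hV
      obtain ⟨U, hU, rfl⟩ := Finset.subset_map_iff.1 (hQ.subset V hV)
      exact Finset.mem_map.2 ⟨U, Finset.mem_powerset.2 hU, rfl⟩
    obtain ⟨P, -, rfl⟩ := Finset.subset_map_iff.1 hsubset
    exact ⟨P, (isNC_map e).1 hQ, rfl⟩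
  · rintro ⟨P, hP, rfl⟩
    exact (isNC_map e).2 hP

theorem under_map (e : ι ↪o κ) (P : Finset (Finset ι)) (V : Finset ι) :
    under (P.map (Finset.mapEmbedding e.toEmbedding).toEmbedding) (V.map e.toEmbedding) =
      under P V := by
  classical
  simp only [under, Finset.filter_map, Finset.card_map]
  congr 1
  ext U
  simp [covers_map]

variable {A R : Type*} [CommRing R]

theorem ncSum_map (θ : Finset κ → ℕ → R) (e : ι ↪o κ) (X : Finset ι) :
    ncSum θ ∅ (X.map e.toEmbedding) = ncSum (fun V c => θ (V.map e.toEmbedding) c) ∅ X := by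
  rw [ncSum, ncs_map, Finset.sum_map]
  refine Finset.sum_congr rfl fun P _ => ?_
  simp only [RelEmbedding.coe_toEmbedding, Finset.mapEmbedding_apply, Finset.prod_map, under_map]

/-- The sum over the noncrossing partitions of the positions of the word `l` of the product of the
weights of the subwords carried by the blocks. -/
noncomputable def ncWord (θ : List A → ℕ → R) (l : List A) : R :=
  ncSum (fun V c => θ ((V.sort (· ≤ ·)).map l.get) c) ∅ Finset.univ

theorem ncSum_eq_ncWord (θ : List A → ℕ → R) (a : ι → A) {w : List ι} (hw : w.Pairwise (· < ·)) :
    ncSum (fun V c => θ ((V.sort (· ≤ ·)).map a) c) ∅ w.toFinset = ncWord θ (w.map a) := by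
  have hlen : (w.map a).length = w.length := List.length_map a
  let e : Fin (w.map a).length ↪o ι := OrderEmbedding.ofStrictMono
    (fun i => w.get (i.cast hlen)) fun i j hij => List.pairwise_iff_get.1 hw _ _ hij
  have himage : w.toFinset = Finset.univ.map e.toEmbedding := by
    ext x
    simp only [List.mem_toFinset, Finset.mem_map, Finset.mem_univ, true_and]
    rw [List.mem_iff_get]
    exact ⟨fun ⟨i, hi⟩ => ⟨i.cast hlen.symm, hi⟩, fun ⟨i, hi⟩ => ⟨i.cast hlen, hi⟩⟩
  rw [himage, ncSum_map, ncWord]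
  congr 1
  funext V c
  rw [← (e.strictMono.strictMonoOn _).map_finsetSort, List.map_map]
  congr 2
  funext i
  simp [e]

theorem ncWord_nil (θ : List A → ℕ → R) : ncWord θ [] = 1 :=
  ncSum_empty _ _

theorem ncWord_congr {θ θ' : List A → ℕ → R} (h : ∀ l c, l ≠ [] → θ l c = θ' l c) (w : List A) :
    ncWord θ w = ncWord θ' w := by
  rw [ncWord, ncWord, ncSum, ncSum]
  refine Finset.sum_congr rfl fun P hP => Finset.prod_congr rfl fun V hV => h _ _ ?_
  rw [Ne, List.map_eq_nil_iff, ← List.length_eq_zero_iff, Finset.length_sort, Finset.card_eq_zero]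
  exact ((mem_ncs.1 hP).1.nonempty V hV).ne_empty

theorem ncWord_zero (w : List A) : ncWord (fun _ _ => (0 : R)) w = wordOne R w := by
  cases w with
  | nil => exact ncWord_nil _
  | cons a w =>
    rw [ncWord, ncSum, wordOne]
    refine Finset.sum_eq_zero fun P hP => ?_
    obtain ⟨V, hV, -⟩ := (mem_ncs.1 hP).1.cover ⟨0, Nat.succ_pos _⟩ (Finset.mem_univ _)
    exact Finset.prod_eq_zero hV rfl

theorem eval_ncWord (θ : List A → ℕ → R[X]) (x : R) (w : List A) :
    (ncWord θ w).eval x = ncWord (fun l c => (θ l c).eval x) w := by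
  simp only [ncWord, ncSum, eval_finsetSum, eval_prod]

end Transport

section Finpartition

theorem isNC_parts {n : ℕ} {π : NPart n} : IsNC Finset.univ π.parts ↔ IsNoncrossing π := by
  constructor
  · exact fun h a b c d hab hbc hcd V hV W hW ha hc hb hd =>
      h.noncrossing V hV W hW a ha b hb c hc d hd hab hbc hcd
  · intro h
    exact ⟨fun V hV => π.nonempty_of_mem_parts hV, fun V _ => Finset.subset_univ V,
      fun x hx => π.exists_mem hx, fun V hV W hW x hx hx' => π.eq_of_mem_parts hV hW hx hx',
      fun V hV W hW a ha b hb c hc d hd hab hbc hcd => h a b c d hab hbc hcd V hV W hW ha hc hb hd⟩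

theorem IsNC.exists_parts_eq {n : ℕ} {P : Finset (Finset (Fin n))} (hP : IsNC Finset.univ P) :
    ∃ π : NPart n, π.parts = P :=
  ⟨Finpartition.ofExistsUnique P (fun V _ => Finset.subset_univ V)
    (fun x hx => by
      obtain ⟨V, hV, hxV⟩ := hP.cover x hx
      exact ⟨V, ⟨hV, hxV⟩, fun W hW => hP.unique W hW.1 V hV x hW.2 hxV⟩)
    (fun hempty => by simpa using hP.nonempty ∅ hempty), rfl⟩

theorem finsum_isNoncrossing {M : Type*} [AddCommMonoid M] {n : ℕ}
    (G : Finset (Finset (Fin n)) → M) :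
    ∑ᶠ π ∈ {π : NPart n | IsNoncrossing π}, G π.parts = ∑ P ∈ ncs ∅ Finset.univ, G P := by
  classical
  have hfilter : {π : NPart n | IsNoncrossing π} =
      ((Finset.univ : Finset (NPart n)).filter IsNoncrossing : Finset (NPart n)) := by
    ext
    simp
  rw [hfilter, finsum_mem_coe_finset]
  refine Finset.sum_bij (fun π _ => π.parts) (fun π hπ => ?_)
    (fun π _ π' _ h => Finpartition.ext h) (fun P hP => ?_) fun _ _ => rfl
  · exact mem_ncs.2 ⟨isNC_parts.2 (Finset.mem_filter.1 hπ).2, avoids_empty _⟩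
  · have hnc := (mem_ncs.1 hP).1
    obtain ⟨π, rfl⟩ := hnc.exists_parts_eq
    exact ⟨π, Finset.mem_filter.2 ⟨Finset.mem_univ π, isNC_parts.1 hnc⟩, rfl⟩

theorem finsum_isNoncrossing_prod {A R : Type*} [CommRing R] (θ : List A → ℕ → R) (w : List A) :
    ∑ᶠ π ∈ {π : NPart w.length | IsNoncrossing π},
      ∏ V ∈ π.parts, θ ((V.sort (· ≤ ·)).map w.get) (under π.parts V) = ncWord θ w :=
  finsum_isNoncrossing fun P => ∏ V ∈ P, θ ((V.sort (· ≤ ·)).map w.get) (under P V)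

variable {A : Type*} [Ring A] {φ : A → ℂ}

theorem freeMC_eq_ncWord {r : List A → ℂ} (hr : FreeMC φ r) (hφ : φ 1 = 1) (w : List A) :
    φ w.prod = ncWord (fun l _ => r l) w := by
  rcases eq_or_ne w [] with rfl | hw
  · rw [List.prod_nil, hφ, ncWord_nil]
  · have hmoment := hr w.length (List.length_pos_of_ne_nil hw) w.get
    rw [List.ofFn_get] at hmoment
    exact hmoment.trans (finsum_isNoncrossing_prod (fun l _ => r l) w)

theorem monotoneMC_eq_ncWord {h : List A → ℂ} (hh : MonotoneMC φ h) (hφ : φ 1 = 1) (w : List A) :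
    φ w.prod = ncWord (fun l c => h l / c) w := by
  rcases eq_or_ne w [] with rfl | hw
  · rw [List.prod_nil, hφ, ncWord_nil]
  · have hmoment := hh w.length (List.length_pos_of_ne_nil hw) w.get
    rw [List.ofFn_get] at hmoment
    rw [hmoment, ← finsum_isNoncrossing_prod]
    refine finsum_mem_congr rfl fun π _ => ?_
    rw [Finset.prod_div_distrib, blockApply, div_eq_inv_mul, forestFactorial, Nat.cast_prod]
    rfl

end Finpartition

section Recursion

variable {A : Type*}

theorem sort_toFinset {ι : Type*} [LinearOrder ι] {w : List ι} (hw : w.Pairwise (· < ·)) :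
    w.toFinset.sort (· ≤ ·) = w :=
  (List.toFinset_sort (· ≤ ·) (hw.imp fun h => h.ne)).2 (hw.imp fun h => h.le)

theorem exists_pairwise_lt_map_eq (w : List A) :
    ∃ (n : ℕ) (a : Fin n → A) (v : List (Fin n)), v.Pairwise (· < ·) ∧ v.map a = w :=
  ⟨w.length, w.get, List.finRange w.length, List.pairwise_lt_finRange _,
    by rw [← List.ofFn_eq_map, List.ofFn_get]⟩

theorem wordConv_ncSum {ι R V : Type*} [LinearOrder ι] [CommRing R] [AddCommMonoid V] [Module R V]
    (θ : List A → ℕ → R) (a : ι → A) {f : List ι → V} {F : List A → V} {w : List ι}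
    (hw : w.Pairwise (· < ·)) (hf : ∀ u, u.Sublist w → f u = F (u.map a)) :
    wordConv f (fun u => ncSum (fun V c => θ ((V.sort (· ≤ ·)).map a) c) ∅ u.toFinset)
      (fun u => ncSum (fun V c => θ ((V.sort (· ≤ ·)).map a) c) ∅ u.toFinset) w =
      wordConv F (ncWord θ) (ncWord θ) (w.map a) := by
  rw [wordConv_map]
  exact wordConv_congr hf (fun u hu _ => ncSum_eq_ncWord θ a (hw.sublist hu))
    fun u hu => ncSum_eq_ncWord θ a (hw.sublist hu)

theorem ncWord_cons {R : Type*} [CommRing R] (g : List A → R) (a : A) (w : List A) :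
    ncWord (fun l _ => g l) (a :: w) = wordConv (fun u => g (a :: u))
      (ncWord fun l _ => g l) (ncWord fun l _ => g l) w := by
  obtain ⟨n, f, _ | ⟨i, v⟩, hv, hmap⟩ := exists_pairwise_lt_map_eq (a :: w)
  · simp at hmap
  obtain ⟨rfl, rfl⟩ := List.cons.inj hmap
  rw [← List.map_cons, ← ncSum_eq_ncWord _ f hv,
    ncSum_cons (fun V => g ((V.sort (· ≤ ·)).map f)) hv]
  refine wordConv_ncSum (fun l _ => g l) f (List.pairwise_cons.1 hv).2 fun u hu => ?_
  rw [sort_toFinset (hv.sublist (hu.cons_cons i)), List.map_cons]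

theorem derivative_ncWord {K : Type*} [Field K] [CharZero K] (h : List A → K) (h_nil : h [] = 0)
    (w : List A) :
    derivative (ncWord (fun l c => C (h l / c) * X) w) = wordConv (fun u => C (h u))
      (ncWord fun l c => C (h l / c) * X) (ncWord fun l c => C (h l / c) * X) w := by
  obtain ⟨n, f, v, hv, rfl⟩ := exists_pairwise_lt_map_eq w
  rw [← ncSum_eq_ncWord _ f hv,
    derivative_ncSum (fun V => h ((V.sort (· ≤ ·)).map f)) (by simp [h_nil]) hv]
  refine wordConv_ncSum (fun l c => C (h l / c) * X) f hv fun u hu => ?_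
  rw [sort_toFinset (hv.sublist hu)]

end Recursion

section Cumulants

variable {A : Type*} [Ring A] {φ : A → ℂ}

theorem freeMC_eq_wordConv {r : List A → ℂ} (hr : FreeMC φ r) (hφ : φ 1 = 1) (a : A)
    (w : List A) : r (a :: w) = wordConv (fun u => φ (a :: u).prod)
      (fun u => (momentPoly φ u).eval (-1)) (fun u => (momentPoly φ u).eval (-1)) w := by
  have hrec : (fun u => φ (a :: u).prod) = fun u => wordConv (fun v => r (a :: v))
      (fun v => φ v.prod) (fun v => φ v.prod) u := by
    funext u
    simp only [freeMC_eq_ncWord hr hφ]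
    exact ncWord_cons r a u
  rw [hrec, wordConv_assoc, wordConv_eval_neg_one φ hφ, wordConv_wordOne_gap]

theorem eq_zero_of_derivative_eq_C {K : Type*} [Field K] [CharZero K] {p : K[X]} {c : K}
    (hp : derivative p = C c) (h_zero : p.eval 0 = 0) (h_one : p.eval 1 = 0) : c = 0 ∧ p = 0 := by
  have hderiv : derivative (p - C c * X) = 0 := by simp [hp]
  have hlinear : p = C c * X := by
    rw [← sub_eq_zero, eq_C_of_derivative_eq_zero hderiv, coeff_zero_eq_eval_zero]
    simp [h_zero]
  have hc : c = 0 := by simpa [hlinear] using h_one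
  exact ⟨hc, by rw [hlinear, hc, C_0, zero_mul]⟩

theorem eq_momentGenerator_and_ncWord_eq_momentPoly (hφ : φ 1 = 1) {h : List A → ℂ}
    (h_nil : h [] = 0) (h_moment : ∀ l, ncWord (fun l c => h l / c) l = φ l.prod) (w : List A) :
    h w = momentGenerator φ w ∧ ncWord (fun l c => C (h l / c) * X) w = momentPoly φ w := by
  induction hn : w.length using Nat.strong_induction_on generalizing w with
  | _ n ih =>
    subst hn
    have ⟨hgen, hpoly⟩ := eq_zero_of_derivative_eq_C
      (p := ncWord (fun l c => C (h l / c) * X) w - momentPoly φ w)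
      (c := h w - momentGenerator φ w) ?_ ?_ ?_
    · exact ⟨sub_eq_zero.1 hgen, sub_eq_zero.1 hpoly⟩
    · rw [derivative_sub, derivative_momentPoly φ hφ, derivative_ncWord h h_nil, C_sub]
      refine wordConv_sub_wordConv (by simp [momentGenerator_nil]) (fun u hu => ?_)
        (fun u hu => (ih _ hu u rfl).2) (ncWord_nil _)
      rw [(ih _ hu u rfl).1]
    · simp only [eval_sub, eval_ncWord, eval_momentPoly_zero, eval_mul, eval_X, mul_zero,
        ncWord_zero, sub_self]
    · simp only [eval_sub, eval_ncWord, eval_momentPoly_one φ hφ, eval_mul, eval_X, eval_C,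
        mul_one, h_moment, sub_self]

theorem monotoneMC_eq_momentGenerator {h : List A → ℂ} (hh : MonotoneMC φ h) (hφ : φ 1 = 1)
    {w : List A} (hw : w ≠ []) : h w = momentGenerator φ w := by
  classical
  have hcongr (l : List A) :
      ncWord (fun l c => (if l = [] then 0 else h l) / c) l = φ l.prod := by
    rw [monotoneMC_eq_ncWord hh hφ]
    exact ncWord_congr (fun l c hl => by rw [if_neg hl]) l
  simpa [hw] using (eq_momentGenerator_and_ncWord_eq_momentPoly hφ (by simp) hcongr w).1

end Cumulants

section PrefixConvolution

variable {A R V : Type*} [CommSemiring R] [AddCommMonoid V] [Module R V]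

theorem wordConv_of_forall_ne_nil {f : List A → V} {g G : List A → R} {w : List A}
    (hf : ∀ v, v.Sublist w → v ≠ [] → f v = 0) : wordConv f g G w = G w • f [] := by
  induction w generalizing G with
  | nil => rfl
  | cons a w ih =>
    rw [wordConv, ih fun v hv => hf v (hv.cons a),
      wordConv_congr (f' := fun _ => 0) (g' := g) (G' := g)
        (fun v hv => hf _ (hv.cons_cons a) (by simp)) (fun _ _ _ => rfl) (fun _ _ => rfl),
      wordConv_zero, smul_zero, zero_add]

theorem wordConv_eq_sum_take {f : List A → V} {g : List A → R} (hg : g [] = 1) {w : List A}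
    (hw : w.Nodup) (hf : ∀ v, v.Sublist w → ¬ v <+: w → f v = 0) :
    wordConv f g g w = ∑ k ∈ Finset.range (w.length + 1), g (w.drop k) • f (w.take k) := by
  induction w generalizing f with
  | nil => simp [wordConv]
  | cons a w ih =>
    rw [List.nodup_cons] at hw
    rw [wordConv, hg, one_smul, List.length_cons, Finset.sum_range_succ', ih hw.2,
      wordConv_of_forall_ne_nil]
    · simp
    · intro v hv hne
      refine hf v (hv.cons a) fun hprefix => ?_
      cases v with
      | nil => exact hne rfl
      | cons b v =>
        rw [List.cons_prefix_cons] at hprefix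
        exact hw.1 (hv.subset (hprefix.1 ▸ List.mem_cons_self))
    · intro v hv hprefix
      refine hf _ (hv.cons_cons a) ?_
      rwa [List.cons_prefix_cons, and_iff_right rfl]

end PrefixConvolution

section Interval

theorem isPrefix_of_sublist_of_forall_le {ι : Type*} [LinearOrder ι] {v w : List ι}
    (hw : w.Pairwise (· < ·)) (hv : v.Sublist w) (h : ∀ z ∈ w, ∀ y ∈ v, z ≤ y → z ∈ v) :
    v <+: w := by
  induction w generalizing v with
  | nil => rw [List.sublist_nil.1 hv]
  | cons x w ih =>
    rw [List.pairwise_cons] at hw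
    have hx : x ∉ w := fun hx => lt_irrefl x (hw.1 x hx)
    cases hv with
    | cons _ hv =>
      cases v with
      | nil => exact List.nil_prefix
      | cons y v =>
        have hy := hv.subset List.mem_cons_self
        exact absurd (hv.subset (h x List.mem_cons_self y List.mem_cons_self (hw.1 y hy).le)) hx
    | cons_cons _ hv =>
      rw [List.cons_prefix_cons, and_iff_right rfl]
      refine ih hw.2 hv fun z hz y hy hzy => ?_
      exact (List.mem_cons.1 (h z (List.mem_cons_of_mem x hz) y (List.mem_cons_of_mem x hy)
        hzy)).resolve_left fun hzx => hx (hzx ▸ hz)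

theorem isPrefix_of_ordConnected {ι : Type*} [LinearOrder ι] {a : ι} {v w : List ι}
    (hw : (a :: w).Pairwise (· < ·)) (hv : v.Sublist w)
    (h : ((a :: v).toFinset : Set ι).OrdConnected) : v <+: w := by
  rw [List.pairwise_cons] at hw
  refine isPrefix_of_sublist_of_forall_le hw.2 hv fun z hz y hy hzy => ?_
  have hmem := h.out (by simp) (by simp [hy]) ⟨(hw.1 z hz).le, hzy⟩
  rw [Finset.mem_coe, List.mem_toFinset, List.mem_cons] at hmem
  exact hmem.resolve_left (hw.1 z hz).ne'

theorem ordConnected_toFinset_cons_take {ι : Type*} [LinearOrder ι] {u w : List ι} {a : ι}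
    (hw : (u ++ a :: w).Pairwise (· < ·)) (hmem : ∀ x, x ∈ u ++ a :: w) (k : ℕ) :
    ((a :: w.take k).toFinset : Set ι).OrdConnected := by
  refine Set.ordConnected_def.2 fun x hx y hy z ⟨hxz, hzy⟩ => ?_
  rw [Finset.mem_coe, List.mem_toFinset] at *
  rw [List.pairwise_append, List.pairwise_cons] at hw
  obtain ⟨-, ⟨ha_lt, hsorted⟩, hu_lt⟩ := hw
  have hax : a ≤ x := by
    rcases List.mem_cons.1 hx with rfl | hx
    · exact le_rfl
    · exact (ha_lt x (List.mem_of_mem_take hx)).le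
  rcases List.mem_append.1 (hmem z) with hz | hz
  · exact absurd (hu_lt z hz a List.mem_cons_self) (hax.trans hxz).not_gt
  rcases List.mem_cons.1 hz with rfl | hz
  · exact List.mem_cons_self
  rw [← List.take_append_drop k w, List.mem_append] at hz
  refine List.mem_cons_of_mem a (hz.resolve_right fun hz_drop => ?_)
  rw [← List.take_append_drop k w, List.pairwise_append] at hsorted
  rcases List.mem_cons.1 hy with rfl | hy
  · exact absurd (ha_lt z (List.mem_of_mem_drop hz_drop)) hzy.not_gt
  · exact absurd (hsorted.2.2 y hy z hz_drop) hzy.not_gt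

/-- The sum over the decompositions of a word into nonempty factors of the product of the weights
`b` of the factors. -/
def factorSum {A R : Type*} [Semiring R] (b : List A → R) : List A → R
  | [] => 1
  | a :: w => ∑ k ∈ Finset.range (w.length + 1), factorSum b (w.drop k) * b (a :: w.take k)
termination_by l => l.length
decreasing_by simp

open Classical in
theorem ncSum_ordConnected {A ι R : Type*} [LinearOrder ι] [CommRing R] (b : List A → R)
    (f : ι → A) {u w : List ι} (hw : (u ++ w).Pairwise (· < ·)) (hmem : ∀ x, x ∈ u ++ w) :
    ncSum (fun V _ => if (V : Set ι).OrdConnected then b ((V.sort (· ≤ ·)).map f) else 0) ∅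
      w.toFinset = factorSum b (w.map f) := by
  induction hn : w.length using Nat.strong_induction_on generalizing u w with
  | _ n ih =>
    subst hn
    cases w with
    | nil => rw [List.toFinset_nil, ncSum_empty, List.map_nil, factorSum]
    | cons a w =>
      have hsorted := (List.pairwise_append.1 hw).2.1
      rw [ncSum_cons (fun V => if (V : Set ι).OrdConnected then b ((V.sort (· ≤ ·)).map f) else 0)
        hsorted, wordConv_eq_sum_take (by rw [List.toFinset_nil, ncSum_empty])
          ((List.pairwise_cons.1 hsorted).2.imp fun h => h.ne), List.map_cons, factorSum,
        List.length_map]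
      · refine Finset.sum_congr rfl fun k _ => ?_
        have hsplit : u ++ a :: w = (u ++ a :: w.take k) ++ w.drop k := by simp
        rw [if_pos (ordConnected_toFinset_cons_take hw hmem k), sort_toFinset (hsorted.sublist
          ((List.take_sublist k w).cons_cons a)), List.map_cons, List.map_take, smul_eq_mul,
          ← List.map_drop, ih (w.drop k).length (by simp) (u := u ++ a :: w.take k) (hsplit ▸ hw)
          (fun x => hsplit ▸ hmem x) rfl]
      · exact fun v hv hprefix => if_neg fun h => hprefix (isPrefix_of_ordConnected hsorted hv h)

theorem isNoncrossing_of_isIntervalPart {n : ℕ} {π : NPart n} (hπ : IsIntervalPart π) :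
    IsNoncrossing π := fun x y z _ hxy hyz _ V hV _ hW hx hz hy _ =>
  π.eq_of_mem_parts hV hW (hπ V hV x hx z hz y hxy.le hyz.le) hy

theorem isIntervalPart_iff_ordConnected {n : ℕ} {π : NPart n} :
    IsIntervalPart π ↔ ∀ V ∈ π.parts, (V : Set (Fin n)).OrdConnected := by
  simp only [IsIntervalPart, Set.ordConnected_def, Set.subset_def, Set.mem_Icc, Finset.mem_coe,
    and_imp]

open Classical in
theorem finsum_isIntervalPart_prod {R : Type*} [CommRing R] {n : ℕ}
    (g : Finset (Fin n) → R) :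
    ∑ᶠ π ∈ {π : NPart n | IsIntervalPart π}, ∏ V ∈ π.parts, g V =
      ncSum (fun V _ => if (V : Set (Fin n)).OrdConnected then g V else 0) ∅ Finset.univ := by
  rw [ncSum, ← finsum_isNoncrossing fun P =>
    ∏ V ∈ P, if (V : Set (Fin n)).OrdConnected then g V else 0, finsum_mem_def, finsum_mem_def]
  refine finsum_congr fun π => ?_
  simp only [Set.indicator_apply, Set.mem_ofPred_eq]
  by_cases hπ : IsIntervalPart π
  · rw [if_pos hπ, if_pos (isNoncrossing_of_isIntervalPart hπ)]
    exact Finset.prod_congr rfl fun V hV =>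
      (if_pos (isIntervalPart_iff_ordConnected.1 hπ V hV)).symm
  · obtain ⟨V, hV, hconn⟩ : ∃ V ∈ π.parts, ¬ (V : Set (Fin n)).OrdConnected := by
      simpa [isIntervalPart_iff_ordConnected] using hπ
    rw [if_neg hπ, Finset.prod_eq_zero hV (if_neg hconn), ite_self]

variable {A : Type*} [Ring A] {φ : A → ℂ} {b : List A → ℂ}

theorem booleanMC_eq_factorSum (hb : BooleanMC φ b) (hφ : φ 1 = 1) (w : List A) :
    φ w.prod = factorSum b w := by
  rcases eq_or_ne w [] with rfl | hw
  · rw [List.prod_nil, hφ, factorSum]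
  have hmoment := hb w.length (List.length_pos_of_ne_nil hw) w.get
  have hfactor := ncSum_ordConnected b w.get (u := []) (w := List.finRange w.length)
    (List.pairwise_lt_finRange _) List.mem_finRange
  rw [List.ofFn_get] at hmoment
  rw [← List.ofFn_eq_map, List.ofFn_get, List.toFinset_finRange] at hfactor
  exact (hmoment.trans (finsum_isIntervalPart_prod _)).trans hfactor

theorem booleanMC_eq_treeSum (hb : BooleanMC φ b) (hφ : φ 1 = 1) {w : List A} (hw : w ≠ []) :
    b w = treeSum (boolWeight φ) w := by
  induction hn : w.length using Nat.strong_induction_on generalizing w with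
  | _ n ih =>
    subst hn
    cases w with
    | nil => exact absurd rfl hw
    | cons a w =>
      have hfactor := booleanMC_eq_factorSum hb hφ (a :: w)
      rw [factorSum, Finset.sum_range_succ, List.drop_length, List.take_length, factorSum, one_mul,
        Finset.sum_range] at hfactor
      rw [treeSum_boolWeight φ hw]
      simp only [List.length_cons, Fin.sum_univ_succ, Fin.val_zero, Fin.val_succ, List.take_zero,
        List.drop_zero, List.take_succ_cons, List.drop_succ_cons, treeSum_boolWeight_nil]
      rw [hfactor, Finset.sum_congr rfl fun (i : Fin w.length) _ => by
        rw [ih (a :: w.take i).length (by simp) (by simp) rfl, ← booleanMC_eq_factorSum hb hφ,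
          mul_comm]]
      ring

end Interval

section Words

variable {A : Type*} {n : ℕ} {w : List A}

theorem goodTree_of_mem_ST (hn : 1 ≤ n) {t : PTree} (ht : t ∈ ST n) (hw : w.length = n) :
    GoodTree (t, w) := by
  obtain ⟨hschroder, hleaves⟩ := mem_ST.1 ht
  refine ⟨hschroder, ?_, by rw [numSectors, hleaves, hw, Nat.add_sub_cancel]⟩
  rintro rfl
  rw [numLeaves_leaf] at hleaves
  omega

variable [Ring A] {φ : A → ℂ}

theorem finsum_ST_eq_free {r : List A → ℂ} (hr : FreeMC φ r) (hφ : φ 1 = 1)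
    {κ : DForest A → ℂ} (hκ : IsInfCharD κ) (h : ∀ F, GoodForest F → charD φ F = ePrecD κ F)
    (hn : 1 ≤ n) (hw : w.length = n) : ∑ᶠ t ∈ ST n, κ [(t, w)] = r w := by
  classical
  subst hw
  have hκ_eq : ∀ t ∈ stFinset w.length,
      κ [(t, w)] = if IsPST t then -(treePoly φ (t, w)).eval (-1) else 0 := fun t ht => by
    have hd := goodTree_of_mem_ST hn (mem_stFinset.1 ht) rfl
    rw [eq_of_charD_eq_ePrecD φ hκ h hd, neg_eval_neg_one_treePoly φ hd]
  rw [finsum_ST, Finset.sum_congr rfl hκ_eq]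
  cases w with
  | nil => simp at hn
  | cons a v => rw [sum_isPST, freeMC_eq_wordConv hr hφ]

theorem finsum_ST_eq_boolean {b : List A → ℂ} (hb : BooleanMC φ b) (hφ : φ 1 = 1)
    {β : DForest A → ℂ} (hβ : IsInfCharD β) (h : ∀ F, GoodForest F → charD φ F = eSuccD β F)
    (hn : 1 ≤ n) (hw : w.length = n) : ∑ᶠ t ∈ ST n, β [(t, w)] = b w := by
  subst hw
  rw [finsum_ST, booleanMC_eq_treeSum hb hφ (List.ne_nil_of_length_pos hn), treeSum]
  refine Finset.sum_congr rfl fun t ht => ?_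
  have hd := goodTree_of_mem_ST hn (mem_stFinset.1 ht) rfl
  rw [eq_of_charD_eq_eSuccD φ hβ h hd]
  split_ifs with ht_bst
  · rw [boolWeight_of_isBST φ ht_bst hd.numInternal_pos]
  · rw [boolWeight_of_not_isBST φ ht_bst]

theorem finsum_ST_eq_monotone {m : List A → ℂ} (hm : MonotoneMC φ m) (hφ : φ 1 = 1)
    {ρ : DForest A → ℂ} (hρ : IsInfCharD ρ) (h : ∀ F, GoodForest F → charD φ F = expStarD ρ F)
    (hn : 1 ≤ n) (hw : w.length = n) : ∑ᶠ t ∈ ST n, ρ [(t, w)] = m w := by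
  subst hw
  rw [finsum_ST, monotoneMC_eq_momentGenerator hm hφ (List.ne_nil_of_length_pos hn),
    ← sum_generator]
  exact Finset.sum_congr rfl fun t ht => eq_generator_of_charD_eq_expStarD φ hρ h
    (goodForest_singleton (goodTree_of_mem_ST hn (mem_stFinset.1 ht) rfl))

end Words

end PTree

open PTree in
theorem cumulant_triple_on_schroder_hopf_algebra_general
    {A : Type*} [Ring A] {φ : A → ℂ} (hφ : φ 1 = 1)
    {r b h : List A → ℂ}
    (hr : FreeMC φ r) (hb : BooleanMC φ b) (hh : MonotoneMC φ h)
    {κ β ρ : DForest A → ℂ}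
    (hκ : IsInfCharD κ) (hβ : IsInfCharD β) (hρ : IsInfCharD ρ)
    (heκ : ∀ F : DForest A, GoodForest F → charD φ F = ePrecD κ F)
    (heβ : ∀ F : DForest A, GoodForest F → charD φ F = eSuccD β F)
    (heρ : ∀ F : DForest A, GoodForest F → charD φ F = expStarD ρ F) :
    (∀ n : ℕ, 1 ≤ n → ∀ t ∈ ST n, ∀ w : List A, w.length = n →
      ((IsPST t →
          κ [(t, w)] = (-1 : ℂ) ^ (numInternal t - 1) * phiPi φ t w) ∧
       (¬ IsPST t → κ [(t, w)] = 0) ∧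
       (IsBST t →
          β [(t, w)] = (-1 : ℂ) ^ (numInternal t - 1) * phiPi φ t w) ∧
       (¬ IsBST t → β [(t, w)] = 0) ∧
       ρ [(t, w)] = omegaSk t * phiPi φ t w)) ∧
    (∀ n : ℕ, 1 ≤ n → ∀ a : Fin n → A,
      (∑ᶠ t ∈ ST n, κ [(t, List.ofFn a)]) = r (List.ofFn a) ∧
      (∑ᶠ t ∈ ST n, β [(t, List.ofFn a)]) = b (List.ofFn a) ∧
      (∑ᶠ t ∈ ST n, ρ [(t, List.ofFn a)]) = h (List.ofFn a)) := by
  refine ⟨fun n hn t ht w hw => ?_, fun n hn a => ?_⟩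
  · have hd := goodTree_of_mem_ST hn ht hw
    rw [eq_of_charD_eq_ePrecD φ hκ heκ hd, eq_of_charD_eq_eSuccD φ hβ heβ hd,
      eq_generator_of_charD_eq_expStarD φ hρ heρ (goodForest_singleton hd), generator_singleton]
    exact ⟨fun h => if_pos h, fun h => if_neg h, fun h => if_pos h, fun h => if_neg h, rfl⟩
  · have hlen : (List.ofFn a).length = n := List.length_ofFn
    exact ⟨finsum_ST_eq_free hr hφ hκ heκ hn hlen, finsum_ST_eq_boolean hb hφ hβ heβ hn hlen,
      finsum_ST_eq_monotone hh hφ hρ heρ hn hlen⟩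

/-- Let `(A, φ)` be a noncommutative probability space and
`Φ̃ : H_S(A) → ℂ` the character extending `φ`. Let `(κ̃, β̃, ρ̃)` be the triple of
infinitesimal characters with `Φ̃ = E_≺̃(κ̃) = E_≻̃(β̃) = exp^*(ρ̃)`. Then for every
`t ∈ ST(n)` and `a_1,…,a_n ∈ A`,
`κ̃(t⊗w) = (−1)^{i(t)−1} φ_{π(t)}(a)` if `t ∈ PST(n)` and `0` otherwise;
`β̃(t⊗w) = (−1)^{i(t)−1} φ_{π(t)}(a)` if `t ∈ BST(n)` and `0` otherwise; and
`ρ̃(t⊗w) = ω(sk(t)) φ_{π(t)}(a)`. Moreover, with `ι(a_1⋯a_n) = Σ_{t∈ST(n)} t⊗a_1⋯a_n`,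
the pullbacks `κ̃∘ι`, `β̃∘ι`, `ρ̃∘ι` evaluated on a word give the free, Boolean and
monotone cumulants, respectively. -/
theorem cumulant_triple_on_schroder_hopf_algebra
    (A : Type*) [Ring A] [Algebra ℂ A] (φ : A →ₗ[ℂ] ℂ) (hφ : φ 1 = 1)
    (r b h : List A → ℂ)
    (hr : FreeMC (fun x => φ x) r) (hb : BooleanMC (fun x => φ x) b)
    (hh : MonotoneMC (fun x => φ x) h)
    (κ β ρ : PTree.DForest A → ℂ)
    (hκ : PTree.IsInfCharD κ) (hβ : PTree.IsInfCharD β) (hρ : PTree.IsInfCharD ρ)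
    (heκ : ∀ F : PTree.DForest A, PTree.GoodForest F →
      PTree.charD (fun x => φ x) F = PTree.ePrecD κ F)
    (heβ : ∀ F : PTree.DForest A, PTree.GoodForest F →
      PTree.charD (fun x => φ x) F = PTree.eSuccD β F)
    (heρ : ∀ F : PTree.DForest A, PTree.GoodForest F →
      PTree.charD (fun x => φ x) F = PTree.expStarD ρ F) :
    (∀ n : ℕ, 1 ≤ n → ∀ t ∈ PTree.ST n, ∀ w : List A, w.length = n →
      ((PTree.IsPST t →
          κ [(t, w)] =
            (-1 : ℂ) ^ (PTree.numInternal t - 1) * PTree.phiPi (fun x => φ x) t w) ∧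
       (¬ PTree.IsPST t → κ [(t, w)] = 0) ∧
       (PTree.IsBST t →
          β [(t, w)] =
            (-1 : ℂ) ^ (PTree.numInternal t - 1) * PTree.phiPi (fun x => φ x) t w) ∧
       (¬ PTree.IsBST t → β [(t, w)] = 0) ∧
       ρ [(t, w)] = PTree.omegaSk t * PTree.phiPi (fun x => φ x) t w)) ∧
    (∀ n : ℕ, 1 ≤ n → ∀ a : Fin n → A,
      (∑ᶠ t ∈ PTree.ST n, κ [(t, List.ofFn a)]) = r (List.ofFn a) ∧
      (∑ᶠ t ∈ PTree.ST n, β [(t, List.ofFn a)]) = b (List.ofFn a) ∧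
      (∑ᶠ t ∈ PTree.ST n, ρ [(t, List.ofFn a)]) = h (List.ofFn a)) :=
  cumulant_triple_on_schroder_hopf_algebra_general hφ hr hb hh hκ hβ hρ heκ heβ heρ
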